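/- Theorem 1 (fractional incomplete lumped formulation, linear case). Let a, λ, α, γ, A > 0, 0 < β < 1/2, and let h : [0,∞) → ℝ be continuous and bounded with h(0) = 0. Define f₁(τ,s) = (2βτ/s^{2β+1})·M(τ/s^{2β}; 2β) and f₂(τ,z,s) = (β(z+ατ)/(a√π s^{2β+1}))·∫_0^∞ u^{-1/2} exp(−(z+ατ)²/(4a²u) − λ²u/(4a²))·M(u/s^{2β}; 2β) du for s > 0, let g₁(t,τ,z) = (f₁(τ,·) ⋆ h ⋆ f₂(τ,z,·))(t) be the double Laplace convolution, and set u(x,z,t) = (A e^{γx}/(2√π)) ∫_0^∞ x τ^{−3/2} exp(−x²/(4τ) − γ²τ)·exp(λ(z+ατ)/(2a²))·g₁(t,τ,z) dτ. Then u solves the fractional boundary value problem: (i) D_*^{2β}u(x,z,·)(t) = a² ∂²u/∂z²(x,z,t) − λ ∂u/∂z(x,z,t) for all x, z, t > 0; (ii) D_*^{2β}u(x,0,·)(t) = ∂²u/∂x²(x,0,t) − 2γ ∂u/∂x(x,0,t) + α ∂u/∂z(x,0,t) for all x, t > 0; (iii) u(x,z,t) → A·h(t) as (x,z) → (0,0)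 for each t > 0; (iv) u(x,z,t) → 0 as x² + z² → ∞ for each t > 0; (v) u(x,z,t) → 0 as t → 0⁺ for all x, z > 0. -/

import Mathlib

open MeasureTheory Real Filter Set

/-- The Wright-type auxiliary function `M(y; δ)`. -/
noncomputable def Mwr (y δ : ℝ) : ℝ :=
  ∑' n : ℕ, (-y) ^ n / ((n.factorial : ℝ) * Real.Gamma (-δ * (n : ℝ) + 1 - δ))

/-- The Caputo fractional derivative of order `0 < δ < 1`. -/
noncomputable def caputo (δ : ℝ) (v : ℝ → ℝ) (t : ℝ) : ℝ :=
  (1 / Real.Gamma (1 - δ)) * ∫ s in (0 : ℝ)..t, deriv v s * (t - s) ^ (-δ)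

/-- The Laplace convolution `(f ⋆ g)(t) = ∫_0^t f(t−s) g(s) ds`. -/
noncomputable def lconv (f g : ℝ → ℝ) (t : ℝ) : ℝ :=
  ∫ s in (0 : ℝ)..t, f (t - s) * g s

/-- The density at `s` of the one-sided `δ`-stable law with Laplace transform `p ↦ exp (-τ p ^ δ)`,
written through the function `Mwr`. -/
noncomputable def stableDensity (δ τ s : ℝ) : ℝ :=
  δ * τ / s ^ (δ + 1) * Mwr (τ / s ^ δ) δ

theorem mul_rpow_le_half_mul_add {δ s C : ℝ} (hδ₀ : 0 < δ) (hδ₁ : δ < 1) (hs : 0 < s)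
    (hC : 0 ≤ C) : ∃ D : ℝ, ∀ r : ℝ, 0 < r → C * r ^ δ ≤ s / 2 * r + D := by
  rcases hC.eq_or_lt with rfl | hC
  · exact ⟨0, fun r hr => by simp; positivity⟩
  set R : ℝ := (2 * C / s) ^ (1 / (1 - δ)) with hR
  have hRpos : 0 < R := by positivity
  have hRpow : R ^ (δ - 1) = s / (2 * C) := by
    rw [hR, ← rpow_mul (by positivity),
      show 1 / (1 - δ) * (δ - 1) = -1 by field_simp [show (1 - δ) ≠ 0 by linarith]; ring,
      rpow_neg_one, inv_div]
  refine ⟨C * R ^ δ, fun r hr => ?_⟩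
  rcases le_total r R with h | h
  · have : r ^ δ ≤ R ^ δ := rpow_le_rpow hr.le h hδ₀.le
    have : 0 ≤ s / 2 * r := by positivity
    nlinarith
  · have h1 : r ^ (δ - 1) ≤ R ^ (δ - 1) := rpow_le_rpow_of_nonpos hRpos h (by linarith)
    have h2 : r ^ δ = r * r ^ (δ - 1) := by
      rw [rpow_sub_one hr.ne']; field_simp
    have h3 : 0 ≤ C * R ^ δ := by positivity
    calc C * r ^ δ = C * r * r ^ (δ - 1) := by rw [h2]; ring
      _ ≤ C * r * (s / (2 * C)) := by rw [← hRpow]; gcongr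
      _ = s / 2 * r := by field_simp
      _ ≤ _ := by linarith

theorem integrableOn_one_add_mul_exp_neg_mul_rpow {κ c : ℝ} (hκ : 0 < κ) (hc : 0 < c) :
    IntegrableOn (fun r : ℝ => (1 + r) * exp (-c * r ^ κ)) (Ioi 0) := by
  have h0 := integrableOn_rpow_mul_exp_neg_mul_rpow (s := 0) (by norm_num) hκ hc
  have h1 := integrableOn_rpow_mul_exp_neg_mul_rpow (s := 1) (by norm_num) hκ hc
  refine (h0.add h1).congr_fun (fun r _ => ?_) measurableSet_Ioi
  simp only [Pi.add_apply, rpow_zero, rpow_one]; ring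

theorem integrableOn_one_add_mul_exp_rpow_sub {δ s C : ℝ} (hδ₀ : 0 < δ) (hδ₁ : δ < 1)
    (hs : 0 < s) (hC : 0 ≤ C) :
    IntegrableOn (fun r : ℝ => (1 + r) * exp (C * r ^ δ - s * r)) (Ioi 0) := by
  obtain ⟨D, hD⟩ := mul_rpow_le_half_mul_add hδ₀ hδ₁ hs hC
  have h := (integrableOn_one_add_mul_exp_neg_mul_rpow (κ := 1) one_pos (half_pos hs)).const_mul
    (exp D)
  refine h.mono' (by fun_prop) ?_
  filter_upwards [ae_restrict_mem measurableSet_Ioi] with r hr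
  have hr' : 0 < r := hr
  rw [Real.norm_of_nonneg (by positivity), rpow_one, mul_left_comm, ← exp_add]
  gcongr
  linarith [hD r hr]

theorem one_div_Gamma_one_sub {x : ℝ} (hx : 0 < x) :
    1 / Gamma (1 - x) = Gamma x * sin (π * x) / π := by
  have h := Real.Gamma_mul_Gamma_one_sub x
  have hG := Gamma_pos_of_pos hx
  by_cases hsin : sin (π * x) = 0
  · rw [hsin, div_zero] at h
    simp [(mul_eq_zero.1 h).resolve_left hG.ne', hsin]
  · have h1 : Gamma (1 - x) ≠ 0 := by
      intro h1
      rw [h1, mul_zero] at h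
      exact (div_ne_zero pi_ne_zero hsin) h.symm
    rw [eq_div_iff hsin] at h
    rw [div_eq_div_iff h1 pi_ne_zero]
    linarith

theorem stableDensity_eq_im_integral {δ τ s : ℝ} (hδ₀ : 0 < δ) (hδ₁ : δ < 1) (hτ : 0 < τ)
    (hs : 0 < s) :
    stableDensity δ τ s = -(1 / π) * (∫ r in Ioi (0 : ℝ),
      Complex.exp (-(s * r : ℝ) - (τ * r ^ δ : ℝ) * Complex.exp ((π * δ : ℝ) * Complex.I))).im := by
  set c : ℂ := Complex.exp ((π * δ : ℝ) * Complex.I) with hc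
  have hcn : ‖c‖ = 1 := Complex.norm_exp_ofReal_mul_I _
  have hnorm : ∀ (n : ℕ) (r : ℝ), 0 < r →
      ‖((-(τ * r ^ δ : ℝ) * c) ^ n / (n.factorial : ℂ)) * (exp (-(s * r)) : ℝ)‖
        = (τ * r ^ δ) ^ n / n.factorial * exp (-(s * r)) := by
    intro n r hr
    rw [norm_mul, norm_div, norm_pow, norm_mul, hcn, norm_neg, Complex.norm_real,
      Complex.norm_real, Complex.norm_natCast, Real.norm_of_nonneg (exp_pos _).le,
      Real.norm_of_nonneg (by positivity), mul_one]
  have hsum : HasSum (fun n : ℕ => ∫ r in Ioi (0 : ℝ),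
      ((-(τ * r ^ δ : ℝ) * c) ^ n / (n.factorial : ℂ)) * (exp (-(s * r)) : ℝ))
      (∫ r in Ioi (0 : ℝ), Complex.exp (-(s * r : ℝ) - (τ * r ^ δ : ℝ) * c)) := by
    refine hasSum_integral_of_dominated_convergence
      (fun n r => (τ * r ^ δ) ^ n / n.factorial * exp (-(s * r))) (fun n => ?_) (fun n => ?_)
      ?_ ?_ ?_
    · exact (by fun_prop : Measurable _).aestronglyMeasurable
    · filter_upwards [ae_restrict_mem measurableSet_Ioi] with r hr
      exact (hnorm n r hr).le
    · filter_upwards with r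
      exact (Real.summable_pow_div_factorial _).mul_right _
    · refine (integrableOn_one_add_mul_exp_rpow_sub hδ₀ hδ₁ hs hτ.le).mono' ?_ ?_
      · have : (fun r : ℝ => ∑' n : ℕ, (τ * r ^ δ) ^ n / n.factorial * exp (-(s * r)))
            = fun r => exp (τ * r ^ δ) * exp (-(s * r)) := by
          funext r
          rw [tsum_mul_right, Real.exp_eq_exp_ℝ, NormedSpace.exp_eq_tsum_div]
        rw [this]
        exact (by fun_prop : Measurable _).aestronglyMeasurable
      · filter_upwards [ae_restrict_mem measurableSet_Ioi] with r hr
        have hr' : 0 < r := hr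
        have h1 : ∑' n : ℕ, (τ * r ^ δ) ^ n / n.factorial * exp (-(s * r))
            = exp (τ * r ^ δ - s * r) := by
          rw [tsum_mul_right, sub_eq_add_neg, exp_add]
          congr 1
          rw [Real.exp_eq_exp_ℝ, NormedSpace.exp_eq_tsum_div]
        rw [h1, Real.norm_of_nonneg (exp_pos _).le]
        have := exp_pos (τ * r ^ δ - s * r)
        nlinarith
    · filter_upwards with r
      have h1 : Complex.exp (-(s * r : ℝ) - (τ * r ^ δ : ℝ) * c)
          = Complex.exp (-(τ * r ^ δ : ℝ) * c) * (exp (-(s * r)) : ℝ) := by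
        rw [Complex.ofReal_exp, ← Complex.exp_add]; congr 1; push_cast; ring
      rw [h1]
      refine HasSum.mul_right _ ?_
      rw [Complex.exp_eq_exp_ℂ]
      exact NormedSpace.expSeries_div_hasSum_exp _
  have hterm : ∀ n : ℕ, (∫ r in Ioi (0 : ℝ),
      ((-(τ * r ^ δ : ℝ) * c) ^ n / (n.factorial : ℂ)) * (exp (-(s * r)) : ℝ)).im
      = (-τ) ^ n / n.factorial * sin (π * (δ * n)) * ((1 / s) ^ (δ * n + 1) * Gamma (δ * n + 1)) := by
    intro n
    have h1 : ∫ r in Ioi (0 : ℝ),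
        ((-(τ * r ^ δ : ℝ) * c) ^ n / (n.factorial : ℂ)) * (exp (-(s * r)) : ℝ)
        = ((-τ) ^ n / n.factorial : ℝ) * c ^ n *
          (∫ r in Ioi (0 : ℝ), r ^ (δ * n + 1 - 1) * exp (-(s * r)) : ℝ) := by
      rw [← integral_complex_ofReal, ← integral_const_mul]
      refine setIntegral_congr_fun measurableSet_Ioi fun r hr => ?_
      have hr' : 0 < r := hr
      simp only [add_sub_cancel_right]
      rw [rpow_mul hr'.le, rpow_natCast]
      push_cast
      rw [mul_pow, neg_pow, neg_pow (τ : ℂ), mul_pow]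
      ring
    rw [h1, Real.integral_rpow_mul_exp_neg_mul_Ioi (by positivity) hs, Complex.im_mul_ofReal,
      Complex.im_ofReal_mul]
    have h2 : (c ^ n).im = sin (π * (δ * n)) := by
      rw [hc, ← Complex.exp_nat_mul, show (n : ℂ) * ((π * δ : ℝ) * Complex.I)
        = (π * (δ * n) : ℝ) * Complex.I by push_cast; ring, Complex.exp_ofReal_mul_I_im]
    rw [h2]
  have hsum' := Complex.hasSum_im hsum
  simp only [hterm] at hsum'
  rw [← hasSum_nat_add_iff' 1] at hsum'
  simp only [Finset.range_one, Finset.sum_singleton, Nat.cast_zero, mul_zero, sin_zero, zero_mul,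
    sub_zero] at hsum'
  rw [stableDensity, Mwr, ← tsum_mul_left, ← (hsum'.mul_left (-(1 / π))).tsum_eq]
  refine tsum_congr fun n => ?_
  have hx : 0 < δ * (n + 1 : ℕ) := by positivity
  have hG := one_div_Gamma_one_sub hx
  have e1 : -δ * (n : ℝ) + 1 - δ = 1 - δ * (n + 1 : ℕ) := by push_cast; ring
  rw [e1, ← div_div, div_eq_mul_one_div _ (Gamma _), hG, Gamma_add_one hx.ne', Nat.factorial_succ]
  have e2 : (1 / s) ^ (δ * (n + 1 : ℕ) + 1) = 1 / (s ^ (δ + 1) * (s ^ δ) ^ n) := by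
    rw [one_div, inv_rpow hs.le, ← rpow_natCast, ← rpow_mul hs.le, ← rpow_add hs, one_div]
    congr 2; push_cast; ring
  rw [e2, neg_pow, neg_pow τ, div_pow, pow_succ, pow_succ]
  push_cast
  field_simp

/-- The integrand of the Bromwich integral of `exp (-τ p ^ δ)` on the ray `arg p = θ`,
including the direction `exp (i θ)` of the ray. -/
noncomputable def rayIntegrand (δ τ s θ r : ℝ) : ℂ :=
  Complex.exp (θ * Complex.I + (s * r : ℝ) * Complex.exp (θ * Complex.I)
    - (τ * r ^ δ : ℝ) * Complex.exp ((δ * θ : ℝ) * Complex.I))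

theorem norm_rayIntegrand (δ τ s θ r : ℝ) :
    ‖rayIntegrand δ τ s θ r‖ = exp (s * r * cos θ - τ * r ^ δ * cos (δ * θ)) := by
  rw [rayIntegrand, Complex.norm_exp]
  congr 1
  rw [Complex.sub_re, Complex.add_re, Complex.re_ofReal_mul, Complex.re_ofReal_mul,
    Complex.re_ofReal_mul,
    Complex.exp_ofReal_mul_I_re, Complex.exp_ofReal_mul_I_re]
  simp

/-- The logarithmic derivative of `r * rayIntegrand δ τ s θ r` in `log r`. -/
noncomputable def rayFactor (δ τ s θ r : ℝ) : ℂ :=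
  1 + (s * r : ℝ) * Complex.exp (θ * Complex.I)
    - (δ * (τ * r ^ δ) : ℝ) * Complex.exp ((δ * θ : ℝ) * Complex.I)

theorem hasDerivAt_rayIntegrand_angle (δ τ s θ r : ℝ) :
    HasDerivAt (fun θ => rayIntegrand δ τ s θ r)
      (Complex.I * (rayFactor δ τ s θ r * rayIntegrand δ τ s θ r)) θ := by
  have h0 : HasDerivAt (fun θ : ℝ => (θ : ℂ) * Complex.I) Complex.I θ := by
    simpa using (Complex.ofRealCLM.hasDerivAt (x := θ)).mul_const Complex.I
  have h1 : HasDerivAt (fun θ : ℝ => ((δ * θ : ℝ) : ℂ) * Complex.I) (δ * Complex.I) θ := by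
    have := h0.const_mul (δ : ℂ)
    refine this.congr_of_eventuallyEq (Eventually.of_forall fun θ => ?_)
    push_cast; ring
  have h2 := ((h0.add (h0.cexp.const_mul ((s * r : ℝ) : ℂ))).sub
    (h1.cexp.const_mul ((τ * r ^ δ : ℝ) : ℂ))).cexp
  refine h2.congr_deriv ?_
  simp only [rayFactor, rayIntegrand, Pi.add_apply, Pi.sub_apply]
  push_cast
  ring

theorem hasDerivAt_mul_rayIntegrand (δ τ s θ : ℝ) {r : ℝ} (hr : 0 < r) :
    HasDerivAt (fun r : ℝ => (r : ℂ) * rayIntegrand δ τ s θ r)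
      (rayFactor δ τ s θ r * rayIntegrand δ τ s θ r) r := by
  have h0 : HasDerivAt (fun r : ℝ => (r : ℂ)) 1 r := Complex.ofRealCLM.hasDerivAt
  have h1 : HasDerivAt (fun r : ℝ => ((s * r : ℝ) : ℂ)) s r := by
    simpa using ((hasDerivAt_id r).const_mul s).ofReal_comp
  have h2 : HasDerivAt (fun r : ℝ => ((τ * r ^ δ : ℝ) : ℂ)) ((τ * (δ * r ^ (δ - 1)) : ℝ) : ℂ) r :=
    ((Real.hasDerivAt_rpow_const (Or.inl hr.ne')).const_mul τ).ofReal_comp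
  have h3 := h0.mul (((h1.mul_const (Complex.exp (θ * Complex.I))).const_add
    (θ * Complex.I)).sub (h2.mul_const (Complex.exp ((δ * θ : ℝ) * Complex.I)))).cexp
  refine h3.congr_deriv ?_
  have h4 : (r : ℂ) * ((r ^ (δ - 1) : ℝ) : ℂ) = ((r ^ δ : ℝ) : ℂ) := by
    rw [← Complex.ofReal_mul, rpow_sub_one hr.ne']; congr 1; field_simp
  simp only [rayFactor, rayIntegrand, Pi.sub_apply]
  push_cast
  rw [← h4]
  ring

theorem norm_rayFactor_le {δ τ s θ r : ℝ} (hδ₀ : 0 < δ) (hδ₁ : δ < 1) (hτ : 0 < τ) (hr : 0 < r) :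
    ‖rayFactor δ τ s θ r‖ ≤ (1 + |s| + τ) * (1 + r) := by
  have h1 : r ^ δ ≤ 1 + r := by
    rcases le_total r 1 with h | h
    · exact (rpow_le_one hr.le h hδ₀.le).trans (by linarith)
    · calc r ^ δ ≤ r ^ (1 : ℝ) := rpow_le_rpow_of_exponent_le h hδ₁.le
        _ ≤ 1 + r := by rw [rpow_one]; linarith
  have h0 : 0 ≤ r ^ δ := by positivity
  refine (norm_sub_le _ _).trans ((add_le_add_left (norm_add_le _ _) _).trans ?_)
  rw [norm_mul, norm_mul, Complex.norm_exp_ofReal_mul_I, Complex.norm_exp_ofReal_mul_I,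
    Complex.norm_real, Complex.norm_real, norm_one, mul_one, mul_one, norm_mul,
    Real.norm_of_nonneg (by positivity : 0 ≤ δ * (τ * r ^ δ)), Real.norm_of_nonneg hr.le,
    Real.norm_eq_abs]
  have h2 : δ * (τ * r ^ δ) ≤ 1 * (τ * (1 + r)) := by gcongr
  nlinarith [abs_nonneg s]

theorem integral_rayIntegrand_eq {δ τ s θa θb : ℝ} (hδ₀ : 0 < δ) (hδ₁ : δ < 1) (hτ : 0 < τ)
    (hab : θa ≤ θb) {B : ℝ → ℝ} (hB : IntegrableOn B (Ioi 0))
    (hle : ∀ θ ∈ Icc θa θb, ∀ r : ℝ, 0 < r →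
      (1 + r) * exp (s * r * cos θ - τ * r ^ δ * cos (δ * θ)) ≤ B r) :
    ∫ r in Ioi (0 : ℝ), rayIntegrand δ τ s θa r = ∫ r in Ioi (0 : ℝ), rayIntegrand δ τ s θb r := by
  have hmeas : ∀ θ, Measurable (rayIntegrand δ τ s θ) := fun θ => by
    unfold rayIntegrand; fun_prop
  have hint : ∀ θ ∈ Icc θa θb, IntegrableOn (rayIntegrand δ τ s θ) (Ioi 0) := by
    intro θ hθ
    refine hB.mono' (hmeas θ).aestronglyMeasurable ?_
    filter_upwards [ae_restrict_mem measurableSet_Ioi] with r hr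
    have hr' : 0 < r := hr
    rw [norm_rayIntegrand]
    have := exp_pos (s * r * cos θ - τ * r ^ δ * cos (δ * θ))
    nlinarith [hle θ hθ r hr]
  have hbound : ∀ θ ∈ Icc θa θb, ∀ r : ℝ, 0 < r →
      ‖rayFactor δ τ s θ r * rayIntegrand δ τ s θ r‖ ≤ (1 + |s| + τ) * B r := by
    intro θ hθ r hr
    rw [norm_mul, norm_rayIntegrand]
    calc _ ≤ (1 + |s| + τ) * (1 + r) * exp (s * r * cos θ - τ * r ^ δ * cos (δ * θ)) := by
          gcongr; exact norm_rayFactor_le hδ₀ hδ₁ hτ hr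
      _ ≤ _ := by rw [mul_assoc]; gcongr; exact hle θ hθ r hr
  have hzero : ∀ θ ∈ Icc θa θb,
      ∫ r in Ioi (0 : ℝ), rayFactor δ τ s θ r * rayIntegrand δ τ s θ r = 0 := by
    intro θ hθ
    have hi1 : IntegrableOn (fun r => rayFactor δ τ s θ r * rayIntegrand δ τ s θ r) (Ioi 0) := by
      refine (hB.const_mul (1 + |s| + τ)).mono' ?_ ?_
      · refine Measurable.aestronglyMeasurable (Measurable.mul ?_ (hmeas θ))
        unfold rayFactor; fun_prop
      · filter_upwards [ae_restrict_mem measurableSet_Ioi] with r hr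
        exact hbound θ hθ r hr
    have hi2 : IntegrableOn (fun r : ℝ => (r : ℂ) * rayIntegrand δ τ s θ r) (Ioi 0) := by
      refine hB.mono' ?_ ?_
      · exact (Complex.measurable_ofReal.mul (hmeas θ)).aestronglyMeasurable
      · filter_upwards [ae_restrict_mem measurableSet_Ioi] with r hr
        have hr' : 0 < r := hr
        rw [norm_mul, Complex.norm_real, norm_rayIntegrand, Real.norm_of_nonneg hr'.le]
        have := exp_pos (s * r * cos θ - τ * r ^ δ * cos (δ * θ))
        nlinarith [hle θ hθ r hr]
    have hcont : Continuous (fun r : ℝ => (r : ℂ) * rayIntegrand δ τ s θ r) := by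
      unfold rayIntegrand
      have : Continuous fun r : ℝ => r ^ δ := continuous_id.rpow_const fun _ => Or.inr hδ₀.le
      fun_prop
    have := integral_Ioi_of_hasDerivAt_of_tendsto hcont.continuousWithinAt
      (fun r hr => hasDerivAt_mul_rayIntegrand δ τ s θ hr) hi1
      (tendsto_zero_of_hasDerivAt_of_integrableOn_Ioi
        (fun r hr => hasDerivAt_mul_rayIntegrand δ τ s θ hr) hi1 hi2)
    simpa using this
  have hftc : ∀ r : ℝ, rayIntegrand δ τ s θb r - rayIntegrand δ τ s θa r
      = ∫ θ in Ioc θa θb, Complex.I * (rayFactor δ τ s θ r * rayIntegrand δ τ s θ r) := by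
    intro r
    rw [← intervalIntegral.integral_of_le hab,
      intervalIntegral.integral_eq_sub_of_hasDerivAt
        (fun θ _ => hasDerivAt_rayIntegrand_angle δ τ s θ r)]
    apply Continuous.intervalIntegrable
    unfold rayFactor rayIntegrand
    fun_prop
  rw [eq_comm, ← sub_eq_zero, ← integral_sub (hint θb ⟨hab, le_rfl⟩) (hint θa ⟨le_rfl, hab⟩)]
  simp only [hftc]
  rw [integral_integral_swap]
  · rw [setIntegral_congr_fun (g := fun _ => (0 : ℂ)) measurableSet_Ioc, integral_zero]
    intro θ hθ
    simp only
    rw [integral_const_mul, hzero θ ⟨hθ.1.le, hθ.2⟩, mul_zero]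
  · refine ((hB.const_mul (1 + |s| + τ)).comp_fst (volume.restrict (Ioc θa θb))).mono' ?_ ?_
    · refine Measurable.aestronglyMeasurable ?_
      unfold Function.uncurry rayFactor rayIntegrand
      fun_prop
    · rw [Measure.prod_restrict]
      filter_upwards [ae_restrict_mem (measurableSet_Ioi.prod measurableSet_Ioc)] with z hz
      simp only [Function.uncurry]
      rw [norm_mul, Complex.norm_I, one_mul]
      exact hbound z.2 ⟨hz.2.1.le, hz.2.2⟩ z.1 hz.1

theorem integral_rayIntegrand_pi_div_two_eq_pi {δ τ s : ℝ} (hδ₀ : 0 < δ) (hδ₁ : δ < 1)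
    (hτ : 0 < τ) (hs : 0 < s) :
    ∫ r in Ioi (0 : ℝ), rayIntegrand δ τ s (π / 2) r = ∫ r in Ioi (0 : ℝ), rayIntegrand δ τ s π r := by
  set θ₁ : ℝ := π / (1 + δ) with hθ₁
  have hπ := pi_pos
  have hθ₁l : π / 2 < θ₁ := by rw [hθ₁]; gcongr; linarith
  have hθ₁u : θ₁ < π := by rw [hθ₁, div_lt_iff₀ (by linarith)]; nlinarith
  have hδθ : δ * θ₁ < π / 2 := by
    have : θ₁ * (1 + δ) = π := by rw [hθ₁]; field_simp
    nlinarith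
  have hc' : 0 < cos (δ * θ₁) :=
    cos_pos_of_mem_Ioo ⟨by nlinarith [mul_pos hδ₀ (show 0 < θ₁ by linarith)], hδθ⟩
  have hc : 0 < -cos θ₁ := by
    have := cos_neg_of_pi_div_two_lt_of_lt hθ₁l (by linarith)
    linarith
  refine integral_rayIntegrand_eq hδ₀ hδ₁ hτ (by linarith)
    ((integrableOn_one_add_mul_exp_neg_mul_rpow hδ₀ (mul_pos hτ hc')).add
      (integrableOn_one_add_mul_exp_rpow_sub hδ₀ hδ₁ (mul_pos hs hc) hτ.le)) ?_
  intro θ hθ r hr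
  have hrδ : 0 < r ^ δ := by positivity
  have hp1 := exp_pos (-(τ * cos (δ * θ₁)) * r ^ δ)
  have hp2 := exp_pos (τ * r ^ δ - s * -cos θ₁ * r)
  simp only [Pi.add_apply]
  rcases le_total θ θ₁ with h | h
  · have h1 : cos θ ≤ 0 := cos_nonpos_of_pi_div_two_le_of_le hθ.1 (by linarith [hθ.2])
    have h2 : cos (δ * θ₁) ≤ cos (δ * θ) :=
      cos_le_cos_of_nonneg_of_le_pi (mul_nonneg hδ₀.le (by linarith [hθ.1])) (by linarith)
        (by gcongr)
    have h3 : s * r * cos θ - τ * r ^ δ * cos (δ * θ) ≤ -(τ * cos (δ * θ₁)) * r ^ δ := by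
      have := mul_nonneg (mul_pos hs hr).le (neg_nonneg.2 h1)
      have := mul_le_mul_of_nonneg_left h2 (mul_pos hτ hrδ).le
      linarith
    have h4 := exp_le_exp.2 h3
    nlinarith
  · have h1 : cos θ ≤ cos θ₁ :=
      cos_le_cos_of_nonneg_of_le_pi (by linarith) hθ.2 h
    have h3 : s * r * cos θ - τ * r ^ δ * cos (δ * θ) ≤ τ * r ^ δ - s * -cos θ₁ * r := by
      have := mul_le_mul_of_nonneg_left h1 (mul_pos hs hr).le
      have := mul_le_mul_of_nonneg_left (neg_one_le_cos (δ * θ)) (mul_pos hτ hrδ).le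
      linarith
    have h4 := exp_le_exp.2 h3
    nlinarith

theorem cos_mul_pi_div_two_pos {δ : ℝ} (hδ₀ : 0 < δ) (hδ₁ : δ < 1) : 0 < cos (δ * (π / 2)) :=
  cos_pos_of_mem_Ioo ⟨by nlinarith [pi_pos, mul_pos hδ₀ pi_pos], by nlinarith [pi_pos]⟩

theorem im_integral_rayIntegrand_pi_div_two_eq_zero {δ τ s : ℝ} (hδ₀ : 0 < δ) (hδ₁ : δ < 1)
    (hτ : 0 < τ) (hs : s ≤ 0) : (∫ r in Ioi (0 : ℝ), rayIntegrand δ τ s (π / 2) r).im = 0 := by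
  have hπ := pi_pos
  have h0 : ∫ r in Ioi (0 : ℝ), rayIntegrand δ τ s 0 r
      = ∫ r in Ioi (0 : ℝ), rayIntegrand δ τ s (π / 2) r := by
    refine integral_rayIntegrand_eq hδ₀ hδ₁ hτ (by linarith)
      (integrableOn_one_add_mul_exp_neg_mul_rpow hδ₀
        (mul_pos hτ (cos_mul_pi_div_two_pos hδ₀ hδ₁))) ?_
    intro θ hθ r hr
    have hrδ : 0 < r ^ δ := by positivity
    have h1 : 0 ≤ cos θ := cos_nonneg_of_mem_Icc ⟨by linarith [hθ.1], hθ.2⟩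
    have h2 : cos (δ * (π / 2)) ≤ cos (δ * θ) :=
      cos_le_cos_of_nonneg_of_le_pi (mul_nonneg hδ₀.le hθ.1) (by nlinarith)
        (by gcongr; exact hθ.2)
    gcongr
    have := mul_nonneg (mul_nonneg (neg_nonneg.2 hs) hr.le) h1
    have := mul_le_mul_of_nonneg_left h2 (mul_pos hτ hrδ).le
    linarith
  have h1 : ∀ r : ℝ, rayIntegrand δ τ s 0 r = ((exp (s * r - τ * r ^ δ) : ℝ) : ℂ) := by
    intro r
    simp [rayIntegrand]
  rw [← h0]
  simp only [h1]
  rw [integral_complex_ofReal, Complex.ofReal_im]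

/-- The stable density extended by zero to `v ≤ 0`. -/
noncomputable def stableKernel (δ τ v : ℝ) : ℝ :=
  if 0 < v then stableDensity δ τ v else 0

theorem stableKernel_eq_im_integral {δ τ : ℝ} (hδ₀ : 0 < δ) (hδ₁ : δ < 1) (hτ : 0 < τ) (v : ℝ) :
    stableKernel δ τ v = 1 / π * (∫ r in Ioi (0 : ℝ), rayIntegrand δ τ v (π / 2) r).im := by
  rw [stableKernel]
  split_ifs with hv
  · rw [stableDensity_eq_im_integral hδ₀ hδ₁ hτ hv, integral_rayIntegrand_pi_div_two_eq_pi hδ₀ hδ₁ hτ hv,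
      neg_mul_comm, ← Complex.neg_im]
    congr 2
    refine (integral_neg _).symm.trans (integral_congr_ae (Eventually.of_forall fun r => ?_))
    simp only [rayIntegrand]
    rw [show (π : ℂ) * Complex.I + (v * r : ℝ) * Complex.exp (π * Complex.I)
        - (τ * r ^ δ : ℝ) * Complex.exp ((δ * π : ℝ) * Complex.I)
        = π * Complex.I + (-(v * r : ℝ)
        - (τ * r ^ δ : ℝ) * Complex.exp ((π * δ : ℝ) * Complex.I)) by
      rw [Complex.exp_pi_mul_I, mul_comm δ π]; ring, Complex.exp_add, Complex.exp_pi_mul_I]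
    ring
  · rw [im_integral_rayIntegrand_pi_div_two_eq_zero hδ₀ hδ₁ hτ (not_lt.1 hv), mul_zero]

theorem norm_rpow_mul_cos_le_re_cpow {δ : ℝ} (hδ₀ : 0 < δ) (hδ₁ : δ < 1) {p : ℂ} (hp : 0 ≤ p.re) :
    ‖p‖ ^ δ * cos (δ * (π / 2)) ≤ (p ^ (δ : ℂ)).re := by
  rcases eq_or_ne p 0 with rfl | hp0
  · rw [Complex.zero_cpow (by exact_mod_cast hδ₀.ne'), norm_zero, zero_rpow hδ₀.ne']; simp
  have harg := Complex.abs_arg_le_pi_div_two_iff.2 hp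
  have hn : 0 < ‖p‖ := norm_pos_iff.2 hp0
  rw [Complex.cpow_def_of_ne_zero hp0, Complex.exp_re, Complex.re_mul_ofReal,
    Complex.im_mul_ofReal, Complex.log_re, Complex.log_im, rpow_def_of_pos hn]
  gcongr
  rw [← cos_abs (p.arg * δ), abs_mul, abs_of_pos hδ₀, mul_comm]
  refine cos_le_cos_of_nonneg_of_le_pi (by positivity) (by nlinarith [pi_pos]) ?_
  gcongr

theorem re_cpow_nonneg {δ : ℝ} (hδ₀ : 0 < δ) (hδ₁ : δ < 1) {p : ℂ} (hp : 0 ≤ p.re) :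
    0 ≤ (p ^ (δ : ℂ)).re :=
  (mul_nonneg (by positivity) (cos_mul_pi_div_two_pos hδ₀ hδ₁).le).trans
    (norm_rpow_mul_cos_le_re_cpow hδ₀ hδ₁ hp)

theorem integrable_exp_neg_mul_abs_rpow {κ c : ℝ} (hκ : 0 < κ) (hc : 0 < c) :
    Integrable fun x : ℝ => exp (-c * |x| ^ κ) := by
  refine Integrable.of_integral_ne_zero ?_
  rw [integral_comp_abs (f := fun x => exp (-c * x ^ κ)), integral_exp_neg_mul_rpow hκ hc]
  positivity

/-- The Fourier transform of the stable kernel. -/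
noncomputable def stableChar (δ τ ξ : ℝ) : ℂ :=
  Complex.exp (-τ * ((2 * π * ξ : ℝ) * Complex.I) ^ (δ : ℂ))

theorem continuous_stableChar {δ : ℝ} (hδ₀ : 0 < δ) (τ : ℝ) : Continuous (stableChar δ τ) := by
  have : Continuous fun ξ : ℝ => (((2 * π * ξ : ℝ) : ℂ) * Complex.I) ^ (δ : ℂ) := by
    rw [continuous_iff_continuousAt]
    intro ξ
    exact (Complex.continuousAt_cpow_const_of_re_pos (Or.inl (by simp))
      (by simpa using hδ₀)).comp (f := fun ξ : ℝ => ((2 * π * ξ : ℝ) : ℂ) * Complex.I) (by fun_prop)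
  unfold stableChar
  fun_prop

theorem norm_stableChar_le {δ τ : ℝ} (hδ₀ : 0 < δ) (hδ₁ : δ < 1) (hτ : 0 < τ) (ξ : ℝ) :
    ‖stableChar δ τ ξ‖ ≤ exp (-(τ * cos (δ * (π / 2)) * (2 * π) ^ δ) * |ξ| ^ δ) := by
  rw [stableChar, Complex.norm_exp, ← Complex.ofReal_neg, Complex.re_ofReal_mul]
  have h := norm_rpow_mul_cos_le_re_cpow hδ₀ hδ₁ (p := (2 * π * ξ : ℝ) * Complex.I) (by simp)
  rw [norm_mul, Complex.norm_I, mul_one, Complex.norm_real, norm_mul,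
    Real.norm_of_nonneg (by positivity : 0 ≤ 2 * π), mul_rpow (by positivity) (by positivity),
    Real.norm_eq_abs] at h
  have := mul_le_mul_of_nonneg_left h hτ.le
  exact exp_le_exp.2 (by linarith)

theorem integrable_stableChar {δ τ : ℝ} (hδ₀ : 0 < δ) (hδ₁ : δ < 1) (hτ : 0 < τ) :
    Integrable (stableChar δ τ) := by
  have := cos_mul_pi_div_two_pos hδ₀ hδ₁
  exact (integrable_exp_neg_mul_abs_rpow hδ₀ (by positivity :
    0 < τ * cos (δ * (π / 2)) * (2 * π) ^ δ)).mono'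
    (continuous_stableChar hδ₀ τ).aestronglyMeasurable
    (Eventually.of_forall (norm_stableChar_le hδ₀ hδ₁ hτ))

theorem stableKernel_eq_fourierInv {δ τ : ℝ} (hδ₀ : 0 < δ) (hδ₁ : δ < 1) (hτ : 0 < τ) (v : ℝ) :
    (stableKernel δ τ v : ℂ) = ∫ ξ : ℝ, Complex.exp ((2 * π * (ξ * v) : ℝ) * Complex.I)
      * stableChar δ τ ξ := by
  set g : ℝ → ℂ := fun ξ => Complex.exp ((2 * π * (ξ * v) : ℝ) * Complex.I) * stableChar δ τ ξ
    with hg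
  have hgi : Integrable g := by
    refine (integrable_stableChar hδ₀ hδ₁ hτ).norm.mono' ?_ (Eventually.of_forall fun ξ => ?_)
    · have := continuous_stableChar hδ₀ τ
      exact (by fun_prop : Continuous g).aestronglyMeasurable
    · rw [hg]
      simp only
      rw [norm_mul, Complex.norm_exp_ofReal_mul_I, one_mul]
  have hneg : ∀ ξ : ℝ, ξ ∈ Ioi (0 : ℝ) → g (-ξ) = (starRingEnd ℂ) (g ξ) := by
    intro ξ hξ
    have hξ' : 0 < ξ := hξ
    have h1 : (((2 * π * (-ξ) : ℝ) : ℂ) * Complex.I) ^ (δ : ℂ)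
        = (starRingEnd ℂ) ((((2 * π * ξ : ℝ) : ℂ) * Complex.I) ^ (δ : ℂ)) := by
      have := Complex.conj_cpow (((2 * π * ξ : ℝ) : ℂ) * Complex.I) (δ : ℂ) (by
        rw [Complex.arg_real_mul _ (by positivity), Complex.arg_I]
        linarith [pi_pos])
      rw [Complex.conj_ofReal] at this
      rw [← this]
      congr 1
      rw [map_mul, Complex.conj_ofReal, Complex.conj_I]
      push_cast; ring
    simp only [hg, stableChar, h1, map_mul, ← Complex.exp_conj, Complex.conj_ofReal,
      Complex.conj_I, map_neg]
    congr 2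
    push_cast; ring
  have hray : ∫ ξ in Ioi (0 : ℝ), g ξ
      = (2 * π)⁻¹ • (-Complex.I * ∫ r in Ioi (0 : ℝ), rayIntegrand δ τ v (π / 2) r) := by
    rw [← integral_const_mul]
    have := integral_comp_mul_left_Ioi
      (fun r => -Complex.I * rayIntegrand δ τ v (π / 2) r) 0 (b := 2 * π) (by positivity)
    rw [mul_zero] at this
    rw [← this]
    refine setIntegral_congr_fun measurableSet_Ioi fun ξ hξ => ?_
    have hξ' : 0 < 2 * π * ξ := by have : 0 < ξ := hξ; positivity
    have h1 : (((2 * π * ξ : ℝ) : ℂ) * Complex.I) ^ (δ : ℂ)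
        = ((2 * π * ξ) ^ δ : ℝ) * Complex.exp ((δ * (π / 2) : ℝ) * Complex.I) := by
      rw [Complex.cpow_def_of_ne_zero
        (mul_ne_zero (by exact_mod_cast hξ'.ne') Complex.I_ne_zero),
        Complex.log_ofReal_mul hξ' Complex.I_ne_zero, Complex.log_I, rpow_def_of_pos hξ',
        Complex.ofReal_exp, ← Complex.exp_add]
      congr 1; push_cast; ring
    have h2 : -Complex.I = Complex.exp (-(π / 2 * Complex.I)) := by
      rw [Complex.exp_neg, Complex.exp_pi_div_two_mul_I, Complex.inv_I]
    simp only [hg, stableChar, rayIntegrand]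
    rw [h1, h2, ← Complex.exp_add, ← Complex.exp_add]
    congr 1
    have h3 : Complex.exp (((π / 2 : ℝ) : ℂ) * Complex.I) = Complex.I := by
      push_cast; exact Complex.exp_pi_div_two_mul_I
    rw [h3]
    push_cast; ring
  rw [← intervalIntegral.integral_Iic_add_Ioi (b := (0 : ℝ)) hgi.integrableOn hgi.integrableOn,
    ← neg_zero, ← integral_comp_neg_Ioi, neg_zero, setIntegral_congr_fun measurableSet_Ioi hneg,
    integral_conj, add_comm, Complex.add_conj, hray, stableKernel_eq_im_integral hδ₀ hδ₁ hτ,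
    Complex.smul_re]
  congr 1
  simp
  field_simp

theorem exists_abs_stableDensity_apply_one_le {δ : ℝ} (hδ₀ : 0 < δ) (hδ₁ : δ < 1) :
    ∃ C, ∀ τ, 0 < τ → τ ≤ 1 → |stableDensity δ τ 1| ≤ C * τ := by
  have hint := integrableOn_one_add_mul_exp_rpow_sub hδ₀ hδ₁ one_pos zero_le_one
  refine ⟨1 / π * ∫ r in Ioi (0 : ℝ), (1 + r) * exp (1 * r ^ δ - 1 * r), fun τ hτ hτ₁ => ?_⟩
  rw [stableDensity_eq_im_integral hδ₀ hδ₁ hτ one_pos]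
  set c : ℂ := Complex.exp ((π * δ : ℝ) * Complex.I) with hc
  have hcn : ‖c‖ = 1 := Complex.norm_exp_ofReal_mul_I _
  set G : ℝ → ℂ := fun r => Complex.exp (-(1 * r : ℝ) - (τ * r ^ δ : ℝ) * c) with hG
  have hbound : ∀ r ∈ Ioi (0 : ℝ), ‖G r - (exp (-r) : ℝ)‖
      ≤ τ * ((1 + r) * exp (1 * r ^ δ - 1 * r)) := by
    intro r hr
    have hr' : 0 < r := hr
    have h1 : G r - (exp (-r) : ℝ)
        = (exp (-r) : ℝ) * (Complex.exp (-((τ * r ^ δ : ℝ) * c)) - 1) := by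
      rw [mul_sub, Complex.ofReal_exp, ← Complex.exp_add, mul_one, hG]
      simp only
      congr 2
      push_cast; ring
    have h2 := Complex.norm_exp_sub_sum_le_norm_mul_exp (-((τ * r ^ δ : ℝ) * c)) 1
    simp only [Finset.range_one, Finset.sum_singleton, pow_zero, Nat.factorial_zero, Nat.cast_one,
      div_one, pow_one, norm_neg, norm_mul, hcn, mul_one, Complex.norm_real,
      Real.norm_of_nonneg (by positivity : 0 ≤ r ^ δ), Real.norm_of_nonneg hτ.le] at h2
    rw [h1, norm_mul, Complex.norm_real, Real.norm_of_nonneg (exp_pos _).le]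
    have h3 : r ^ δ ≤ 1 + r := by
      rcases le_total r 1 with h | h
      · linarith [rpow_le_one hr'.le h hδ₀.le]
      · linarith [(rpow_le_rpow_of_exponent_le h hδ₁.le).trans_eq (rpow_one r)]
    have h4 : exp (τ * r ^ δ) ≤ exp (1 * r ^ δ) := by gcongr
    calc exp (-r) * _ ≤ exp (-r) * (τ * r ^ δ * exp (τ * r ^ δ)) := by gcongr
      _ ≤ exp (-r) * (τ * (1 + r) * exp (1 * r ^ δ)) := by gcongr
      _ = _ := by rw [sub_eq_add_neg, exp_add, one_mul r]; ring
  have hexp : IntegrableOn (fun r : ℝ => ((exp (-r) : ℝ) : ℂ)) (Ioi 0) :=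
    (integrableOn_exp_neg_Ioi 0).ofReal
  have hGi : IntegrableOn (fun r => G r - ((exp (-r) : ℝ) : ℂ)) (Ioi 0) := by
    refine (hint.const_mul τ).mono' (by
      rw [hG]; exact (by fun_prop : Measurable _).aestronglyMeasurable) ?_
    filter_upwards [ae_restrict_mem measurableSet_Ioi] with r hr using hbound r hr
  have hsplit : (∫ r in Ioi (0 : ℝ), G r).im
      = (∫ r in Ioi (0 : ℝ), (G r - ((exp (-r) : ℝ) : ℂ))).im := by
    have : ∫ r in Ioi (0 : ℝ), G r
        = (∫ r in Ioi (0 : ℝ), (G r - ((exp (-r) : ℝ) : ℂ)))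
          + ∫ r in Ioi (0 : ℝ), ((exp (-r) : ℝ) : ℂ) := by
      rw [← integral_add hGi hexp]
      simp
    rw [this, integral_complex_ofReal, Complex.add_im, Complex.ofReal_im, add_zero]
  rw [hsplit, abs_mul, abs_neg, abs_of_pos (by positivity : 0 < 1 / π), mul_assoc]
  gcongr
  refine (Complex.abs_im_le_norm _).trans ((norm_integral_le_integral_norm _).trans ?_)
  rw [mul_comm, ← integral_const_mul]
  exact setIntegral_mono_on hGi.norm (hint.const_mul τ) measurableSet_Ioi hbound

theorem stableDensity_one_eq (δ : ℝ) {s : ℝ} (hs : 0 < s) :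
    stableDensity δ 1 s = s⁻¹ * stableDensity δ (s ^ δ)⁻¹ 1 := by
  simp only [stableDensity, one_rpow, div_one]
  rw [rpow_add_one hs.ne', one_div]
  field_simp

theorem stableKernel_scaling {δ τ : ℝ} (hδ₀ : 0 < δ) (hτ : 0 < τ) (v : ℝ) :
    stableKernel δ τ v = τ ^ (-(1 / δ)) * stableKernel δ 1 (τ ^ (-(1 / δ)) * v) := by
  have hc : 0 < τ ^ (-(1 / δ)) := by positivity
  simp only [stableKernel, mul_pos_iff_of_pos_left hc]
  split_ifs with hv
  · have h1 : (τ ^ (-(1 / δ))) ^ δ = τ⁻¹ := by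
      rw [← rpow_mul hτ.le, show -(1 / δ) * δ = -1 by field_simp, rpow_neg_one]
    simp only [stableDensity]
    rw [rpow_add_one hv.ne', rpow_add_one (by positivity), mul_rpow hc.le hv.le, h1,
      show 1 / (τ⁻¹ * v ^ δ) = τ / v ^ δ by field_simp]
    field_simp
  · simp

theorem continuous_stableKernel {δ τ : ℝ} (hδ₀ : 0 < δ) (hδ₁ : δ < 1) (hτ : 0 < τ) :
    Continuous (stableKernel δ τ) := by
  have : Continuous fun v => (stableKernel δ τ v : ℂ) := by
    simp only [stableKernel_eq_fourierInv hδ₀ hδ₁ hτ]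
    refine continuous_of_dominated (bound := fun ξ => ‖stableChar δ τ ξ‖) (fun v => ?_) (fun v => ?_)
      (integrable_stableChar hδ₀ hδ₁ hτ).norm ?_
    · have := continuous_stableChar hδ₀ τ
      exact (by fun_prop : Continuous _).aestronglyMeasurable
    · filter_upwards with ξ
      rw [norm_mul, Complex.norm_exp_ofReal_mul_I, one_mul]
    · filter_upwards with ξ
      fun_prop
  exact Complex.continuous_re.comp this

theorem stableKernel_of_nonpos (δ τ : ℝ) {v : ℝ} (hv : v ≤ 0) : stableKernel δ τ v = 0 :=
  if_neg (not_lt.2 hv)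

theorem integrable_stableKernel_one {δ : ℝ} (hδ₀ : 0 < δ) (hδ₁ : δ < 1) :
    Integrable (stableKernel δ 1) := by
  have hcont := continuous_stableKernel hδ₀ hδ₁ one_pos
  obtain ⟨C, hC⟩ := exists_abs_stableDensity_apply_one_le hδ₀ hδ₁
  have h1 : IntegrableOn (stableKernel δ 1) (Iic 1) := by
    have h2 : IntegrableOn (stableKernel δ 1) (Iic 0) :=
      (integrableOn_zero (s := Iic (0 : ℝ))).congr_fun
        (fun v hv => (stableKernel_of_nonpos δ 1 hv).symm) measurableSet_Iic
    have h3 : IntegrableOn (stableKernel δ 1) (Icc 0 1) := hcont.continuousOn.integrableOn_Icc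
    refine (h2.union h3).mono_set fun v hv => ?_
    rcases le_total v 0 with h | h
    · exact Or.inl h
    · exact Or.inr ⟨h, hv⟩
  have h2 : IntegrableOn (stableKernel δ 1) (Ioi 1) := by
    refine ((integrableOn_Ioi_rpow_of_lt (by linarith : -1 - δ < -1) one_pos).const_mul C).mono'
      hcont.aestronglyMeasurable ?_
    filter_upwards [ae_restrict_mem measurableSet_Ioi] with s hs
    have hs1 : 1 < s := hs
    have hs0 : 0 < s := by linarith
    rw [stableKernel, if_pos hs0, stableDensity_one_eq δ hs0, norm_mul, Real.norm_eq_abs,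
      Real.norm_eq_abs, abs_of_pos (by positivity)]
    have := hC (s ^ δ)⁻¹ (by positivity) (inv_le_one_of_one_le₀ (one_le_rpow hs1.le hδ₀.le))
    calc s⁻¹ * |stableDensity δ (s ^ δ)⁻¹ 1| ≤ s⁻¹ * (C * (s ^ δ)⁻¹) := by gcongr
      _ = _ := by rw [sub_eq_add_neg, rpow_add hs0, rpow_neg_one, rpow_neg hs0.le]; ring
  have := h1.union h2
  rwa [Iic_union_Ioi, integrableOn_univ] at this

theorem integrable_stableKernel {δ τ : ℝ} (hδ₀ : 0 < δ) (hδ₁ : δ < 1) (hτ : 0 < τ) :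
    Integrable (stableKernel δ τ) := by
  have hc : τ ^ (-(1 / δ)) ≠ 0 := by positivity
  simp only [funext (stableKernel_scaling hδ₀ hτ)]
  exact ((integrable_stableKernel_one hδ₀ hδ₁).comp_mul_left' hc).const_mul _

theorem integral_abs_stableKernel {δ τ : ℝ} (hδ₀ : 0 < δ) (hτ : 0 < τ) :
    ∫ v, |stableKernel δ τ v| = ∫ v, |stableKernel δ 1 v| := by
  have hc : 0 < τ ^ (-(1 / δ)) := by positivity
  simp only [funext (stableKernel_scaling hδ₀ hτ), abs_mul, abs_of_pos hc]
  rw [integral_const_mul, Measure.integral_comp_mul_left (fun v => |stableKernel δ 1 v|),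
    smul_eq_mul, abs_of_pos (by positivity), mul_inv_cancel_left₀ hc.ne']

theorem measurable_stableKernel {δ : ℝ} (hδ₀ : 0 < δ) (hδ₁ : δ < 1) :
    Measurable fun p : ℝ × ℝ => if 0 < p.1 then stableKernel δ p.1 p.2 else 0 := by
  have hm : Measurable (stableKernel δ 1) := (continuous_stableKernel hδ₀ hδ₁ one_pos).measurable
  have : (fun p : ℝ × ℝ => if 0 < p.1 then stableKernel δ p.1 p.2 else 0) = fun p =>
      if 0 < p.1 then p.1 ^ (-(1 / δ)) * stableKernel δ 1 (p.1 ^ (-(1 / δ)) * p.2) else 0 := by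
    funext p
    split_ifs with h
    · exact stableKernel_scaling hδ₀ h _
    · rfl
  rw [this]
  refine Measurable.ite (measurableSet_lt measurable_const measurable_fst) ?_ measurable_const
  have h1 : Measurable fun p : ℝ × ℝ => p.1 ^ (-(1 / δ)) := by fun_prop
  exact h1.mul (hm.comp (h1.mul measurable_snd))

open FourierTransform in
theorem fourier_stableKernel {δ τ : ℝ} (hδ₀ : 0 < δ) (hδ₁ : δ < 1) (hτ : 0 < τ) :
    𝓕 (fun v => (stableKernel δ τ v : ℂ)) = stableChar δ τ := by
  have h : 𝓕⁻ (stableChar δ τ) = fun v => (stableKernel δ τ v : ℂ) := by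
    funext v
    rw [stableKernel_eq_fourierInv hδ₀ hδ₁ hτ, Real.fourierInv_eq']
    refine integral_congr_ae (Eventually.of_forall fun ξ => ?_)
    simp [mul_comm v]
  rw [← h]
  refine (continuous_stableChar hδ₀ τ).fourier_fourierInv_eq (integrable_stableChar hδ₀ hδ₁ hτ) ?_
  have h2 : 𝓕 (stableChar δ τ) = fun v => (stableKernel δ τ (-v) : ℂ) := by
    funext v
    rw [← congr_fun h (-v), Real.fourierInv_eq_fourier_neg, neg_neg]
  rw [h2]
  exact (integrable_stableKernel hδ₀ hδ₁ hτ).comp_neg.ofReal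

theorem norm_exp_neg_mul_stableKernel_le (δ τ : ℝ) {p : ℂ} (hp : 0 ≤ p.re) (v : ℝ) :
    ‖Complex.exp (-p * v) * (stableKernel δ τ v : ℂ)‖ ≤ |stableKernel δ τ v| := by
  rcases le_or_gt v 0 with hv | hv
  · simp [stableKernel_of_nonpos δ τ hv]
  · rw [norm_mul, Complex.norm_exp, Complex.re_mul_ofReal, Complex.norm_real, Real.norm_eq_abs]
    refine mul_le_of_le_one_left (abs_nonneg _) (exp_le_one_iff.2 ?_)
    rw [Complex.neg_re]
    nlinarith

theorem integrable_exp_neg_mul_stableKernel {δ τ : ℝ} (hδ₀ : 0 < δ) (hδ₁ : δ < 1) (hτ : 0 < τ)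
    {p : ℂ} (hp : 0 ≤ p.re) :
    Integrable fun v : ℝ => Complex.exp (-p * v) * (stableKernel δ τ v : ℂ) := by
  have := continuous_stableKernel hδ₀ hδ₁ hτ
  exact (integrable_stableKernel hδ₀ hδ₁ hτ).norm.mono'
    (by fun_prop : Continuous _).aestronglyMeasurable
    (Eventually.of_forall (norm_exp_neg_mul_stableKernel_le δ τ hp))

theorem diffContOnCl_laplace_stableKernel {δ τ : ℝ} (hδ₀ : 0 < δ) (hδ₁ : δ < 1) (hτ : 0 < τ) :
    DiffContOnCl ℂ (fun p : ℂ => ∫ v : ℝ, Complex.exp (-p * v) * (stableKernel δ τ v : ℂ))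
      {p | 0 < p.re} := by
  have hF := continuous_stableKernel hδ₀ hδ₁ hτ
  constructor
  · intro p hp
    have hp : 0 < p.re := hp
    refine DifferentiableAt.differentiableWithinAt ?_
    refine (hasDerivAt_integral_of_dominated_loc_of_deriv_le (s := {q : ℂ | p.re / 2 < q.re})
      (F' := fun q v => -v * (Complex.exp (-q * v) * (stableKernel δ τ v : ℂ)))
      (bound := fun v => 2 / p.re * |stableKernel δ τ v|)
      ?_ ?_ (integrable_exp_neg_mul_stableKernel hδ₀ hδ₁ hτ hp.le) ?_ ?_ ?_ ?_).2.differentiableAt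
    · exact (isOpen_lt continuous_const Complex.continuous_re).mem_nhds (by
        simp only [mem_ofPred_eq]; linarith)
    · exact Eventually.of_forall fun q => (by fun_prop : Continuous _).aestronglyMeasurable
    · exact (by fun_prop : Continuous _).aestronglyMeasurable
    · filter_upwards with v q hq
      have hq : p.re / 2 < q.re := hq
      rcases le_or_gt v 0 with hv | hv
      · simp [stableKernel_of_nonpos δ τ hv]
      · rw [norm_mul, norm_mul, Complex.norm_exp, Complex.re_mul_ofReal, Complex.norm_real,
          Real.norm_eq_abs, norm_neg, Complex.norm_real, Real.norm_of_nonneg hv.le, Complex.neg_re,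
          ← mul_assoc]
        refine mul_le_mul_of_nonneg_right ?_ (abs_nonneg _)
        have h1 : exp (-q.re * v) ≤ exp (-(p.re / 2 * v)) := exp_le_exp.2 (by nlinarith)
        have h2 : p.re / 2 * v * exp (-(p.re / 2 * v)) ≤ 1 := by
          have := add_one_le_exp (p.re / 2 * v)
          rw [exp_neg, ← div_eq_mul_inv, div_le_one (exp_pos _)]
          linarith
        rw [le_div_iff₀ hp]
        have := mul_le_mul_of_nonneg_left h1 (by positivity : 0 ≤ v * p.re)
        nlinarith
    · exact (integrable_stableKernel hδ₀ hδ₁ hτ).norm.const_mul _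
    · filter_upwards with v q hq
      have h1 : HasDerivAt (fun q : ℂ => -q * v) (-(v : ℂ)) q := by
        simpa using (hasDerivAt_id q).neg.mul_const (v : ℂ)
      have := (h1.cexp).mul_const (stableKernel δ τ v : ℂ)
      exact this.congr_deriv (by ring)
  · rw [Complex.closure_setOfPred_lt_re]
    refine continuousOn_of_dominated (bound := fun v => |stableKernel δ τ v|) (fun p hp => ?_)
      (fun p hp => ?_) (integrable_stableKernel hδ₀ hδ₁ hτ).norm ?_
    · exact (by fun_prop : Continuous _).aestronglyMeasurable
    · exact Eventually.of_forall (norm_exp_neg_mul_stableKernel_le δ τ hp)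
    · filter_upwards with v
      fun_prop

theorem norm_exp_neg_mul_cpow_le_one {δ τ : ℝ} (hδ₀ : 0 < δ) (hδ₁ : δ < 1) (hτ : 0 ≤ τ) {p : ℂ}
    (hp : 0 ≤ p.re) : ‖Complex.exp (-τ * p ^ (δ : ℂ))‖ ≤ 1 := by
  rw [Complex.norm_exp, exp_le_one_iff, ← Complex.ofReal_neg, Complex.re_ofReal_mul]
  have := mul_nonneg hτ (re_cpow_nonneg hδ₀ hδ₁ hp)
  linarith

/-- The Laplace transform of the stable kernel on the closed right half-plane. -/
theorem laplace_stableKernel {δ τ : ℝ} (hδ₀ : 0 < δ) (hδ₁ : δ < 1) (hτ : 0 < τ) {p : ℂ}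
    (hp : 0 ≤ p.re) :
    ∫ v : ℝ, Complex.exp (-p * v) * (stableKernel δ τ v : ℂ) = Complex.exp (-τ * p ^ (δ : ℂ)) := by
  set f : ℂ → ℂ := fun p => (∫ v : ℝ, Complex.exp (-p * v) * (stableKernel δ τ v : ℂ))
    - Complex.exp (-τ * p ^ (δ : ℂ)) with hf
  set B : ℝ := (∫ v, |stableKernel δ τ v|) + 1
  have hB : ∀ q : ℂ, 0 ≤ q.re → ‖f q‖ ≤ B := by
    intro q hq
    refine (norm_sub_le _ _).trans (add_le_add ?_ (norm_exp_neg_mul_cpow_le_one hδ₀ hδ₁ hτ.le hq))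
    refine (norm_integral_le_integral_norm _).trans (integral_mono
      (integrable_exp_neg_mul_stableKernel hδ₀ hδ₁ hτ hq).norm
      (integrable_stableKernel hδ₀ hδ₁ hτ).norm (norm_exp_neg_mul_stableKernel_le δ τ hq))
  have hd : DiffContOnCl ℂ f {z | 0 < z.re} := by
    refine (diffContOnCl_laplace_stableKernel hδ₀ hδ₁ hτ).sub ⟨fun q hq => ?_, ?_⟩
    · have : DifferentiableAt ℂ (fun q : ℂ => q ^ (δ : ℂ)) q :=
        differentiableAt_id.cpow_const (Or.inl hq)
      exact (this.const_mul _).cexp.differentiableWithinAt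
    · rw [Complex.closure_setOfPred_lt_re]
      intro q hq
      have : ContinuousAt (fun q : ℂ => q ^ (δ : ℂ)) q :=
        Complex.continuousAt_cpow_const_of_re_pos (Or.inl hq) (by simpa using hδ₀)
      exact (this.const_mul _).cexp.continuousWithinAt
  have h0 : ‖f p‖ ≤ 0 := by
    refine PhragmenLindelof.right_half_plane_of_bounded_on_real hd ⟨1, by norm_num, 0, ?_⟩ ?_ ?_ hp
    · refine Asymptotics.IsBigO.of_bound B ?_
      filter_upwards [mem_inf_of_right (mem_principal_self _)] with z hz
      have hz : 0 < z.re := hz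
      simpa using hB z hz.le
    · refine ⟨B, ?_⟩
      rw [eventually_map]
      filter_upwards [eventually_ge_atTop 0] with x hx
      exact hB x (by simpa using hx)
    · intro x
      rw [norm_le_zero_iff, hf]
      simp only
      rw [sub_eq_zero]
      have h1 := congr_fun (fourier_stableKernel hδ₀ hδ₁ hτ) (x / (2 * π))
      rw [Real.fourier_eq', stableChar] at h1
      rw [show 2 * π * (x / (2 * π)) = x by field_simp] at h1
      rw [← h1]
      refine integral_congr_ae (Eventually.of_forall fun v => ?_)
      simp only [smul_eq_mul]
      congr 2
      simp
      field_simp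
  exact sub_eq_zero.1 (norm_le_zero_iff.1 h0)

theorem integral_stableKernel {δ τ : ℝ} (hδ₀ : 0 < δ) (hδ₁ : δ < 1) (hτ : 0 < τ) :
    ∫ v, stableKernel δ τ v = 1 := by
  have h := laplace_stableKernel hδ₀ hδ₁ hτ (p := 0) le_rfl
  rw [Complex.zero_cpow (by exact_mod_cast hδ₀.ne')] at h
  simp only [neg_zero, zero_mul, Complex.exp_zero, one_mul, mul_zero, integral_complex_ofReal] at h
  exact_mod_cast h

/-- The vertical line `Re p = 1`. -/
noncomputable def vline (ξ : ℝ) : ℂ := 1 + (2 * π * ξ : ℝ) * Complex.I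

theorem vline_re (ξ : ℝ) : (vline ξ).re = 1 := by simp [vline]

theorem vline_ne_zero (ξ : ℝ) : vline ξ ≠ 0 := fun h => by
  have := vline_re ξ
  simp [h] at this

@[fun_prop]
theorem continuous_vline : Continuous vline := by unfold vline; fun_prop

theorem one_le_norm_vline (ξ : ℝ) : 1 ≤ ‖vline ξ‖ := by
  have := Complex.abs_re_le_norm (vline ξ)
  rwa [vline_re, abs_one] at this

theorem abs_le_norm_vline (ξ : ℝ) : |ξ| ≤ ‖vline ξ‖ := by
  have := Complex.abs_im_le_norm (vline ξ)
  have h : (vline ξ).im = 2 * π * ξ := by simp [vline]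
  rw [h, abs_mul, abs_of_pos (by positivity)] at this
  have : |ξ| ≤ 2 * π * |ξ| := le_mul_of_one_le_left (abs_nonneg _) (by linarith [pi_gt_three])
  linarith

theorem continuous_vline_cpow {δ : ℝ} : Continuous fun ξ => vline ξ ^ (δ : ℂ) := by
  rw [continuous_iff_continuousAt]
  intro ξ
  exact (continuousAt_cpow_const (Or.inl (by rw [vline_re]; exact one_pos))).comp
    continuous_vline.continuousAt

theorem exists_pow_mul_exp_neg_rpow_le (n : ℕ) {c κ : ℝ} (hc : 0 < c) (hκ : 0 < κ) :
    ∃ C, 0 ≤ C ∧ ∀ x : ℝ, 1 ≤ x → x ^ n * exp (-c * x ^ κ) ≤ C * exp (-(c / 2) * x ^ κ) := by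
  obtain ⟨m, hm⟩ := exists_nat_ge ((n : ℝ) / κ)
  refine ⟨m.factorial * (2 / c) ^ m, by positivity, fun x hx => ?_⟩
  have hx0 : 0 < x := by linarith
  have hn : x ^ n ≤ (x ^ κ) ^ m := by
    rw [← rpow_natCast, ← rpow_natCast, ← rpow_mul hx0.le]
    refine rpow_le_rpow_of_exponent_le hx ?_
    rwa [div_le_iff₀ hκ, mul_comm] at hm
  have h1 := pow_div_factorial_le_exp (c / 2 * x ^ κ) (by positivity) m
  rw [div_le_iff₀ (by positivity), mul_pow] at h1
  have h2 : (x ^ κ) ^ m ≤ m.factorial * (2 / c) ^ m * exp (c / 2 * x ^ κ) := by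
    calc (x ^ κ) ^ m = (2 / c) ^ m * ((c / 2) ^ m * (x ^ κ) ^ m) := by
          rw [← mul_assoc, ← mul_pow]; field_simp; simp
      _ ≤ (2 / c) ^ m * (exp (c / 2 * x ^ κ) * m.factorial) := by gcongr
      _ = _ := by ring
  calc x ^ n * exp (-c * x ^ κ)
      ≤ (m.factorial * (2 / c) ^ m * exp (c / 2 * x ^ κ)) * exp (-c * x ^ κ) := by
        gcongr; exact hn.trans h2
    _ = _ := by rw [mul_assoc, ← exp_add]; congr 2; ring

theorem integrable_norm_vline_pow_mul_exp (n : ℕ) {c κ : ℝ} (hc : 0 < c) (hκ : 0 < κ) :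
    Integrable fun ξ => ‖vline ξ‖ ^ n * exp (-c * ‖vline ξ‖ ^ κ) := by
  obtain ⟨C, hC0, hC⟩ := exists_pow_mul_exp_neg_rpow_le n hc hκ
  refine ((integrable_exp_neg_mul_abs_rpow hκ (half_pos hc)).const_mul C).mono' ?_ ?_
  · exact (by fun_prop : Measurable _).aestronglyMeasurable
  · filter_upwards with ξ
    rw [Real.norm_of_nonneg (by positivity)]
    refine (hC _ (one_le_norm_vline ξ)).trans ?_
    refine mul_le_mul_of_nonneg_left (exp_le_exp.2 ?_) hC0
    have : |ξ| ^ κ ≤ ‖vline ξ‖ ^ κ := rpow_le_rpow (abs_nonneg _) (abs_le_norm_vline ξ) hκ.le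
    nlinarith

theorem norm_exp_neg_mul_vline_cpow_le {δ τ : ℝ} (hδ₀ : 0 < δ) (hδ₁ : δ < 1) (hτ : 0 ≤ τ) (ξ : ℝ) :
    ‖Complex.exp (-τ * vline ξ ^ (δ : ℂ))‖
      ≤ exp (-(τ * cos (δ * (π / 2))) * ‖vline ξ‖ ^ δ) := by
  rw [Complex.norm_exp, ← Complex.ofReal_neg, Complex.re_ofReal_mul]
  have h := norm_rpow_mul_cos_le_re_cpow hδ₀ hδ₁ (p := vline ξ) (by rw [vline_re]; exact zero_le_one)
  have := mul_le_mul_of_nonneg_left h hτ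
  exact exp_le_exp.2 (by linarith)

theorem integrable_exp_neg_mul_vline_cpow {δ τ : ℝ} (hδ₀ : 0 < δ) (hδ₁ : δ < 1) (hτ : 0 < τ) :
    Integrable fun ξ => Complex.exp (-τ * vline ξ ^ (δ : ℂ)) := by
  have hc := cos_mul_pi_div_two_pos hδ₀ hδ₁
  have := continuous_vline_cpow (δ := δ)
  refine (integrable_norm_vline_pow_mul_exp 0 (mul_pos hτ hc) hδ₀).mono'
    (by fun_prop : Continuous _).aestronglyMeasurable (Eventually.of_forall fun ξ => ?_)
  rw [pow_zero, one_mul]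
  exact norm_exp_neg_mul_vline_cpow_le hδ₀ hδ₁ hτ.le ξ

open FourierTransform in
/-- The Bromwich integral of `exp (-τ p ^ δ)` along `Re p = 1` is the stable kernel. -/
theorem stableKernel_eq_integral_vline {δ τ : ℝ} (hδ₀ : 0 < δ) (hδ₁ : δ < 1) (hτ : 0 < τ) (v : ℝ) :
    (stableKernel δ τ v : ℂ)
      = ∫ ξ, Complex.exp (vline ξ * v) * Complex.exp (-τ * vline ξ ^ (δ : ℂ)) := by
  set G : ℝ → ℂ := fun v => Complex.exp (-1 * v) * (stableKernel δ τ v : ℂ) with hG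
  have hF : 𝓕 G = fun ξ => Complex.exp (-τ * vline ξ ^ (δ : ℂ)) := by
    funext ξ
    rw [Real.fourier_eq', ← laplace_stableKernel hδ₀ hδ₁ hτ (by rw [vline_re]; exact zero_le_one)]
    refine integral_congr_ae (Eventually.of_forall fun v => ?_)
    simp only [hG, smul_eq_mul]
    rw [← mul_assoc, ← Complex.exp_add]
    congr 2
    simp [vline]; ring
  have hcont := continuous_stableKernel hδ₀ hδ₁ hτ
  have hinv := (by fun_prop : Continuous G).fourierInv_fourier_eq
    (integrable_exp_neg_mul_stableKernel hδ₀ hδ₁ hτ (by simp)) (by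
      rw [hF]; exact integrable_exp_neg_mul_vline_cpow hδ₀ hδ₁ hτ)
  have h1 : (stableKernel δ τ v : ℂ) = Complex.exp v * G v := by
    rw [hG]; simp only; rw [← mul_assoc, ← Complex.exp_add]; simp
  rw [h1, ← congr_fun hinv v, Real.fourierInv_eq', hF, ← integral_const_mul]
  refine integral_congr_ae (Eventually.of_forall fun ξ => ?_)
  simp only [smul_eq_mul]
  rw [← mul_assoc, ← Complex.exp_add]
  congr 2
  simp [vline]; ring

theorem norm_exp_vline_mul (ξ v : ℝ) : ‖Complex.exp (vline ξ * v)‖ = exp v := by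
  rw [Complex.norm_exp, Complex.re_mul_ofReal, vline_re, one_mul]

/-- The stable kernels form a convolution semigroup. -/
theorem integral_stableKernel_mul_stableKernel {δ τ w : ℝ} (hδ₀ : 0 < δ) (hδ₁ : δ < 1)
    (hτ : 0 < τ) (hw : 0 < w) (v : ℝ) :
    ∫ r, stableKernel δ w r * stableKernel δ τ (v - r) = stableKernel δ (τ + w) v := by
  have hcw := continuous_stableKernel hδ₀ hδ₁ hw
  have hcv := continuous_vline_cpow (δ := δ)
  have key : ∫ r, (stableKernel δ w r : ℂ) * (stableKernel δ τ (v - r) : ℂ)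
      = (stableKernel δ (τ + w) v : ℂ) := by
    have hre : ∀ ξ, 0 ≤ (vline ξ).re := fun ξ => by rw [vline_re]; exact zero_le_one
    have h1 : ∀ r, (stableKernel δ w r : ℂ) * (stableKernel δ τ (v - r) : ℂ)
        = ∫ ξ, (Complex.exp (vline ξ * v) * Complex.exp (-τ * vline ξ ^ (δ : ℂ)))
          * (Complex.exp (-vline ξ * r) * (stableKernel δ w r : ℂ)) := by
      intro r
      rw [stableKernel_eq_integral_vline hδ₀ hδ₁ hτ, ← integral_const_mul]
      refine integral_congr_ae (Eventually.of_forall fun ξ => ?_)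
      simp only
      rw [show vline ξ * ((v - r : ℝ) : ℂ) = vline ξ * v + -vline ξ * r by push_cast; ring,
        Complex.exp_add]
      ring
    simp only [h1]
    rw [integral_integral_swap]
    · rw [stableKernel_eq_integral_vline hδ₀ hδ₁ (add_pos hτ hw)]
      refine integral_congr_ae (Eventually.of_forall fun ξ => ?_)
      simp only
      rw [integral_const_mul, laplace_stableKernel hδ₀ hδ₁ hw (hre ξ), mul_assoc, ← Complex.exp_add]
      congr 2
      push_cast; ring
    · have hi := (integrable_stableKernel hδ₀ hδ₁ hw).norm.mul_prod
        ((integrable_exp_neg_mul_vline_cpow hδ₀ hδ₁ hτ).norm.const_mul (exp v))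
      refine hi.mono' ?_ (Eventually.of_forall fun z => ?_)
      · refine Continuous.aestronglyMeasurable ?_
        simp only [Function.uncurry_def]
        have hcv' : Continuous fun z : ℝ × ℝ => vline z.2 ^ (δ : ℂ) := hcv.comp continuous_snd
        fun_prop
      · simp only [Function.uncurry_def]
        rw [norm_mul, norm_mul, norm_exp_vline_mul, mul_comm]
        gcongr
        exact norm_exp_neg_mul_stableKernel_le δ w (hre _) _
  exact_mod_cast key

theorem Mwr_half (y : ℝ) : Mwr y (1 / 2) = exp (-y ^ 2 / 4) / √π := by
  set f : ℕ → ℝ := fun n =>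
    (-y) ^ n / ((n.factorial : ℝ) * Real.Gamma (-(1 / 2) * (n : ℝ) + 1 - 1 / 2)) with hf
  have hodd : HasSum (fun k => f (2 * k + 1)) 0 := by
    convert hasSum_zero using 1
    funext k
    simp only [hf]
    rw [show -(1 / 2) * ((2 * k + 1 : ℕ) : ℝ) + 1 - 1 / 2 = -(k : ℝ) by push_cast; ring,
      Real.Gamma_neg_nat_eq_zero, mul_zero, div_zero]
  have heven : HasSum (fun k => f (2 * k)) (exp (-y ^ 2 / 4) / √π) := by
    have h1 := (NormedSpace.expSeries_div_hasSum_exp (𝔸 := ℝ) (-y ^ 2 / 4)).div_const (√π)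
    rw [← Real.exp_eq_exp_ℝ] at h1
    refine h1.congr_fun fun k => ?_
    simp only [hf]
    rw [← div_div, div_eq_mul_one_div _ (Gamma _),
      show -(1 / 2) * ((2 * k : ℕ) : ℝ) + 1 - 1 / 2 = 1 - (k + 1 / 2 : ℝ) by push_cast; ring,
      one_div_Gamma_one_sub (by positivity), Real.Gamma_nat_add_half]
    have h2 : sin (π * (k + 1 / 2)) = (-1) ^ k := by
      rw [mul_add, mul_one_div, sin_add_pi_div_two, mul_comm, cos_nat_mul_pi]
    have h3 : ((2 * k).factorial : ℝ) = (2 * k - 1).doubleFactorial * (2 ^ k * k.factorial) := by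
      rcases k with _ | k
      · simp
      · rw [show 2 * (k + 1) = (2 * k + 1) + 1 by ring, Nat.factorial_eq_mul_doubleFactorial,
          show 2 * k + 1 + 1 = 2 * (k + 1) by ring, Nat.doubleFactorial_two_mul,
          show 2 * (k + 1) - 1 = 2 * k + 1 by omega]
        push_cast
        ring
    have h4 : (0 : ℝ) < (2 * k - 1).doubleFactorial := by exact_mod_cast Nat.doubleFactorial_pos _
    have h5 : √π ^ 2 = π := sq_sqrt pi_pos.le
    have h6 : (4 : ℝ) ^ k = 2 ^ k * 2 ^ k := by rw [← mul_pow]; norm_num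
    rw [h2, h3, div_pow, h6, pow_mul, neg_sq, neg_pow (y ^ 2)]
    field_simp
    rw [h5]
  have := heven.even_add_odd hodd
  rw [add_zero] at this
  exact this.tsum_eq

/-- The Lévy density, that is the stable density of index `1 / 2`. -/
noncomputable def levy (y w : ℝ) : ℝ :=
  y / (2 * √π) * w ^ (-(3 / 2 : ℝ)) * exp (-y ^ 2 / (4 * w))

theorem levy_nonneg {y w : ℝ} (hy : 0 ≤ y) (hw : 0 ≤ w) : 0 ≤ levy y w := by
  unfold levy; positivity

theorem levy_neg (y w : ℝ) : levy (-y) w = -levy y w := by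
  simp only [levy, neg_sq]; ring

theorem stableKernel_half (y : ℝ) {w : ℝ} (hw : 0 < w) :
    stableKernel (1 / 2) y w = levy y w := by
  rw [stableKernel, if_pos hw, stableDensity, Mwr_half, levy, div_pow, ← sqrt_eq_rpow,
    sq_sqrt hw.le, show (1 / 2 + 1 : ℝ) = 3 / 2 by norm_num, rpow_neg hw.le]
  rw [show -(y ^ 2 / w) / 4 = -y ^ 2 / (4 * w) by field_simp]
  field_simp

theorem integrableOn_exp_neg_mul_levy {y : ℝ} (hy : 0 < y) {q : ℂ} (hq : 0 ≤ q.re) :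
    IntegrableOn (fun w : ℝ => Complex.exp (-q * w) * (levy y w : ℂ)) (Ioi 0) := by
  refine (integrable_exp_neg_mul_stableKernel (δ := 1 / 2) (by norm_num) (by norm_num) hy
    hq).integrableOn.congr_fun (fun w hw => ?_) measurableSet_Ioi
  simp only [stableKernel_half y hw]

theorem laplace_levy {y : ℝ} (hy : 0 < y) {q : ℂ} (hq : 0 ≤ q.re) :
    ∫ w in Ioi (0 : ℝ), Complex.exp (-q * w) * (levy y w : ℂ)
      = Complex.exp (-y * q ^ ((1 / 2 : ℝ) : ℂ)) := by
  rw [← laplace_stableKernel (by norm_num) (by norm_num) hy hq,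
    ← setIntegral_eq_integral_of_forall_compl_eq_zero (s := Ioi (0 : ℝ))
      (f := fun v : ℝ => Complex.exp (-q * v) * (stableKernel (1 / 2) y v : ℂ))]
  · refine setIntegral_congr_fun measurableSet_Ioi fun w hw => ?_
    simp only [stableKernel_half y hw]
  · intro w hw
    simp [stableKernel_of_nonpos _ _ (not_lt.1 hw)]

theorem integrableOn_levy {y : ℝ} (hy : 0 < y) : IntegrableOn (levy y) (Ioi 0) :=
  (integrable_stableKernel (δ := 1 / 2) (by norm_num) (by norm_num) hy).integrableOn.congr_fun
    (fun _ hw => stableKernel_half y hw) measurableSet_Ioi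

theorem levy_div_le {y w : ℝ} (hy : 0 < y) (hw : 0 < w) :
    levy y w / w ≤ 8 * √2 / y ^ 2 * levy (y / √2) w := by
  have h1 : y ^ 2 / (8 * w) * exp (-(y ^ 2 / (8 * w))) ≤ 1 := by
    have := add_one_le_exp (y ^ 2 / (8 * w))
    rw [exp_neg, ← div_eq_mul_inv, div_le_one (exp_pos _)]
    linarith
  have h2 : exp (-y ^ 2 / (4 * w)) = exp (-(y ^ 2 / (8 * w))) * exp (-(y ^ 2 / (8 * w))) := by
    rw [← exp_add]; congr 1; field_simp; norm_num
  have h3 : levy (y / √2) w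
      = y / (√2 * (2 * √π)) * w ^ (-(3 / 2 : ℝ)) * exp (-(y ^ 2 / (8 * w))) := by
    simp only [levy, div_pow]
    rw [sq_sqrt (by norm_num), show -(y ^ 2 / 2) / (4 * w) = -(y ^ 2 / (8 * w)) by
      field_simp; norm_num]
    field_simp
  have h4 : exp (-(y ^ 2 / (8 * w))) / w ≤ 8 / y ^ 2 := by
    rw [div_le_div_iff₀ hw (by positivity)]
    have := mul_le_mul_of_nonneg_left h1 (by positivity : 0 ≤ 8 * w)
    calc _ = 8 * w * (y ^ 2 / (8 * w) * exp (-(y ^ 2 / (8 * w)))) := by field_simp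
      _ ≤ _ := by linarith
  calc levy y w / w = (y / (2 * √π) * w ^ (-(3 / 2 : ℝ)) * exp (-(y ^ 2 / (8 * w))))
        * (exp (-(y ^ 2 / (8 * w))) / w) := by rw [levy, h2]; ring
    _ ≤ (y / (2 * √π) * w ^ (-(3 / 2 : ℝ)) * exp (-(y ^ 2 / (8 * w)))) * (8 / y ^ 2) := by gcongr
    _ = _ := by
      rw [h3]
      field_simp

/-- The principal square root on `ℂ`. -/
noncomputable def csqrt (ζ : ℂ) : ℂ := ζ ^ ((1 / 2 : ℝ) : ℂ)

theorem csqrt_sq (ζ : ℂ) : csqrt ζ ^ 2 = ζ := by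
  have := Complex.cpow_nat_inv_pow ζ (n := 2) two_ne_zero
  rw [csqrt]
  convert this using 3
  push_cast; norm_num

theorem csqrt_re_nonneg {ζ : ℂ} (hζ : 0 ≤ ζ.re) : 0 ≤ (csqrt ζ).re :=
  re_cpow_nonneg (by norm_num) (by norm_num) hζ

theorem sqrt_re_le_csqrt_re {ζ : ℂ} (hζ : 0 ≤ ζ.re) : √ζ.re ≤ (csqrt ζ).re := by
  refine sqrt_le_iff.2 ⟨csqrt_re_nonneg hζ, ?_⟩
  have h := congrArg Complex.re (csqrt_sq ζ)
  rw [sq, Complex.mul_re] at h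
  nlinarith [sq_nonneg (csqrt ζ).im]

theorem norm_csqrt_le (ζ : ℂ) : ‖csqrt ζ‖ ≤ 1 + ‖ζ‖ := by
  have h := congrArg norm (csqrt_sq ζ)
  rw [norm_pow] at h
  nlinarith [sq_nonneg (‖csqrt ζ‖ - 1 / 2)]

@[fun_prop]
theorem measurable_csqrt : Measurable csqrt := by unfold csqrt; fun_prop

theorem csqrt_ofReal {r : ℝ} (hr : 0 ≤ r) : csqrt r = (√r : ℝ) := by
  rw [csqrt, ← Complex.ofReal_cpow hr, sqrt_eq_rpow]

/-- The decay rate in `z`: the root with nonnegative real part of `a² k² + lam k = q`. -/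
noncomputable def rateZ (a lam : ℝ) (q : ℂ) : ℂ :=
  csqrt ((lam ^ 2 / (4 * a ^ 2) : ℝ) + q) / a - (lam / (2 * a ^ 2) : ℝ)

/-- The shifted decay rate in `x` on the boundary `z = 0`. -/
noncomputable def rateX (a lam α γ : ℝ) (q : ℂ) : ℂ :=
  csqrt ((γ ^ 2 : ℝ) + (q + α * rateZ a lam q))

@[fun_prop]
theorem measurable_rateZ (a lam : ℝ) : Measurable (rateZ a lam) := by unfold rateZ; fun_prop

@[fun_prop]
theorem measurable_rateX (a lam α γ : ℝ) : Measurable (rateX a lam α γ) := by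
  unfold rateX; fun_prop

theorem rateZ_equation {a : ℝ} (ha : 0 < a) (lam : ℝ) (q : ℂ) :
    (a : ℂ) ^ 2 * rateZ a lam q ^ 2 + lam * rateZ a lam q = q := by
  have h := csqrt_sq ((lam ^ 2 / (4 * a ^ 2) : ℝ) + q)
  have ha' : (a : ℂ) ≠ 0 := by exact_mod_cast ha.ne'
  rw [rateZ]
  generalize csqrt ((lam ^ 2 / (4 * a ^ 2) : ℝ) + q) = s at h
  rw [← sub_eq_iff_eq_add'] at h
  rw [← h]
  push_cast
  field_simp
  ring

theorem rateX_equation (a lam α γ : ℝ) (q : ℂ) :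
    (γ - rateX a lam α γ q) ^ 2 - 2 * γ * (γ - rateX a lam α γ q)
      = q + α * rateZ a lam q := by
  have h := csqrt_sq ((γ ^ 2 : ℝ) + (q + α * rateZ a lam q))
  rw [← rateX] at h
  linear_combination h + (by push_cast; ring : ((γ ^ 2 : ℝ) : ℂ) - γ ^ 2 = 0)

theorem sqrt_add_div_sub_le_rateZ_re {a lam : ℝ} (ha : 0 < a) {q : ℂ} (hq : 0 ≤ q.re) :
    √(lam ^ 2 / (4 * a ^ 2) + q.re) / a - lam / (2 * a ^ 2) ≤ (rateZ a lam q).re := by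
  rw [rateZ, Complex.sub_re, Complex.ofReal_re, Complex.div_ofReal_re]
  have := sqrt_re_le_csqrt_re (ζ := (lam ^ 2 / (4 * a ^ 2) : ℝ) + q) (by
    rw [Complex.add_re, Complex.ofReal_re]; positivity)
  rw [Complex.add_re, Complex.ofReal_re] at this
  gcongr

theorem sqrt_div_eq {a lam : ℝ} (ha : 0 < a) (hlam : 0 < lam) :
    √(lam ^ 2 / (4 * a ^ 2)) / a = lam / (2 * a ^ 2) := by
  rw [show lam ^ 2 / (4 * a ^ 2) = (lam / (2 * a)) ^ 2 by field_simp; norm_num,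
    sqrt_sq (by positivity)]
  field_simp

theorem rateZ_re_nonneg {a lam : ℝ} (ha : 0 < a) (hlam : 0 < lam) {q : ℂ} (hq : 0 ≤ q.re) :
    0 ≤ (rateZ a lam q).re := by
  refine le_trans ?_ (sqrt_add_div_sub_le_rateZ_re ha hq)
  rw [← sqrt_div_eq ha hlam, sub_nonneg]
  gcongr
  linarith

theorem rateZ_re_pos {a lam : ℝ} (ha : 0 < a) (hlam : 0 < lam) {q : ℂ} (hq : 0 < q.re) :
    0 < (rateZ a lam q).re := by
  refine lt_of_lt_of_le ?_ (sqrt_add_div_sub_le_rateZ_re ha hq.le)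
  rw [← sqrt_div_eq ha hlam, sub_pos]
  gcongr
  linarith

theorem rateX_arg_re_nonneg {a lam α : ℝ} (ha : 0 < a) (hlam : 0 < lam) (hα : 0 < α) {q : ℂ}
    (hq : 0 ≤ q.re) : q.re ≤ (q + α * rateZ a lam q).re := by
  rw [Complex.add_re, Complex.re_ofReal_mul]
  have := mul_nonneg hα.le (rateZ_re_nonneg ha hlam hq)
  linarith

theorem sqrt_le_rateX_re {a lam α : ℝ} (γ : ℝ) (ha : 0 < a) (hlam : 0 < lam) (hα : 0 < α) {q : ℂ}
    (hq : 0 ≤ q.re) : √(γ ^ 2 + q.re) ≤ (rateX a lam α γ q).re := by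
  have h1 := rateX_arg_re_nonneg ha hlam hα hq
  have := sqrt_re_le_csqrt_re (ζ := (γ ^ 2 : ℝ) + (q + α * rateZ a lam q)) (by
    rw [Complex.add_re, Complex.ofReal_re]; nlinarith [sq_nonneg γ])
  refine le_trans (sqrt_le_sqrt ?_) this
  rw [Complex.add_re, Complex.ofReal_re]
  linarith

theorem lt_rateX_re {a lam α γ : ℝ} (ha : 0 < a) (hlam : 0 < lam) (hα : 0 < α) {q : ℂ}
    (hq : 0 < q.re) : γ < (rateX a lam α γ q).re := by
  refine lt_of_lt_of_le ?_ (sqrt_le_rateX_re γ ha hlam hα hq.le)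
  exact lt_sqrt_of_sq_lt (by linarith)

theorem exists_norm_rate_le {a : ℝ} (ha : 0 < a) (lam α γ : ℝ) :
    ∃ C, 0 ≤ C ∧ ∀ q : ℂ, ‖rateZ a lam q‖ ≤ C * (1 + ‖q‖) ∧
      ‖γ - rateX a lam α γ q‖ ≤ C * (1 + ‖q‖) := by
  set b : ℝ := lam ^ 2 / (4 * a ^ 2) with hb
  have hb0 : 0 ≤ b := by positivity
  set C₁ : ℝ := (1 + b) / a + |lam / (2 * a ^ 2)| with hC₁
  have hC₁0 : 0 ≤ C₁ := by positivity
  have hk : ∀ q : ℂ, ‖rateZ a lam q‖ ≤ C₁ * (1 + ‖q‖) := by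
    intro q
    have h0 := norm_nonneg q
    refine (norm_sub_le _ _).trans ?_
    rw [norm_div, Complex.norm_real, Complex.norm_real, Real.norm_of_nonneg ha.le, Real.norm_eq_abs,
      add_mul]
    have h1 : ‖csqrt ((b : ℝ) + q)‖ ≤ (1 + b) * (1 + ‖q‖) := by
      refine (norm_csqrt_le _).trans ?_
      have := norm_add_le (b : ℂ) q
      rw [Complex.norm_real, Real.norm_of_nonneg hb0] at this
      nlinarith
    refine add_le_add ?_ (le_mul_of_one_le_right (abs_nonneg _) (by linarith))
    rw [div_mul_eq_mul_div]
    gcongr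
  refine ⟨C₁ + (|γ| + 2 + γ ^ 2 + |α| * C₁), by positivity, fun q => ⟨?_, ?_⟩⟩
  · refine (hk q).trans (mul_le_mul_of_nonneg_right ?_ (by positivity))
    have : 0 ≤ |γ| + 2 + γ ^ 2 + |α| * C₁ := by positivity
    linarith
  · have h0 := norm_nonneg q
    have h1 : ‖rateX a lam α γ q‖ ≤ 1 + (γ ^ 2 + (‖q‖ + |α| * (C₁ * (1 + ‖q‖)))) := by
      refine (norm_csqrt_le _).trans ?_
      have h2 : ‖(α : ℂ) * rateZ a lam q‖ ≤ |α| * (C₁ * (1 + ‖q‖)) := by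
        rw [norm_mul, Complex.norm_real, Real.norm_eq_abs]
        exact mul_le_mul_of_nonneg_left (hk q) (abs_nonneg _)
      have h3 := norm_add_le ((γ ^ 2 : ℝ) : ℂ) (q + α * rateZ a lam q)
      have h4 := norm_add_le q (α * rateZ a lam q)
      rw [Complex.norm_real, Real.norm_of_nonneg (sq_nonneg γ)] at h3
      linarith
    have h5 := norm_sub_le (γ : ℂ) (rateX a lam α γ q)
    rw [Complex.norm_real, Real.norm_eq_abs] at h5
    have h6 := abs_nonneg γ
    nlinarith [mul_nonneg h6 h0, mul_nonneg (sq_nonneg γ) h0, mul_nonneg hC₁0 h0]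

/-- The density in `w` whose Laplace transform is `q ↦ exp (-y * rateZ a lam q)`. -/
noncomputable def weightZ (a lam y w : ℝ) : ℝ :=
  exp (lam * y / (2 * a ^ 2)) * (exp (-(lam ^ 2 / (4 * a ^ 2) * w)) * levy (y / a) w)

/-- The density in `τ` whose Laplace transform is `q ↦ exp ((γ - √(γ² + q)) x)`. -/
noncomputable def weightX (γ x τ : ℝ) : ℝ :=
  exp (γ * x) * (exp (-(γ ^ 2 * τ)) * levy x τ)

theorem weightZ_nonneg (a lam : ℝ) (ha : 0 < a) {y w : ℝ} (hy : 0 ≤ y) (hw : 0 ≤ w) :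
    0 ≤ weightZ a lam y w := by
  have := levy_nonneg (div_nonneg hy ha.le) hw
  unfold weightZ; positivity

theorem weightX_nonneg (γ : ℝ) {x τ : ℝ} (hx : 0 ≤ x) (hτ : 0 ≤ τ) : 0 ≤ weightX γ x τ := by
  have := levy_nonneg hx hτ
  unfold weightX; positivity

theorem weightZ_mul_exp_eq (a lam y w : ℝ) (q : ℂ) :
    (weightZ a lam y w : ℂ) * Complex.exp (-w * q) = (exp (lam * y / (2 * a ^ 2)) : ℝ)
      * (Complex.exp (-((lam ^ 2 / (4 * a ^ 2) : ℝ) + q) * w) * (levy (y / a) w : ℂ)) := by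
  rw [show -(((lam ^ 2 / (4 * a ^ 2) : ℝ) : ℂ) + q) * w
    = (-(lam ^ 2 / (4 * a ^ 2) * w) : ℝ) + -w * q by push_cast; ring, Complex.exp_add,
    ← Complex.ofReal_exp, weightZ]
  push_cast; ring

theorem weightX_mul_exp_eq (γ x τ : ℝ) (q : ℂ) :
    (weightX γ x τ : ℂ) * Complex.exp (-τ * q) = (exp (γ * x) : ℝ)
      * (Complex.exp (-((γ ^ 2 : ℝ) + q) * τ) * (levy x τ : ℂ)) := by
  rw [show -(((γ ^ 2 : ℝ) : ℂ) + q) * τ = (-(γ ^ 2 * τ) : ℝ) + -τ * q by push_cast; ring,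
    Complex.exp_add, ← Complex.ofReal_exp, weightX]
  push_cast; ring

theorem integrableOn_weightZ_mul_exp {a : ℝ} (lam : ℝ) (ha : 0 < a) {y : ℝ} (hy : 0 < y) {q : ℂ}
    (hq : 0 ≤ q.re) :
    IntegrableOn (fun w : ℝ => (weightZ a lam y w : ℂ) * Complex.exp (-w * q)) (Ioi 0) := by
  simp only [weightZ_mul_exp_eq]
  refine (integrableOn_exp_neg_mul_levy (by positivity) ?_).const_mul _
  rw [Complex.add_re, Complex.ofReal_re]; positivity

theorem integrableOn_weightX_mul_exp (γ : ℝ) {x : ℝ} (hx : 0 < x) {q : ℂ} (hq : 0 ≤ q.re) :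
    IntegrableOn (fun τ : ℝ => (weightX γ x τ : ℂ) * Complex.exp (-τ * q)) (Ioi 0) := by
  simp only [weightX_mul_exp_eq]
  refine (integrableOn_exp_neg_mul_levy hx ?_).const_mul _
  rw [Complex.add_re, Complex.ofReal_re]; positivity

theorem laplace_weightZ {a : ℝ} (lam : ℝ) (ha : 0 < a) {y : ℝ} (hy : 0 < y) {q : ℂ}
    (hq : 0 ≤ q.re) :
    ∫ w in Ioi (0 : ℝ), (weightZ a lam y w : ℂ) * Complex.exp (-w * q)
      = Complex.exp (-rateZ a lam q * y) := by
  simp only [weightZ_mul_exp_eq]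
  rw [integral_const_mul, laplace_levy (by positivity) (by
    rw [Complex.add_re, Complex.ofReal_re]; positivity), Complex.ofReal_exp, ← Complex.exp_add,
    rateZ, csqrt]
  congr 1
  push_cast
  ring

theorem laplace_weightX (γ : ℝ) {x : ℝ} (hx : 0 < x) {q : ℂ} (hq : 0 ≤ q.re) :
    ∫ τ in Ioi (0 : ℝ), (weightX γ x τ : ℂ) * Complex.exp (-τ * q)
      = Complex.exp ((γ - csqrt ((γ ^ 2 : ℝ) + q)) * x) := by
  simp only [weightX_mul_exp_eq]
  rw [integral_const_mul, laplace_levy hx (by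
    rw [Complex.add_re, Complex.ofReal_re]; positivity), Complex.ofReal_exp, ← Complex.exp_add,
    csqrt]
  congr 1
  push_cast
  ring

theorem integrableOn_weightZ {a : ℝ} (lam : ℝ) (ha : 0 < a) {y : ℝ} (hy : 0 < y) :
    IntegrableOn (weightZ a lam y) (Ioi 0) := by
  have := integrableOn_weightZ_mul_exp lam ha hy (q := 0) le_rfl
  simpa [IntegrableOn] using this.re

theorem integrableOn_weightX (γ : ℝ) {x : ℝ} (hx : 0 < x) :
    IntegrableOn (weightX γ x) (Ioi 0) := by
  have := integrableOn_weightX_mul_exp γ hx (q := 0) le_rfl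
  simpa [IntegrableOn] using this.re

theorem integral_weightX_mul_exp {γ : ℝ} {x : ℝ} (hx : 0 < x) {R : ℝ} (hR : 0 ≤ R) :
    ∫ τ in Ioi (0 : ℝ), weightX γ x τ * exp (-τ * R) = exp ((γ - √(γ ^ 2 + R)) * x) := by
  have h := laplace_weightX γ hx (q := R) (by simpa using hR)
  rw [← Complex.ofReal_add, csqrt_ofReal (by positivity)] at h
  have h2 : ∀ τ : ℝ, (weightX γ x τ : ℂ) * Complex.exp (-τ * R)
      = ((weightX γ x τ * exp (-τ * R) : ℝ) : ℂ) := by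
    intro τ; push_cast; rfl
  simp only [h2, integral_complex_ofReal] at h
  exact_mod_cast h

theorem integral_weightZ_mul_exp {a lam : ℝ} (ha : 0 < a) {y : ℝ} (hy : 0 < y)
    {R : ℝ} (hR : 0 ≤ R) :
    ∫ w in Ioi (0 : ℝ), weightZ a lam y w * exp (-w * R)
      = exp (-(√(lam ^ 2 / (4 * a ^ 2) + R) / a - lam / (2 * a ^ 2)) * y) := by
  have h := laplace_weightZ lam ha hy (q := R) (by simpa using hR)
  rw [rateZ, ← Complex.ofReal_add, csqrt_ofReal (by positivity)] at h
  have h2 : ∀ w : ℝ, (weightZ a lam y w : ℂ) * Complex.exp (-w * R)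
      = ((weightZ a lam y w * exp (-w * R) : ℝ) : ℂ) := by
    intro w; push_cast; rfl
  simp only [h2, integral_complex_ofReal] at h
  exact_mod_cast h

theorem integral_weightX {γ : ℝ} (hγ : 0 < γ) {x : ℝ} (hx : 0 < x) :
    ∫ τ in Ioi (0 : ℝ), weightX γ x τ = 1 := by
  have h := integral_weightX_mul_exp (γ := γ) hx le_rfl
  simpa [sqrt_sq hγ.le] using h

theorem integral_weightZ {a lam : ℝ} (ha : 0 < a) (hlam : 0 < lam) {y : ℝ} (hy : 0 < y) :
    ∫ w in Ioi (0 : ℝ), weightZ a lam y w = 1 := by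
  have h := integral_weightZ_mul_exp (lam := lam) ha hy le_rfl
  rw [add_zero, sqrt_div_eq ha hlam] at h
  simpa using h

/-- The symbol `p ^ δ` of the fractional derivative on the line `Re p = 1`. -/
noncomputable def symb (δ ξ : ℝ) : ℂ := vline ξ ^ (δ : ℂ)

theorem continuous_symb {δ : ℝ} : Continuous (symb δ) := continuous_vline_cpow

@[fun_prop]
theorem measurable_symb {δ : ℝ} : Measurable (symb δ) := continuous_symb.measurable

theorem norm_vline_rpow_le_symb_re {δ : ℝ} (hδ₀ : 0 < δ) (hδ₁ : δ < 1) (ξ : ℝ) :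
    cos (δ * (π / 2)) * ‖vline ξ‖ ^ δ ≤ (symb δ ξ).re := by
  rw [mul_comm]
  exact norm_rpow_mul_cos_le_re_cpow hδ₀ hδ₁ (by rw [vline_re]; exact zero_le_one)

theorem symb_re_pos {δ : ℝ} (hδ₀ : 0 < δ) (hδ₁ : δ < 1) (ξ : ℝ) : 0 < (symb δ ξ).re := by
  refine lt_of_lt_of_le ?_ (norm_vline_rpow_le_symb_re hδ₀ hδ₁ ξ)
  have := cos_mul_pi_div_two_pos hδ₀ hδ₁
  have := one_le_norm_vline ξ
  positivity

theorem norm_symb_le {δ : ℝ} (hδ₁ : δ < 1) (ξ : ℝ) : ‖symb δ ξ‖ ≤ ‖vline ξ‖ := by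
  rw [symb, Complex.norm_cpow_real]
  exact (rpow_le_rpow_of_exponent_le (one_le_norm_vline ξ) hδ₁.le).trans_eq (rpow_one _)

theorem exists_norm_rate_symb_le {a : ℝ} (ha : 0 < a) (lam α γ : ℝ) {δ : ℝ} (hδ₁ : δ < 1) :
    ∃ C, 0 ≤ C ∧ ∀ ξ : ℝ, ‖rateZ a lam (symb δ ξ)‖ ≤ C * ‖vline ξ‖ ∧
      ‖γ - rateX a lam α γ (symb δ ξ)‖ ≤ C * ‖vline ξ‖ := by
  obtain ⟨C, hC, h⟩ := exists_norm_rate_le ha lam α γ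
  refine ⟨2 * C, by positivity, fun ξ => ?_⟩
  have h1 : C * (1 + ‖symb δ ξ‖) ≤ 2 * C * ‖vline ξ‖ := by
    have := norm_symb_le hδ₁ ξ
    have := one_le_norm_vline ξ
    nlinarith
  exact ⟨(h _).1.trans h1, (h _).2.trans h1⟩

theorem sqrt_cos_mul_rpow_le_sqrt {δ : ℝ} (hδ₀ : 0 < δ) (hδ₁ : δ < 1) (γ ξ : ℝ) :
    √(cos (δ * (π / 2))) * ‖vline ξ‖ ^ (δ / 2) ≤ √(γ ^ 2 + (symb δ ξ).re) := by
  refine le_sqrt_of_sq_le ?_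
  rw [mul_pow, sq_sqrt (cos_mul_pi_div_two_pos hδ₀ hδ₁).le, ← rpow_mul_natCast (norm_nonneg _)]
  have := norm_vline_rpow_le_symb_re hδ₀ hδ₁ ξ
  norm_num
  nlinarith [sq_nonneg γ]

/-- Integrability of a function of polynomial growth against the decaying factor of the
solution. -/
theorem integrable_mul_exp_rateX {δ : ℝ} (hδ₀ : 0 < δ) (hδ₁ : δ < 1) {G : ℝ → ℝ}
    (hG : AEStronglyMeasurable G) {B : ℝ} {n : ℕ} (hGB : ∀ ξ, |G ξ| ≤ B * ‖vline ξ‖ ^ n)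
    (γ : ℝ) {x : ℝ} (hx : 0 < x) :
    Integrable fun ξ => G ξ * exp ((γ - √(γ ^ 2 + (symb δ ξ).re)) * x) := by
  have hc : 0 < √(cos (δ * (π / 2))) := sqrt_pos.2 (cos_mul_pi_div_two_pos hδ₀ hδ₁)
  refine ((integrable_norm_vline_pow_mul_exp n (mul_pos hc hx) (half_pos hδ₀)).const_mul
    (B * exp (γ * x))).mono' ?_ (Eventually.of_forall fun ξ => ?_)
  · refine hG.mul (Measurable.aestronglyMeasurable ?_)
    have : Measurable fun ξ => (symb δ ξ).re := Complex.measurable_re.comp measurable_symb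
    fun_prop
  · rw [norm_mul, Real.norm_eq_abs, Real.norm_of_nonneg (exp_pos _).le]
    have h1 := sqrt_cos_mul_rpow_le_sqrt hδ₀ hδ₁ γ ξ
    have h2 : exp ((γ - √(γ ^ 2 + (symb δ ξ).re)) * x)
        ≤ exp (γ * x) * exp (-(√(cos (δ * (π / 2))) * x) * ‖vline ξ‖ ^ (δ / 2)) := by
      rw [← exp_add]
      refine exp_le_exp.2 ?_
      nlinarith
    calc _ ≤ (B * ‖vline ξ‖ ^ n) * (exp (γ * x)
          * exp (-(√(cos (δ * (π / 2))) * x) * ‖vline ξ‖ ^ (δ / 2))) :=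
          mul_le_mul (hGB ξ) h2 (exp_pos _).le ((abs_nonneg _).trans (hGB ξ))
      _ = _ := by ring

/-- Integrability of a function of polynomial growth against `exp (-τ p ^ δ)`. -/
theorem integrable_mul_exp_symb {δ : ℝ} (hδ₀ : 0 < δ) (hδ₁ : δ < 1) {G : ℝ → ℝ}
    (hG : AEStronglyMeasurable G) {B : ℝ} {n : ℕ} (hGB : ∀ ξ, |G ξ| ≤ B * ‖vline ξ‖ ^ n)
    {τ : ℝ} (hτ : 0 < τ) :
    Integrable fun ξ => G ξ * exp (-τ * (symb δ ξ).re) := by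
  have hc := cos_mul_pi_div_two_pos hδ₀ hδ₁
  refine ((integrable_norm_vline_pow_mul_exp n (mul_pos hτ hc) hδ₀).const_mul B).mono' ?_
    (Eventually.of_forall fun ξ => ?_)
  · refine hG.mul (Measurable.aestronglyMeasurable ?_)
    have : Measurable fun ξ => (symb δ ξ).re := Complex.measurable_re.comp measurable_symb
    fun_prop
  · rw [norm_mul, Real.norm_eq_abs, Real.norm_of_nonneg (exp_pos _).le]
    have h1 := mul_le_mul_of_nonneg_left (norm_vline_rpow_le_symb_re hδ₀ hδ₁ ξ) hτ.le
    have h2 : exp (-τ * (symb δ ξ).re)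
        ≤ exp (-(τ * cos (δ * (π / 2))) * ‖vline ξ‖ ^ δ) := exp_le_exp.2 (by linarith)
    calc _ ≤ (B * ‖vline ξ‖ ^ n) * exp (-(τ * cos (δ * (π / 2))) * ‖vline ξ‖ ^ δ) :=
          mul_le_mul (hGB ξ) h2 (exp_pos _).le ((abs_nonneg _).trans (hGB ξ))
      _ = _ := by ring

@[fun_prop]
theorem measurable_weightX (γ x : ℝ) : Measurable (weightX γ x) := by
  unfold weightX levy; fun_prop

theorem measurable_weightZ (a lam : ℝ) : Measurable fun p : ℝ × ℝ => weightZ a lam p.1 p.2 := by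
  unfold weightZ levy; fun_prop

@[fun_prop]
theorem measurable_weightZ_right (a lam y : ℝ) : Measurable (weightZ a lam y) :=
  (measurable_weightZ a lam).comp measurable_prodMk_left

theorem integrable_prod_weightX_mul_exp {δ : ℝ} (hδ₀ : 0 < δ) (hδ₁ : δ < 1) {G : ℝ → ℝ}
    (hG : AEStronglyMeasurable G) {B : ℝ} {n : ℕ} (hGB : ∀ ξ, |G ξ| ≤ B * ‖vline ξ‖ ^ n)
    (γ : ℝ) {x : ℝ} (hx : 0 < x) :
    Integrable (fun z : ℝ × ℝ => weightX γ x z.1 * (G z.2 * exp (-z.1 * (symb δ z.2).re)))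
      ((volume.restrict (Ioi 0)).prod volume) := by
  have hm : Measurable fun ξ => (symb δ ξ).re := Complex.measurable_re.comp measurable_symb
  rw [integrable_prod_iff']
  · constructor
    · filter_upwards with ξ
      have h1 := (integrableOn_weightX_mul_exp γ hx (q := ((symb δ ξ).re : ℝ))
        (by simpa using (symb_re_pos hδ₀ hδ₁ ξ).le)).re.const_mul (G ξ)
      refine h1.congr (Eventually.of_forall fun τ => ?_)
      simp only
      rw [show -(τ : ℂ) * ((symb δ ξ).re : ℝ) = ((-τ * (symb δ ξ).re : ℝ) : ℂ) by push_cast; ring,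
        ← Complex.ofReal_exp, ← Complex.ofReal_mul]
      simp only [RCLike.re_to_complex, Complex.ofReal_re]
      ring
    · have h1 : ∀ ξ, ∫ τ in Ioi (0 : ℝ), ‖weightX γ x τ * (G ξ * exp (-τ * (symb δ ξ).re))‖
          = |G ξ| * exp ((γ - √(γ ^ 2 + (symb δ ξ).re)) * x) := by
        intro ξ
        rw [← integral_weightX_mul_exp hx (symb_re_pos hδ₀ hδ₁ ξ).le, ← integral_const_mul]
        refine setIntegral_congr_fun measurableSet_Ioi fun τ hτ => ?_
        have hτ : 0 < τ := hτ
        rw [norm_mul, norm_mul, Real.norm_of_nonneg (weightX_nonneg γ hx.le hτ.le),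
          Real.norm_of_nonneg (exp_pos _).le, Real.norm_eq_abs]
        ring
      simp only [h1]
      exact integrable_mul_exp_rateX hδ₀ hδ₁ hG.norm (n := n) (B := B)
        (by simpa using hGB) γ hx
  · have h1 : AEStronglyMeasurable (fun z : ℝ × ℝ => G z.2)
        ((volume.restrict (Ioi 0)).prod volume) := hG.comp_snd
    have h2 : Measurable fun z : ℝ × ℝ => weightX γ x z.1 * exp (-z.1 * (symb δ z.2).re) := by
      have : Measurable fun z : ℝ × ℝ => (symb δ z.2).re := hm.comp measurable_snd
      fun_prop
    refine (h2.aestronglyMeasurable.mul h1).congr (Eventually.of_forall fun z => ?_)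
    simp only [Pi.mul_apply]
    ring

/-- The value at `(τ, y)` of the solution operator with data symbol `H`, before averaging in `τ`. -/
noncomputable def preSol (a lam δ : ℝ) (H : ℝ → ℂ) (τ y : ℝ) : ℂ :=
  ∫ ξ, H ξ * Complex.exp (-τ * symb δ ξ - rateZ a lam (symb δ ξ) * y)

/-- The symbol of the solution. -/
noncomputable def solSymb (a lam α γ δ x z ξ : ℝ) : ℂ :=
  Complex.exp ((γ - rateX a lam α γ (symb δ ξ)) * x - rateZ a lam (symb δ ξ) * z)

theorem norm_exp_neg_mul_symb_sub {a lam δ : ℝ} (ha : 0 < a) (hlam : 0 < lam) (hδ₀ : 0 < δ)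
    (hδ₁ : δ < 1) (τ : ℝ) {y : ℝ} (hy : 0 ≤ y) (ξ : ℝ) :
    ‖Complex.exp (-τ * symb δ ξ - rateZ a lam (symb δ ξ) * y)‖ ≤ exp (-τ * (symb δ ξ).re) := by
  rw [Complex.norm_exp, Complex.sub_re, Complex.re_mul_ofReal, ← Complex.ofReal_neg,
    Complex.re_ofReal_mul]
  have := mul_nonneg (rateZ_re_nonneg ha hlam (symb_re_pos hδ₀ hδ₁ ξ).le) hy
  exact exp_le_exp.2 (by linarith)

theorem norm_solSymb_le {a lam α δ : ℝ} (ha : 0 < a) (hlam : 0 < lam) (hα : 0 < α) (hδ₀ : 0 < δ)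
    (hδ₁ : δ < 1) (γ : ℝ) {x z : ℝ} (hx : 0 ≤ x) (hz : 0 ≤ z) (ξ : ℝ) :
    ‖solSymb a lam α γ δ x z ξ‖ ≤ exp ((γ - √(γ ^ 2 + (symb δ ξ).re)) * x) := by
  rw [solSymb, Complex.norm_exp, Complex.sub_re, Complex.re_mul_ofReal, Complex.re_mul_ofReal,
    Complex.sub_re, Complex.ofReal_re]
  have h1 := mul_nonneg (rateZ_re_nonneg ha hlam (symb_re_pos hδ₀ hδ₁ ξ).le) hz
  have h2 := mul_le_mul_of_nonneg_right
    (sqrt_le_rateX_re γ ha hlam hα (symb_re_pos hδ₀ hδ₁ ξ).le) hx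
  exact exp_le_exp.2 (by linarith)

theorem integral_weightZ_mul_integral {a lam δ : ℝ} (ha : 0 < a) (hδ₀ : 0 < δ)
    (hδ₁ : δ < 1) {H : ℝ → ℂ} (hH : AEStronglyMeasurable H) {B : ℝ} {n : ℕ}
    (hHB : ∀ ξ, ‖H ξ‖ ≤ B * ‖vline ξ‖ ^ n) {τ y : ℝ} (hτ : 0 < τ) (hy : 0 < y) :
    ∫ w in Ioi (0 : ℝ), (weightZ a lam y w : ℂ) * ∫ ξ, H ξ * Complex.exp (-(τ + w : ℝ) * symb δ ξ)
      = preSol a lam δ H τ y := by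
  have h1 : ∀ w : ℝ, (weightZ a lam y w : ℂ) * ∫ ξ, H ξ * Complex.exp (-(τ + w : ℝ) * symb δ ξ)
      = ∫ ξ, (H ξ * Complex.exp (-τ * symb δ ξ))
        * ((weightZ a lam y w : ℂ) * Complex.exp (-w * symb δ ξ)) := by
    intro w
    rw [← integral_const_mul]
    refine integral_congr_ae (Eventually.of_forall fun ξ => ?_)
    simp only
    rw [show -((τ + w : ℝ) : ℂ) * symb δ ξ = -τ * symb δ ξ + -w * symb δ ξ by push_cast; ring,
      Complex.exp_add]
    ring
  simp only [h1]
  rw [integral_integral_swap]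
  · refine integral_congr_ae (Eventually.of_forall fun ξ => ?_)
    simp only
    rw [integral_const_mul, laplace_weightZ lam ha hy (symb_re_pos hδ₀ hδ₁ ξ).le, mul_assoc,
      ← Complex.exp_add]
    congr 2
    ring
  · have hi := (integrableOn_weightZ lam ha hy).norm.mul_prod
      (integrable_mul_exp_symb hδ₀ hδ₁ hH.norm (n := n) (B := B) (by simpa using hHB) hτ)
    refine hi.mono' ?_ ?_
    · have h2 : AEStronglyMeasurable (fun z : ℝ × ℝ => H z.2)
        ((volume.restrict (Ioi 0)).prod volume) := hH.comp_snd
      have h3 : Measurable fun z : ℝ × ℝ => Complex.exp (-τ * symb δ z.2)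
          * ((weightZ a lam y z.1 : ℂ) * Complex.exp (-z.1 * symb δ z.2)) := by
        fun_prop
      refine (h2.mul h3.aestronglyMeasurable).congr (Eventually.of_forall fun z => ?_)
      simp only [Pi.mul_apply, Function.uncurry_def]
      ring
    · have : ∀ᵐ z : ℝ × ℝ ∂((volume.restrict (Ioi 0)).prod volume), z.1 ∈ Ioi (0 : ℝ) :=
        Measure.quasiMeasurePreserving_fst.ae (ae_restrict_mem measurableSet_Ioi)
      filter_upwards [this] with z hz
      have hz : 0 < z.1 := hz
      simp only [Function.uncurry_def]
      have h4 : ‖Complex.exp (-z.1 * symb δ z.2)‖ ≤ 1 :=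
        norm_exp_neg_mul_cpow_le_one hδ₀ hδ₁ hz.le (by rw [vline_re]; exact zero_le_one)
      have h5 : ‖Complex.exp (-τ * symb δ z.2)‖ = exp (-τ * (symb δ z.2).re) := by
        rw [Complex.norm_exp, ← Complex.ofReal_neg, Complex.re_ofReal_mul]
      rw [norm_mul, norm_mul, norm_mul, h5, Complex.norm_real, mul_comm]
      gcongr
      exact mul_le_of_le_one_right (norm_nonneg _) h4

theorem integral_weightX_mul_preSol {a lam α δ : ℝ} (ha : 0 < a) (hlam : 0 < lam) (hα : 0 < α)
    (hδ₀ : 0 < δ) (hδ₁ : δ < 1) {H : ℝ → ℂ} (hH : AEStronglyMeasurable H) {B : ℝ} {n : ℕ}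
    (hHB : ∀ ξ, ‖H ξ‖ ≤ B * ‖vline ξ‖ ^ n) (γ : ℝ) {x z : ℝ} (hx : 0 < x) (hz : 0 ≤ z) :
    ∫ τ in Ioi (0 : ℝ), (weightX γ x τ : ℂ) * preSol a lam δ H τ (z + α * τ)
      = ∫ ξ, H ξ * solSymb a lam α γ δ x z ξ := by
  have h1 : ∀ τ : ℝ, (weightX γ x τ : ℂ) * preSol a lam δ H τ (z + α * τ)
      = ∫ ξ, (H ξ * Complex.exp (-rateZ a lam (symb δ ξ) * z))
        * ((weightX γ x τ : ℂ) * Complex.exp (-τ * (symb δ ξ + α * rateZ a lam (symb δ ξ)))) := by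
    intro τ
    rw [preSol, ← integral_const_mul]
    refine integral_congr_ae (Eventually.of_forall fun ξ => ?_)
    simp only
    rw [show -(τ : ℂ) * symb δ ξ - rateZ a lam (symb δ ξ) * ((z + α * τ : ℝ) : ℂ)
        = -rateZ a lam (symb δ ξ) * z + -τ * (symb δ ξ + α * rateZ a lam (symb δ ξ)) by
          push_cast; ring, Complex.exp_add]
    ring
  simp only [h1]
  have hq : ∀ ξ, 0 ≤ (symb δ ξ + α * rateZ a lam (symb δ ξ)).re := fun ξ =>
    (symb_re_pos hδ₀ hδ₁ ξ).le.trans (rateX_arg_re_nonneg ha hlam hα (symb_re_pos hδ₀ hδ₁ ξ).le)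
  rw [integral_integral_swap]
  · refine integral_congr_ae (Eventually.of_forall fun ξ => ?_)
    simp only
    rw [integral_const_mul, laplace_weightX γ hx (hq ξ), mul_assoc, ← Complex.exp_add, solSymb,
      rateX]
    congr 2
    ring
  · have hi := integrable_prod_weightX_mul_exp hδ₀ hδ₁ hH.norm (n := n) (B := B)
      (by simpa using hHB) γ hx
    refine hi.mono' ?_ ?_
    · have h2 : AEStronglyMeasurable (fun z : ℝ × ℝ => H z.2)
        ((volume.restrict (Ioi 0)).prod volume) := hH.comp_snd
      have h3 : Measurable fun w : ℝ × ℝ => Complex.exp (-rateZ a lam (symb δ w.2) * z)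
          * ((weightX γ x w.1 : ℂ)
            * Complex.exp (-w.1 * (symb δ w.2 + α * rateZ a lam (symb δ w.2)))) := by
        fun_prop
      refine (h2.mul h3.aestronglyMeasurable).congr (Eventually.of_forall fun w => ?_)
      simp only [Pi.mul_apply, Function.uncurry_def]
      ring
    · have : ∀ᵐ z : ℝ × ℝ ∂((volume.restrict (Ioi 0)).prod volume), z.1 ∈ Ioi (0 : ℝ) :=
        Measure.quasiMeasurePreserving_fst.ae (ae_restrict_mem measurableSet_Ioi)
      filter_upwards [this] with w hw
      have hw : 0 < w.1 := hw
      simp only [Function.uncurry_def]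
      have hR := symb_re_pos hδ₀ hδ₁ w.2
      have h4 : ‖Complex.exp (-rateZ a lam (symb δ w.2) * z)‖ ≤ 1 := by
        rw [Complex.norm_exp, Complex.re_mul_ofReal, Complex.neg_re, exp_le_one_iff]
        have := mul_nonneg (rateZ_re_nonneg ha hlam hR.le) hz
        linarith
      have h5 : ‖Complex.exp (-w.1 * (symb δ w.2 + α * rateZ a lam (symb δ w.2)))‖
          ≤ exp (-w.1 * (symb δ w.2).re) := by
        rw [Complex.norm_exp, ← Complex.ofReal_neg, Complex.re_ofReal_mul]
        have := mul_le_mul_of_nonneg_left (rateX_arg_re_nonneg ha hlam hα hR.le) hw.le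
        exact exp_le_exp.2 (by linarith)
      rw [norm_mul, norm_mul, norm_mul, Complex.norm_real,
        Real.norm_of_nonneg (weightX_nonneg γ hx.le hw.le)]
      have hwx := weightX_nonneg γ hx.le hw.le
      calc _ ≤ ‖H w.2‖ * 1 * (weightX γ x w.1 * exp (-w.1 * (symb δ w.2).re)) := by gcongr
        _ = _ := by ring

/-- The convolution of the data `h` with the stable kernel. -/
noncomputable def subord (δ : ℝ) (h : ℝ → ℝ) (τ t : ℝ) : ℝ :=
  ∫ r, h r * stableKernel δ τ (t - r)

/-- The total variation of the stable law. -/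
noncomputable def stableMass (δ : ℝ) : ℝ := ∫ v, |stableKernel δ 1 v|

theorem stableMass_nonneg (δ : ℝ) : 0 ≤ stableMass δ := integral_nonneg fun _ => abs_nonneg _

theorem integrable_mul_stableKernel_sub {δ τ : ℝ} (hδ₀ : 0 < δ) (hδ₁ : δ < 1) (hτ : 0 < τ)
    {h : ℝ → ℝ} (hm : Measurable h) {B : ℝ} (hB : ∀ r, |h r| ≤ B) (t : ℝ) :
    Integrable fun r => h r * stableKernel δ τ (t - r) :=
  ((integrable_stableKernel hδ₀ hδ₁ hτ).comp_sub_left t).bdd_mul hm.aestronglyMeasurable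
    (Eventually.of_forall hB)

theorem abs_subord_le {δ τ : ℝ} (hδ₀ : 0 < δ) (hδ₁ : δ < 1) (hτ : 0 < τ)
    {h : ℝ → ℝ} (hm : Measurable h) {B : ℝ} (hB : ∀ r, |h r| ≤ B) (t : ℝ) :
    |subord δ h τ t| ≤ B * stableMass δ := by
  rw [stableMass, ← integral_abs_stableKernel hδ₀ hτ, ← integral_const_mul,
    ← integral_sub_left_eq_self (fun v => B * |stableKernel δ τ v|) _ t]
  refine abs_integral_le_integral_abs.trans (integral_mono
    (integrable_mul_stableKernel_sub hδ₀ hδ₁ hτ hm hB t).abs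
    (((integrable_stableKernel hδ₀ hδ₁ hτ).abs.comp_sub_left t).const_mul B) fun r => ?_)
  simp only [abs_mul]
  gcongr
  exact hB r

theorem subord_eq_zero (δ τ : ℝ) {h : ℝ → ℝ} (hneg : ∀ r < 0, h r = 0) {t : ℝ} (ht : t ≤ 0) :
    subord δ h τ t = 0 := by
  rw [subord, integral_eq_zero_of_ae]
  refine Eventually.of_forall fun r => ?_
  rcases lt_or_ge r 0 with hr | hr
  · simp [hneg r hr]
  · simp [stableKernel_of_nonpos δ τ (by linarith : t - r ≤ 0)]

theorem measurable_subord {δ : ℝ} (hδ₀ : 0 < δ) (hδ₁ : δ < 1) {h : ℝ → ℝ}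
    (hm : Measurable h) :
    StronglyMeasurable fun p : ℝ × ℝ => if 0 < p.1 then subord δ h p.1 p.2 else 0 := by
  have h1 : StronglyMeasurable fun q : (ℝ × ℝ) × ℝ =>
      h q.2 * (if 0 < q.1.1 then stableKernel δ q.1.1 (q.1.2 - q.2) else 0) := by
    refine Measurable.stronglyMeasurable ((hm.comp measurable_snd).mul ?_)
    exact (measurable_stableKernel hδ₀ hδ₁).comp
      (f := fun q : (ℝ × ℝ) × ℝ => (q.1.1, q.1.2 - q.2)) (by fun_prop)
  convert h1.integral_prod_right' (ν := volume) using 1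
  funext p
  split_ifs with hp
  · simp only [subord]
  · simp

theorem integral_stableKernel_mul_subord {δ τ w : ℝ} (hδ₀ : 0 < δ) (hδ₁ : δ < 1) (hτ : 0 < τ)
    (hw : 0 < w) {h : ℝ → ℝ} (hm : Measurable h) {B : ℝ} (hB : ∀ r, |h r| ≤ B) (t : ℝ) :
    ∫ s, stableKernel δ w s * subord δ h τ (t - s) = subord δ h (τ + w) t := by
  have h1 : ∀ s, stableKernel δ w s * subord δ h τ (t - s)
      = ∫ r, h r * (stableKernel δ w s * stableKernel δ τ (t - r - s)) := by
    intro s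
    rw [subord, ← integral_const_mul]
    refine integral_congr_ae (Eventually.of_forall fun r => ?_)
    simp only
    rw [show t - s - r = t - r - s by ring]
    ring
  simp only [h1]
  rw [integral_integral_swap]
  · refine integral_congr_ae (Eventually.of_forall fun r => ?_)
    simp only
    rw [integral_const_mul, integral_stableKernel_mul_stableKernel hδ₀ hδ₁ hτ hw]
  · have hi := (integrable_stableKernel hδ₀ hδ₁ hw).convolution_integrand
      (ContinuousLinearMap.mul ℝ ℝ) (integrable_stableKernel hδ₀ hδ₁ hτ)
    have hmp : MeasurePreserving (fun z : ℝ × ℝ => (t - z.2, z.1)) (volume.prod volume)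
        (volume.prod volume) :=
      ((Measure.measurePreserving_sub_left volume t).prod (MeasurePreserving.id volume)).comp
        Measure.measurePreserving_swap
    have h2 := hmp.integrable_comp_of_integrable hi
    exact h2.bdd_mul (hm.comp measurable_snd).aestronglyMeasurable
      (Eventually.of_forall fun z => hB z.2)

theorem weightZ_neg {a : ℝ} (ha : 0 < a) (lam y w : ℝ) :
    weightZ a lam (-y) w = -exp (-(lam * y / a ^ 2)) * weightZ a lam y w := by
  rw [weightZ, weightZ, neg_div a y, levy_neg, show lam * -y / (2 * a ^ 2)
    = -(lam * y / a ^ 2) + lam * y / (2 * a ^ 2) by field_simp; ring, exp_add]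
  ring

theorem weightZ_zero (a lam w : ℝ) : weightZ a lam 0 w = 0 := by simp [weightZ, levy]

theorem integrableOn_weightZ_of_real {a : ℝ} (lam : ℝ) (ha : 0 < a) (y : ℝ) :
    IntegrableOn (weightZ a lam y) (Ioi 0) := by
  rcases lt_trichotomy y 0 with hy | rfl | hy
  · have h1 := (integrableOn_weightZ lam ha (neg_pos.2 hy)).const_mul
      (-exp (-(lam * (-y) / a ^ 2)))
    refine h1.congr (Eventually.of_forall fun w => ?_)
    simp only
    rw [← weightZ_neg ha, neg_neg]
  · simp only [funext (weightZ_zero a lam)]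
    exact integrableOn_zero
  · exact integrableOn_weightZ lam ha hy

theorem integral_abs_weightZ_le {a lam : ℝ} (ha : 0 < a) (hlam : 0 < lam) (y : ℝ) :
    ∫ w in Ioi (0 : ℝ), |weightZ a lam y w| ≤ 1 := by
  have hpos : ∀ y, 0 < y → ∫ w in Ioi (0 : ℝ), |weightZ a lam y w| = 1 := by
    intro y hy
    rw [← integral_weightZ ha hlam hy]
    exact setIntegral_congr_fun measurableSet_Ioi fun w hw =>
      abs_of_nonneg (weightZ_nonneg a lam ha hy.le (le_of_lt hw))
  rcases lt_trichotomy y 0 with hy | rfl | hy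
  · have h1 : ∀ w, |weightZ a lam y w| = exp (-(lam * (-y) / a ^ 2)) * |weightZ a lam (-y) w| := by
      intro w
      rw [← neg_neg y, weightZ_neg ha, abs_mul, abs_neg, abs_of_pos (exp_pos _), neg_neg]
    simp only [h1]
    rw [integral_const_mul, hpos _ (neg_pos.2 hy), mul_one, exp_le_one_iff, neg_nonpos]
    have := neg_pos.2 hy
    positivity
  · simp [weightZ_zero]
  · exact (hpos y hy).le

/-- Averaging the data over `w` against `weightZ`, written as a Laplace convolution. -/
theorem integral_subord_mul_integral_weightZ {a lam δ τ : ℝ} (ha : 0 < a) (hδ₀ : 0 < δ)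
    (hδ₁ : δ < 1) (hτ : 0 < τ) {h : ℝ → ℝ} (hm : Measurable h) {B : ℝ} (hB : ∀ r, |h r| ≤ B)
    (t y : ℝ) :
    ∫ s, subord δ h τ (t - s) * ∫ w in Ioi (0 : ℝ), weightZ a lam y w * stableKernel δ w s
      = ∫ w in Ioi (0 : ℝ), weightZ a lam y w * subord δ h (τ + w) t := by
  simp only [← integral_const_mul]
  rw [integral_integral_swap]
  · refine setIntegral_congr_fun measurableSet_Ioi fun w hw => ?_
    rw [← integral_stableKernel_mul_subord hδ₀ hδ₁ hτ hw hm hB, ← integral_const_mul]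
    refine integral_congr_ae (Eventually.of_forall fun s => ?_)
    simp only
    ring
  · have hsub : Measurable fun z : ℝ × ℝ => subord δ h τ (t - z.1) := by
      have := ((measurable_subord hδ₀ hδ₁ hm).measurable.comp
        (measurable_prodMk_left (x := τ))).comp
        (measurable_const.sub measurable_fst : Measurable fun z : ℝ × ℝ => t - z.1)
      simpa [Function.comp_def, hτ] using this
    refine Integrable.bdd_mul (c := B * stableMass δ) ?_ hsub.aestronglyMeasurable
      (Eventually.of_forall fun z => abs_subord_le hδ₀ hδ₁ hτ hm hB _)
    have hw : Measurable fun z : ℝ × ℝ => weightZ a lam y z.2 := by fun_prop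
    have hk := (measurable_stableKernel hδ₀ hδ₁).comp measurable_swap
    have hae : ∀ᵐ z : ℝ × ℝ ∂(volume.prod (volume.restrict (Ioi 0))), z.2 ∈ Ioi (0 : ℝ) :=
      Measure.quasiMeasurePreserving_snd.ae (ae_restrict_mem measurableSet_Ioi)
    refine (integrable_prod_iff' ?_).2 ⟨?_, ?_⟩
    · refine (hw.mul hk).aestronglyMeasurable.congr ?_
      filter_upwards [hae] with z hz
      have hz : 0 < z.2 := hz
      simp [hz]
    · filter_upwards [ae_restrict_mem measurableSet_Ioi] with w hw
      exact (integrable_stableKernel hδ₀ hδ₁ hw).const_mul _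
    · refine ((integrableOn_weightZ_of_real lam ha y).norm.mul_const (stableMass δ)).congr ?_
      filter_upwards [ae_restrict_mem measurableSet_Ioi] with w hw
      simp only [norm_mul]
      rw [integral_const_mul]
      simp only [Real.norm_eq_abs]
      rw [integral_abs_stableKernel hδ₀ hw, stableMass]

theorem abs_integral_weightZ_mul_subord_le {a lam δ τ : ℝ} (ha : 0 < a) (hlam : 0 < lam)
    (hδ₀ : 0 < δ) (hδ₁ : δ < 1) (hτ : 0 < τ) {h : ℝ → ℝ} (hm : Measurable h) {B : ℝ}
    (hB : ∀ r, |h r| ≤ B) (t y : ℝ) :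
    |∫ w in Ioi (0 : ℝ), weightZ a lam y w * subord δ h (τ + w) t| ≤ B * stableMass δ := by
  have hB0 : 0 ≤ B * stableMass δ :=
    mul_nonneg ((abs_nonneg _).trans (hB 0)) (stableMass_nonneg δ)
  have h1 : ∀ w ∈ Ioi (0 : ℝ), |weightZ a lam y w * subord δ h (τ + w) t|
      ≤ |weightZ a lam y w| * (B * stableMass δ) := by
    intro w hw
    rw [abs_mul]
    gcongr
    exact abs_subord_le hδ₀ hδ₁ (add_pos hτ hw) hm hB t
  refine (norm_integral_le_of_norm_le (f := fun w => weightZ a lam y w * subord δ h (τ + w) t)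
    ((integrableOn_weightZ_of_real lam ha y).abs.mul_const _)
    ((ae_restrict_mem measurableSet_Ioi).mono h1)).trans ?_
  rw [integral_mul_const]
  exact mul_le_of_le_one_left hB0 (integral_abs_weightZ_le ha hlam y)

theorem lconv_eq_integral {f g F G : ℝ → ℝ} (hF : ∀ s, 0 < s → f s = F s)
    (hF₀ : ∀ s ≤ 0, F s = 0) (hG : ∀ s, 0 < s → g s = G s) (hG₀ : ∀ s ≤ 0, G s = 0)
    {t : ℝ} (ht : 0 ≤ t) : lconv f g t = ∫ s, F (t - s) * G s := by
  rw [lconv, intervalIntegral.integral_of_le ht, integral_Ioc_eq_integral_Ioo,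
    ← setIntegral_eq_integral_of_forall_compl_eq_zero (s := Ioo 0 t)
      (f := fun s => F (t - s) * G s)]
  · refine setIntegral_congr_fun measurableSet_Ioo fun s hs => ?_
    rw [hF _ (sub_pos.2 hs.2), hG _ hs.1]
  · intro s hs
    rcases le_or_gt s 0 with h0 | h0
    · rw [hG₀ s h0, mul_zero]
    · rw [hF₀ _ (sub_nonpos.2 (not_lt.1 fun h => hs ⟨h0, h⟩)), zero_mul]

theorem weightZ_mul_stableKernel_eq {a β : ℝ} (ha : 0 < a) (lam y : ℝ) {w s : ℝ} (hw : 0 < w)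
    (hs : 0 < s) :
    weightZ a lam y w * stableKernel (2 * β) w s = exp (lam * y / (2 * a ^ 2)) *
      (β * y / (a * √π * s ^ (2 * β + 1)) * (w ^ (-(1 / 2 : ℝ)) *
        exp (-y ^ 2 / (4 * a ^ 2 * w) - lam ^ 2 * w / (4 * a ^ 2)) *
          Mwr (w / s ^ (2 * β)) (2 * β))) := by
  have hs' : 0 < s ^ (2 * β + 1) := rpow_pos_of_pos hs _
  have h1 : w ^ (-(1 / 2 : ℝ)) = w ^ (-(3 / 2 : ℝ)) * w := by
    rw [← rpow_add_one hw.ne']; norm_num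
  have h2 : exp (-y ^ 2 / (4 * a ^ 2 * w) - lam ^ 2 * w / (4 * a ^ 2))
      = exp (-(lam ^ 2 / (4 * a ^ 2) * w)) * exp (-(y / a) ^ 2 / (4 * w)) := by
    rw [← exp_add]
    congr 1
    field_simp
    ring
  have hπ : 0 < √π := sqrt_pos.2 pi_pos
  rw [weightZ, levy, stableKernel, if_pos hs, stableDensity, h1, h2]
  field_simp

/-- The average of the subordinated data defining the solution. -/
noncomputable def lumped (a lam α γ δ : ℝ) (h : ℝ → ℝ) (x z t : ℝ) : ℝ :=
  ∫ τ in Ioi (0 : ℝ), weightX γ x τ *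
    ∫ w in Ioi (0 : ℝ), weightZ a lam (z + α * τ) w * subord δ h (τ + w) t

theorem exp_mul_double_lconv_eq {a lam α β : ℝ} (ha : 0 < a) (hβ₁ : 0 < β) (hβ₂ : β < 1 / 2)
    {h hb : ℝ → ℝ} (hm : Measurable hb) {B : ℝ} (hB : ∀ r, |hb r| ≤ B)
    (hneg : ∀ r ≤ 0, hb r = 0) (hpos : ∀ r, 0 < r → h r = hb r)
    {f₁ : ℝ → ℝ → ℝ}
    (hf₁ : ∀ τ s : ℝ, f₁ τ s =
      (2 * β * τ / s ^ (2 * β + 1)) * Mwr (τ / s ^ (2 * β)) (2 * β))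
    {f₂ : ℝ → ℝ → ℝ → ℝ}
    (hf₂ : ∀ τ z s : ℝ, f₂ τ z s =
      (β * (z + α * τ) / (a * Real.sqrt π * s ^ (2 * β + 1))) *
        ∫ w in Ioi (0 : ℝ), w ^ (-(1 / 2 : ℝ)) *
          Real.exp (-(z + α * τ) ^ 2 / (4 * a ^ 2 * w) - lam ^ 2 * w / (4 * a ^ 2)) *
          Mwr (w / s ^ (2 * β)) (2 * β)) {τ t : ℝ} (hτ : 0 < τ) (ht : 0 ≤ t) (z : ℝ) :
    exp (lam * (z + α * τ) / (2 * a ^ 2)) * lconv (lconv (f₁ τ) h) (f₂ τ z) t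
      = ∫ w in Ioi (0 : ℝ), weightZ a lam (z + α * τ) w * subord (2 * β) hb (τ + w) t := by
  set y := z + α * τ with hy
  have hin : ∀ r, 0 < r → lconv (f₁ τ) h r = subord (2 * β) hb τ r := by
    intro r hr
    rw [lconv_eq_integral (F := stableKernel (2 * β) τ) (G := hb) ?_
      (fun s hs => stableKernel_of_nonpos _ _ hs) hpos hneg hr.le, subord]
    · simp only [mul_comm]
    · intro s hs
      rw [hf₁, stableKernel, if_pos hs, stableDensity]
  rw [lconv_eq_integral (F := subord (2 * β) hb τ)
    (G := fun s => (exp (lam * y / (2 * a ^ 2)))⁻¹ *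
      ∫ w in Ioi (0 : ℝ), weightZ a lam y w * stableKernel (2 * β) w s) hin
    (fun s hs => subord_eq_zero _ _ (fun r hr => hneg r hr.le) hs) ?_ ?_ ht,
    ← integral_subord_mul_integral_weightZ ha (by linarith) (by linarith) hτ hm hB,
    ← integral_const_mul]
  · refine integral_congr_ae (Eventually.of_forall fun s => ?_)
    have := (exp_pos (lam * y / (2 * a ^ 2))).ne'
    simp only
    field_simp
  · intro s hs
    rw [setIntegral_congr_fun measurableSet_Ioi
      (fun w hw => weightZ_mul_stableKernel_eq (β := β) ha lam y hw hs), integral_const_mul,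
      integral_const_mul, hf₂, inv_mul_cancel_left₀ (exp_pos _).ne']
  · intro s hs
    simp [stableKernel_of_nonpos _ _ hs]

theorem mul_integral_eq_lumped {a lam α γ β : ℝ} (A : ℝ) (ha : 0 < a) (hβ₁ : 0 < β)
    (hβ₂ : β < 1 / 2) {h hb : ℝ → ℝ} (hm : Measurable hb) {B : ℝ} (hB : ∀ r, |hb r| ≤ B)
    (hneg : ∀ r ≤ 0, hb r = 0) (hpos : ∀ r, 0 < r → h r = hb r)
    {f₁ : ℝ → ℝ → ℝ}
    (hf₁ : ∀ τ s : ℝ, f₁ τ s =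
      (2 * β * τ / s ^ (2 * β + 1)) * Mwr (τ / s ^ (2 * β)) (2 * β))
    {f₂ : ℝ → ℝ → ℝ → ℝ}
    (hf₂ : ∀ τ z s : ℝ, f₂ τ z s =
      (β * (z + α * τ) / (a * Real.sqrt π * s ^ (2 * β + 1))) *
        ∫ w in Ioi (0 : ℝ), w ^ (-(1 / 2 : ℝ)) *
          Real.exp (-(z + α * τ) ^ 2 / (4 * a ^ 2 * w) - lam ^ 2 * w / (4 * a ^ 2)) *
          Mwr (w / s ^ (2 * β)) (2 * β)) {t : ℝ} (ht : 0 ≤ t) (x z : ℝ) :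
    (A * Real.exp (γ * x) / (2 * Real.sqrt π)) *
        ∫ τ in Ioi (0 : ℝ), x * τ ^ (-(3 / 2 : ℝ)) *
          Real.exp (-x ^ 2 / (4 * τ) - γ ^ 2 * τ) *
          Real.exp (lam * (z + α * τ) / (2 * a ^ 2)) * lconv (lconv (f₁ τ) h) (f₂ τ z) t
      = A * lumped a lam α γ (2 * β) hb x z t := by
  rw [lumped, ← integral_const_mul, ← integral_const_mul]
  refine setIntegral_congr_fun measurableSet_Ioi fun τ hτ => ?_
  rw [← exp_mul_double_lconv_eq ha hβ₁ hβ₂ hm hB hneg hpos hf₁ hf₂ hτ ht z, weightX, levy,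
    sub_eq_add_neg, exp_add]
  have hπ : 0 < √π := sqrt_pos.2 pi_pos
  field_simp

/-- The symbol of the data `h` on `[0, t]`. -/
noncomputable def dataSymb (h : ℝ → ℝ) (t ξ : ℝ) : ℂ :=
  ∫ r in (0 : ℝ)..t, (h r : ℂ) * Complex.exp (vline ξ * (t - r : ℝ))

@[fun_prop]
theorem continuous_dataSymb {h : ℝ → ℝ} (hc : Continuous h) (t : ℝ) :
    Continuous (dataSymb h t) := by
  refine intervalIntegral.continuous_parametric_intervalIntegral_of_continuous' ?_ 0 t
  fun_prop

theorem norm_dataSymb_le {h : ℝ → ℝ} {B : ℝ} (hB : ∀ r, |h r| ≤ B) {t : ℝ} (ht : 0 ≤ t) (ξ : ℝ) :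
    ‖dataSymb h t ξ‖ ≤ B * exp t * t := by
  have h1 : ∀ r ∈ uIoc 0 t, ‖(h r : ℂ) * Complex.exp (vline ξ * (t - r : ℝ))‖ ≤ B * exp t := by
    intro r hr
    rw [uIoc_of_le ht] at hr
    rw [norm_mul, norm_exp_vline_mul, Complex.norm_real, Real.norm_eq_abs]
    have := hB r
    have := (abs_nonneg _).trans this
    gcongr
    linarith [hr.1]
  simpa [dataSymb, abs_of_nonneg ht] using intervalIntegral.norm_integral_le_of_norm_le_const h1

theorem subord_eq_integral_dataSymb {δ τ : ℝ} (hδ₀ : 0 < δ) (hδ₁ : δ < 1) (hτ : 0 < τ)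
    {h : ℝ → ℝ} (hc : Continuous h) (hneg : ∀ r ≤ 0, h r = 0) {s t : ℝ} (ht : 0 ≤ t)
    (hst : s ≤ t) :
    (subord δ h τ s : ℂ) = ∫ ξ, (Complex.exp (vline ξ * (s - t : ℝ)) * dataSymb h t ξ) *
      Complex.exp (-τ * symb δ ξ) := by
  have h1 : (subord δ h τ s : ℂ) = ∫ r in Ioc 0 t, ∫ ξ, (h r : ℂ) *
      Complex.exp (vline ξ * (s - r : ℝ)) * Complex.exp (-τ * symb δ ξ) := by
    rw [subord, ← setIntegral_eq_integral_of_forall_compl_eq_zero (s := Ioc 0 t),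
      ← integral_complex_ofReal]
    · refine setIntegral_congr_fun measurableSet_Ioc fun r _ => ?_
      simp only [mul_assoc]
      rw [Complex.ofReal_mul, stableKernel_eq_integral_vline hδ₀ hδ₁ hτ, ← integral_const_mul]
      rfl
    · intro r hr
      rcases le_or_gt r 0 with h0 | h0
      · rw [hneg r h0, zero_mul]
      · have : t < r := not_le.1 fun h => hr ⟨h0, h⟩
        rw [stableKernel_of_nonpos δ τ (by linarith), mul_zero]
  rw [h1, integral_integral_swap]
  · refine integral_congr_ae (Eventually.of_forall fun ξ => ?_)
    simp only
    rw [integral_mul_const, dataSymb, intervalIntegral.integral_of_le ht, ← integral_const_mul]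
    congr 1
    refine integral_congr_ae (Eventually.of_forall fun r => ?_)
    simp only
    rw [mul_left_comm, ← Complex.exp_add]
    congr 2
    push_cast
    ring
  · have hi := integrable_exp_neg_mul_vline_cpow hδ₀ hδ₁ hτ
    have hsy := continuous_symb (δ := δ)
    have hb : IntegrableOn (fun r => |h r| * exp (s - r)) (Ioc 0 t) :=
      (by fun_prop : Continuous fun r => |h r| * exp (s - r)).integrableOn_Ioc
    refine (hb.mul_prod hi.norm).mono' ?_ (Eventually.of_forall fun z => ?_)
    · refine Continuous.aestronglyMeasurable ?_
      have : Continuous fun z : ℝ × ℝ => symb δ z.2 := hsy.comp continuous_snd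
      simp only [Function.uncurry_def]
      fun_prop
    · simp only [Function.uncurry_def]
      rw [norm_mul, norm_mul, norm_exp_vline_mul, Complex.norm_real, Real.norm_eq_abs]
      rfl

theorem lumped_eq_integral_dataSymb {a lam α δ : ℝ} (ha : 0 < a) (hlam : 0 < lam) (hα : 0 < α)
    (hδ₀ : 0 < δ) (hδ₁ : δ < 1) (γ : ℝ) {h : ℝ → ℝ} (hc : Continuous h) {B : ℝ}
    (hB : ∀ r, |h r| ≤ B) (hneg : ∀ r ≤ 0, h r = 0) {s t : ℝ} (ht : 0 ≤ t) (hst : s ≤ t)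
    {x z : ℝ} (hx : 0 < x) (hz : 0 ≤ z) :
    (lumped a lam α γ δ h x z s : ℂ) = ∫ ξ, Complex.exp (vline ξ * (s - t : ℝ)) *
      (dataSymb h t ξ * solSymb a lam α γ δ x z ξ) := by
  have hH : Continuous fun ξ => Complex.exp (vline ξ * (s - t : ℝ)) * dataSymb h t ξ := by
    fun_prop
  have hHB : ∀ ξ, ‖Complex.exp (vline ξ * (s - t : ℝ)) * dataSymb h t ξ‖
      ≤ (exp (s - t) * (B * exp t * t)) * ‖vline ξ‖ ^ 0 := by
    intro ξ
    rw [norm_mul, norm_exp_vline_mul, pow_zero, mul_one]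
    gcongr
    exact norm_dataSymb_le hB ht ξ
  simp only [← mul_assoc]
  rw [← integral_weightX_mul_preSol ha hlam hα hδ₀ hδ₁ hH.aestronglyMeasurable hHB γ hx hz,
    lumped, ← integral_complex_ofReal]
  refine setIntegral_congr_fun measurableSet_Ioi fun τ hτ => ?_
  have hτ : 0 < τ := hτ
  rw [← integral_weightZ_mul_integral ha hδ₀ hδ₁ hH.aestronglyMeasurable hHB hτ (by positivity),
    Complex.ofReal_mul, ← integral_complex_ofReal]
  congr 1
  refine setIntegral_congr_fun measurableSet_Ioi fun w hw => ?_
  have hw : 0 < w := hw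
  rw [Complex.ofReal_mul, subord_eq_integral_dataSymb hδ₀ hδ₁ (by positivity) hc hneg ht hst]
  
theorem lumped_eq_zero (a lam α γ δ : ℝ) {h : ℝ → ℝ} (hneg : ∀ r ≤ 0, h r = 0) (x z : ℝ) {t : ℝ}
    (ht : t ≤ 0) : lumped a lam α γ δ h x z t = 0 := by
  simp [lumped, subord_eq_zero δ _ (fun r hr => hneg r (le_of_lt hr)) ht]

theorem integrableOn_rpow_mul_exp_neg {s b : ℝ} (hs : -1 < s) (hb : 0 < b) :
    IntegrableOn (fun σ : ℝ => σ ^ s * exp (-b * σ)) (Ioi 0) := by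
  simpa using integrableOn_rpow_mul_exp_neg_mul_rpow hs one_pos hb

theorem norm_ofReal_mul_exp_neg_mul (c σ : ℝ) (p : ℂ) :
    ‖(c : ℂ) * Complex.exp (-p * σ)‖ = |c| * exp (-p.re * σ) := by
  rw [norm_mul, Complex.norm_real, Real.norm_eq_abs, Complex.norm_exp, Complex.re_mul_ofReal,
    Complex.neg_re]

theorem integrableOn_rpow_mul_exp_neg_complex {s : ℝ} (hs : -1 < s) {p : ℂ} (hp : 0 < p.re) :
    IntegrableOn (fun σ : ℝ => ((σ ^ s : ℝ) : ℂ) * Complex.exp (-p * σ)) (Ioi 0) := by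
  refine (integrableOn_rpow_mul_exp_neg hs hp).mono'
    (by fun_prop : Measurable _).aestronglyMeasurable ?_
  filter_upwards [ae_restrict_mem measurableSet_Ioi] with σ hσ
  rw [norm_ofReal_mul_exp_neg_mul, abs_of_nonneg (rpow_nonneg (le_of_lt hσ) _)]

theorem differentiableAt_integral_rpow_mul_exp {s : ℝ} (hs : -1 < s) {p : ℂ} (hp : 0 < p.re) :
    DifferentiableAt ℂ
      (fun q : ℂ => ∫ σ in Ioi (0 : ℝ), ((σ ^ s : ℝ) : ℂ) * Complex.exp (-q * σ)) p := by
  have hU : {q : ℂ | p.re / 2 < q.re} ∈ nhds p :=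
    (isOpen_lt continuous_const Complex.continuous_re).mem_nhds (by simp only [mem_ofPred_eq]; linarith)
  refine (hasDerivAt_integral_of_dominated_loc_of_deriv_le (μ := volume.restrict (Ioi 0))
    (F := fun q (σ : ℝ) => ((σ ^ s : ℝ) : ℂ) * Complex.exp (-q * σ))
    (F' := fun q (σ : ℝ) => ((σ ^ s : ℝ) : ℂ) * (Complex.exp (-q * σ) * -σ))
    (bound := fun σ => σ ^ (s + 1) * exp (-(p.re / 2) * σ)) hU ?_ ?_ ?_ ?_ ?_ ?_).2.differentiableAt
  · exact Eventually.of_forall fun q => (by fun_prop : Measurable _).aestronglyMeasurable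
  · exact integrableOn_rpow_mul_exp_neg_complex hs hp
  · exact (by fun_prop : Measurable _).aestronglyMeasurable
  · filter_upwards [ae_restrict_mem measurableSet_Ioi] with σ hσ q hq
    have hσ : 0 < σ := hσ
    have hq : p.re / 2 < q.re := hq
    rw [← mul_assoc, norm_mul, norm_ofReal_mul_exp_neg_mul, norm_neg, Complex.norm_real,
      Real.norm_of_nonneg hσ.le, abs_of_nonneg (rpow_nonneg hσ.le _), rpow_add_one hσ.ne']
    have : exp (-q.re * σ) ≤ exp (-(p.re / 2) * σ) := exp_le_exp.2 (by nlinarith)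
    have : σ ^ s * σ * exp (-q.re * σ) ≤ σ ^ s * σ * exp (-(p.re / 2) * σ) := by gcongr
    linarith
  · exact integrableOn_rpow_mul_exp_neg (by linarith) (by linarith)
  · refine Eventually.of_forall fun σ q _ => HasDerivAt.const_mul _ ?_
    refine HasDerivAt.cexp ?_
    simpa using (hasDerivAt_id q).neg.mul_const (σ : ℂ)

/-- The Laplace transform of a power, for complex frequency. -/
theorem integral_rpow_mul_exp_neg_complex {δ : ℝ} (hδ₁ : δ < 1) {p : ℂ}
    (hp : 0 < p.re) :
    ∫ σ in Ioi (0 : ℝ), ((σ ^ (-δ) : ℝ) : ℂ) * Complex.exp (-p * σ)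
      = Real.Gamma (1 - δ) * p ^ ((δ - 1 : ℝ) : ℂ) := by
  set U : Set ℂ := {q : ℂ | 0 < q.re} with hU
  have hUo : IsOpen U := isOpen_lt continuous_const Complex.continuous_re
  have hf : AnalyticOnNhd ℂ
      (fun q : ℂ => ∫ σ in Ioi (0 : ℝ), ((σ ^ (-δ) : ℝ) : ℂ) * Complex.exp (-q * σ)) U :=
    DifferentiableOn.analyticOnNhd (fun q hq =>
      (differentiableAt_integral_rpow_mul_exp (by linarith) hq).differentiableWithinAt) hUo
  have hg : AnalyticOnNhd ℂ
      (fun q : ℂ => (Real.Gamma (1 - δ) : ℂ) * q ^ ((δ - 1 : ℝ) : ℂ)) U := by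
    refine DifferentiableOn.analyticOnNhd (fun q hq => ?_) hUo
    have : DifferentiableAt ℂ (fun q : ℂ => q ^ ((δ - 1 : ℝ) : ℂ)) q :=
      (hasDerivAt_id q).cpow_const (Or.inl hq) |>.differentiableAt
    exact (this.const_mul _).differentiableWithinAt
  have hreal : ∀ r : ℝ, 0 < r →
      ∫ σ in Ioi (0 : ℝ), ((σ ^ (-δ) : ℝ) : ℂ) * Complex.exp (-(r : ℂ) * σ)
        = Real.Gamma (1 - δ) * (r : ℂ) ^ ((δ - 1 : ℝ) : ℂ) := by
    intro r hr
    have h1 := Real.integral_rpow_mul_exp_neg_mul_Ioi (a := 1 - δ) (by linarith) hr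
    rw [← Complex.ofReal_cpow hr.le, ← Complex.ofReal_mul, mul_comm,
      show r ^ (δ - 1) = (1 / r) ^ (1 - δ) by
        rw [one_div, inv_rpow hr.le, ← rpow_neg hr.le, neg_sub], ← h1, ← integral_complex_ofReal]
    refine integral_congr_ae (Eventually.of_forall fun σ => ?_)
    simp only
    rw [show 1 - δ - 1 = -δ by ring, Complex.ofReal_mul, Complex.ofReal_exp]
    push_cast
    ring_nf
  refine hf.eqOn_of_preconnected_of_frequently_eq hg
    (convex_halfSpace_re_gt 0).isPreconnected (z₀ := 1) (by simp [hU]) ?_ hp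
  have ht : Tendsto (fun n : ℕ => ((1 + 1 / ((n : ℝ) + 1) : ℝ) : ℂ)) atTop
      (nhdsWithin (1 : ℂ) {1}ᶜ) := by
    refine tendsto_nhdsWithin_iff.2 ⟨?_, Eventually.of_forall fun n => ?_⟩
    · have h2 := tendsto_one_div_add_atTop_nhds_zero_nat (𝕜 := ℝ) |>.const_add 1
      rw [add_zero] at h2
      have := (Complex.continuous_ofReal.tendsto 1).comp h2
      simpa [Function.comp_def] using this
    · have : (1 + 1 / ((n : ℝ) + 1)) ≠ 1 := by
        have : 0 < 1 / ((n : ℝ) + 1) := by positivity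
        linarith
      simpa only [mem_compl_iff, mem_singleton_iff, Complex.ofReal_eq_one] using this
  exact ht.frequently (Frequently.of_forall fun n => hreal _ (by positivity))

theorem hasDerivAt_integral_exp_vline {Φ : ℝ → ℂ} (hΦm : AEStronglyMeasurable Φ)
    (hΦ : Integrable fun ξ => ‖vline ξ‖ * ‖Φ ξ‖) {s T : ℝ} (hs : s < T) :
    HasDerivAt (fun s : ℝ => ∫ ξ, Complex.exp (vline ξ * (s - T : ℝ)) * Φ ξ)
      (∫ ξ, Complex.exp (vline ξ * (s - T : ℝ)) * (vline ξ * Φ ξ)) s := by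
  have hn : ∀ s' ∈ Iio T, ∀ ξ, ‖Complex.exp (vline ξ * (s' - T : ℝ))‖ ≤ 1 := by
    intro s' hs' ξ
    rw [norm_exp_vline_mul]
    exact exp_le_one_iff.2 (sub_nonpos.2 (le_of_lt hs'))
  have hv : ∀ s : ℝ, AEStronglyMeasurable fun ξ => Complex.exp (vline ξ * (s - T : ℝ)) :=
    fun s => (by fun_prop : Continuous _).aestronglyMeasurable
  refine (hasDerivAt_integral_of_dominated_loc_of_deriv_le
    (F := fun (s : ℝ) ξ => Complex.exp (vline ξ * (s - T : ℝ)) * Φ ξ)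
    (F' := fun (s : ℝ) ξ => Complex.exp (vline ξ * (s - T : ℝ)) * (vline ξ * Φ ξ))
    (bound := fun ξ => ‖vline ξ‖ * ‖Φ ξ‖) (Iio_mem_nhds hs) ?_ ?_ ?_ ?_ hΦ ?_).2
  · exact Eventually.of_forall fun s => (hv s).mul hΦm
  · refine hΦ.mono' ((hv s).mul hΦm) (Eventually.of_forall fun ξ => ?_)
    rw [norm_mul]
    exact mul_le_mul_of_nonneg_right ((hn s hs ξ).trans (one_le_norm_vline ξ)) (norm_nonneg _)
  · exact (hv s).mul (continuous_vline.aestronglyMeasurable.mul hΦm)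
  · refine Eventually.of_forall fun ξ s' hs' => ?_
    rw [norm_mul, norm_mul]
    exact mul_le_of_le_one_left (by positivity) (hn s' hs' ξ)
  · refine Eventually.of_forall fun ξ s' _ => ?_
    rw [← mul_assoc]
    refine HasDerivAt.mul_const (HasDerivAt.cexp ?_) _
    simpa using (((hasDerivAt_id s').sub_const T).ofReal_comp).const_mul (vline ξ)

theorem ofReal_deriv_eq {U : ℝ → ℝ} {F : ℝ → ℂ} {F' : ℂ} {x : ℝ}
    (hU : ∀ᶠ y in nhds x, (U y : ℂ) = F y) (hF : HasDerivAt F F' x) :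
    ((deriv U x : ℝ) : ℂ) = F' := by
  have h1 : HasDerivAt (fun y => (U y : ℂ)) F' x := hF.congr_of_eventuallyEq hU
  have h2 : HasDerivAt U _ x := Complex.reCLM.hasFDerivAt.comp_hasDerivAt x h1
  exact (h2.differentiableAt.hasDerivAt.ofReal_comp).unique h1

/-- The Caputo derivative of a causal function given by its Fourier-Laplace representation. -/
theorem caputo_eq_integral {δ : ℝ} (hδ₁ : δ < 1) {v : ℝ → ℝ} {Φ : ℝ → ℂ}
    (hΦm : AEStronglyMeasurable Φ) (hΦ : Integrable fun ξ => ‖vline ξ‖ * ‖Φ ξ‖) {T : ℝ}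
    (hT : 0 < T) (hv : ∀ s ≤ T, (v s : ℂ) = ∫ ξ, Complex.exp (vline ξ * (s - T : ℝ)) * Φ ξ)
    (hv₀ : ∀ s ≤ 0, v s = 0) :
    (caputo δ v T : ℂ) = ∫ ξ, symb δ ξ * Φ ξ := by
  have hderiv : ∀ s, s < T →
      ((deriv v s : ℝ) : ℂ) = ∫ ξ, Complex.exp (vline ξ * (s - T : ℝ)) * (vline ξ * Φ ξ) := by
    intro s hs
    refine ofReal_deriv_eq ?_ (hasDerivAt_integral_exp_vline hΦm hΦ hs)
    filter_upwards [Iio_mem_nhds hs] with s' hs' using hv s' (le_of_lt hs')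
  have hderiv₀ : ∀ s < 0, deriv v s = 0 := by
    intro s hs
    have : v =ᶠ[nhds s] fun _ => 0 := by
      filter_upwards [Iio_mem_nhds hs] with s' hs' using hv₀ s' (le_of_lt hs')
    rw [this.deriv_eq, deriv_const]
  have h1 : ∫ s in (0 : ℝ)..T, deriv v s * (T - s) ^ (-δ)
      = ∫ σ in Ioi (0 : ℝ), deriv v (T - σ) * σ ^ (-δ) := by
    have := intervalIntegral.integral_comp_sub_left (a := 0) (b := T)
      (fun σ => deriv v (T - σ) * σ ^ (-δ)) T
    simp only [sub_sub_cancel, sub_self, sub_zero] at this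
    rw [this, intervalIntegral.integral_of_le hT.le]
    refine (setIntegral_eq_of_subset_of_ae_sdiff_eq_zero measurableSet_Ioi.nullMeasurableSet
      (fun σ hσ => hσ.1) (Eventually.of_forall fun σ hσ => ?_)).symm
    have : T < σ := not_le.1 fun h => hσ.2 ⟨hσ.1, h⟩
    rw [hderiv₀ _ (by linarith), zero_mul]
  have h2 : ((∫ σ in Ioi (0 : ℝ), deriv v (T - σ) * σ ^ (-δ) : ℝ) : ℂ)
      = ∫ ξ, ∫ σ in Ioi (0 : ℝ), (vline ξ * Φ ξ) *
        (((σ ^ (-δ) : ℝ) : ℂ) * Complex.exp (-vline ξ * σ)) := by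
    rw [← integral_complex_ofReal, integral_integral_swap]
    · refine setIntegral_congr_fun measurableSet_Ioi fun σ hσ => ?_
      have hσ : 0 < σ := hσ
      rw [Complex.ofReal_mul, hderiv _ (by linarith), ← integral_mul_const]
      refine integral_congr_ae (Eventually.of_forall fun ξ => ?_)
      simp only
      rw [show vline ξ * ((T - σ - T : ℝ) : ℂ) = -vline ξ * σ by push_cast; ring]
      ring
    · refine ((hΦ.mul_prod (integrableOn_rpow_mul_exp_neg (s := -δ) (by linarith) one_pos))).mono'
        ?_ ?_
      · refine (AEStronglyMeasurable.comp_fst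
          (continuous_vline.aestronglyMeasurable.mul hΦm)).mul ?_
        have : Measurable fun z : ℝ × ℝ => vline z.1 :=
          continuous_vline.measurable.comp measurable_fst
        exact (by fun_prop : Measurable _).aestronglyMeasurable
      · have hae : ∀ᵐ z : ℝ × ℝ ∂(volume.prod (volume.restrict (Ioi 0))), z.2 ∈ Ioi (0 : ℝ) :=
          Measure.quasiMeasurePreserving_snd.ae (ae_restrict_mem measurableSet_Ioi)
        filter_upwards [hae] with z hz
        have hz : 0 < z.2 := hz
        simp only [Function.uncurry_def]
        rw [norm_mul, norm_mul, norm_ofReal_mul_exp_neg_mul, vline_re,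
          abs_of_nonneg (rpow_nonneg hz.le _)]
  have hΓ : Real.Gamma (1 - δ) ≠ 0 := (Real.Gamma_pos_of_pos (by linarith)).ne'
  rw [caputo, h1, Complex.ofReal_mul, h2, ← integral_const_mul]
  refine integral_congr_ae (Eventually.of_forall fun ξ => ?_)
  simp only
  rw [integral_const_mul, integral_rpow_mul_exp_neg_complex hδ₁ (by rw [vline_re]; exact one_pos),
    symb]
  have h3 : vline ξ ^ (δ : ℂ) = vline ξ * vline ξ ^ ((δ - 1 : ℝ) : ℂ) := by
    conv_rhs => enter [1]; rw [← Complex.cpow_one (vline ξ)]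
    rw [← Complex.cpow_add _ _ (vline_ne_zero ξ)]
    push_cast
    congr 1
    ring
  have hΓ' : (Real.Gamma (1 - δ) : ℂ) ≠ 0 := by exact_mod_cast hΓ
  rw [h3, Complex.ofReal_div, Complex.ofReal_one]
  field_simp

/-- A measurable function of at most polynomial growth on the line `Re p = 1`. -/
def PolyGrowth (H : ℝ → ℂ) : Prop :=
  Measurable H ∧ ∃ (B : ℝ) (n : ℕ), ∀ ξ, ‖H ξ‖ ≤ B * ‖vline ξ‖ ^ n

theorem PolyGrowth.mul {G H : ℝ → ℂ} (hG : PolyGrowth G) (hH : PolyGrowth H) :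
    PolyGrowth fun ξ => G ξ * H ξ := by
  obtain ⟨hGm, B, n, hB⟩ := hG
  obtain ⟨hHm, C, m, hC⟩ := hH
  refine ⟨hGm.mul hHm, B * C, n + m, fun ξ => ?_⟩
  rw [norm_mul, pow_add]
  calc _ ≤ (B * ‖vline ξ‖ ^ n) * (C * ‖vline ξ‖ ^ m) :=
        mul_le_mul (hB ξ) (hC ξ) (norm_nonneg _) ((norm_nonneg _).trans (hB ξ))
    _ = _ := by ring

theorem polyGrowth_dataSymb {h : ℝ → ℝ} (hc : Continuous h) {B : ℝ} (hB : ∀ r, |h r| ≤ B) {t : ℝ}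
    (ht : 0 ≤ t) : PolyGrowth (dataSymb h t) :=
  ⟨(continuous_dataSymb hc t).measurable, B * exp t * t, 0, fun ξ => by
    simpa using norm_dataSymb_le hB ht ξ⟩

theorem polyGrowth_vline : PolyGrowth vline :=
  ⟨continuous_vline.measurable, 1, 1, fun ξ => by simp⟩

theorem polyGrowth_neg_rateZ {a : ℝ} (ha : 0 < a) (lam : ℝ) {δ : ℝ} (hδ₁ : δ < 1) :
    PolyGrowth fun ξ => -rateZ a lam (symb δ ξ) := by
  obtain ⟨C, -, hC⟩ := exists_norm_rate_symb_le ha lam 0 0 hδ₁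
  exact ⟨by fun_prop, C, 1, fun ξ => by simpa using (hC ξ).1⟩

theorem polyGrowth_sub_rateX {a : ℝ} (ha : 0 < a) (lam α γ : ℝ) {δ : ℝ} (hδ₁ : δ < 1) :
    PolyGrowth fun ξ => γ - rateX a lam α γ (symb δ ξ) := by
  obtain ⟨C, -, hC⟩ := exists_norm_rate_symb_le ha lam α γ hδ₁
  exact ⟨by fun_prop, C, 1, fun ξ => by simpa using (hC ξ).2⟩

theorem measurable_solSymb (a lam α γ δ x z : ℝ) : Measurable (solSymb a lam α γ δ x z) := by
  unfold solSymb; fun_prop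

theorem PolyGrowth.integrable_norm_mul_exp {δ : ℝ} (hδ₀ : 0 < δ) (hδ₁ : δ < 1) {H : ℝ → ℂ}
    (hH : PolyGrowth H) (γ : ℝ) {x : ℝ} (hx : 0 < x) :
    Integrable fun ξ => ‖H ξ‖ * exp ((γ - √(γ ^ 2 + (symb δ ξ).re)) * x) := by
  obtain ⟨hm, B, n, hB⟩ := hH
  exact integrable_mul_exp_rateX hδ₀ hδ₁ hm.norm.aestronglyMeasurable (by simpa using hB) γ hx

theorem PolyGrowth.integrable_mul_solSymb {a lam α δ : ℝ} (ha : 0 < a) (hlam : 0 < lam)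
    (hα : 0 < α) (hδ₀ : 0 < δ) (hδ₁ : δ < 1) {H : ℝ → ℂ} (hH : PolyGrowth H) (γ : ℝ) {x z : ℝ}
    (hx : 0 < x) (hz : 0 ≤ z) : Integrable fun ξ => H ξ * solSymb a lam α γ δ x z ξ := by
  refine (hH.integrable_norm_mul_exp hδ₀ hδ₁ γ hx).mono'
    (hH.1.mul (measurable_solSymb a lam α γ δ x z)).aestronglyMeasurable
    (Eventually.of_forall fun ξ => ?_)
  rw [norm_mul]
  gcongr
  exact norm_solSymb_le ha hlam hα hδ₀ hδ₁ γ hx.le hz ξ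

theorem hasDerivAt_integral_solSymb_fst {a lam α δ : ℝ} (ha : 0 < a) (hlam : 0 < lam)
    (hα : 0 < α) (hδ₀ : 0 < δ) (hδ₁ : δ < 1) {H : ℝ → ℂ} (hH : PolyGrowth H) {γ : ℝ}
    {x z : ℝ} (hx : 0 < x) (hz : 0 ≤ z) :
    HasDerivAt (fun x => ∫ ξ, H ξ * solSymb a lam α γ δ x z ξ)
      (∫ ξ, ((γ - rateX a lam α γ (symb δ ξ)) * H ξ) * solSymb a lam α γ δ x z ξ) x := by
  have hH' := (polyGrowth_sub_rateX ha lam α γ hδ₁).mul hH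
  refine (hasDerivAt_integral_of_dominated_loc_of_deriv_le
    (F := fun (x : ℝ) ξ => H ξ * solSymb a lam α γ δ x z ξ)
    (F' := fun (x : ℝ) ξ => ((γ - rateX a lam α γ (symb δ ξ)) * H ξ) * solSymb a lam α γ δ x z ξ)
    (bound := fun ξ => ‖(γ - rateX a lam α γ (symb δ ξ)) * H ξ‖ *
      exp ((|γ| - √(|γ| ^ 2 + (symb δ ξ).re)) * (x / 2))) (Ioi_mem_nhds (half_lt_self hx))
    ?_ ?_ ?_ ?_ (hH'.integrable_norm_mul_exp hδ₀ hδ₁ _ (half_pos hx)) ?_).2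
  · exact Eventually.of_forall fun x =>
      (hH.1.mul (measurable_solSymb a lam α γ δ x z)).aestronglyMeasurable
  · exact hH.integrable_mul_solSymb ha hlam hα hδ₀ hδ₁ γ hx hz
  · exact (hH'.1.mul (measurable_solSymb a lam α γ δ x z)).aestronglyMeasurable
  · refine Eventually.of_forall fun ξ x' hx' => ?_
    have hx' : x / 2 < x' := hx'
    rw [norm_mul]
    refine mul_le_mul_of_nonneg_left ((norm_solSymb_le ha hlam hα hδ₀ hδ₁ γ (by linarith) hz
      ξ).trans (exp_le_exp.2 ?_)) (norm_nonneg _)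
    have h1 : |γ| ≤ √(γ ^ 2 + (symb δ ξ).re) :=
      abs_le_sqrt (by linarith [symb_re_pos hδ₀ hδ₁ ξ])
    have h2 := le_abs_self γ
    rw [sq_abs]
    nlinarith
  · refine Eventually.of_forall fun ξ x' _ => ?_
    rw [mul_comm _ (H ξ), mul_assoc]
    refine HasDerivAt.const_mul _ ?_
    refine (HasDerivAt.cexp (f' := (γ - rateX a lam α γ (symb δ ξ))) ?_).congr_deriv (mul_comm _ _)
    simpa using ((Complex.ofRealCLM.hasDerivAt (x := x')).const_mul
      (γ - rateX a lam α γ (symb δ ξ))).sub_const (rateZ a lam (symb δ ξ) * z)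

theorem hasDerivAt_integral_solSymb_snd {a lam α δ : ℝ} (ha : 0 < a) (hlam : 0 < lam)
    (hα : 0 < α) (hδ₀ : 0 < δ) (hδ₁ : δ < 1) {H : ℝ → ℂ} (hH : PolyGrowth H) {γ : ℝ}
    {x z : ℝ} (hx : 0 < x) (hz : 0 < z) :
    HasDerivAt (fun z => ∫ ξ, H ξ * solSymb a lam α γ δ x z ξ)
      (∫ ξ, (-rateZ a lam (symb δ ξ) * H ξ) * solSymb a lam α γ δ x z ξ) z := by
  have hH' := (polyGrowth_neg_rateZ ha lam hδ₁).mul hH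
  refine (hasDerivAt_integral_of_dominated_loc_of_deriv_le
    (F := fun (z : ℝ) ξ => H ξ * solSymb a lam α γ δ x z ξ)
    (F' := fun (z : ℝ) ξ => (-rateZ a lam (symb δ ξ) * H ξ) * solSymb a lam α γ δ x z ξ)
    (bound := fun ξ => ‖-rateZ a lam (symb δ ξ) * H ξ‖ *
      exp ((γ - √(γ ^ 2 + (symb δ ξ).re)) * x)) (Ioi_mem_nhds hz)
    ?_ ?_ ?_ ?_ (hH'.integrable_norm_mul_exp hδ₀ hδ₁ _ hx) ?_).2
  · exact Eventually.of_forall fun z =>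
      (hH.1.mul (measurable_solSymb a lam α γ δ x z)).aestronglyMeasurable
  · exact hH.integrable_mul_solSymb ha hlam hα hδ₀ hδ₁ γ hx hz.le
  · exact (hH'.1.mul (measurable_solSymb a lam α γ δ x z)).aestronglyMeasurable
  · refine Eventually.of_forall fun ξ z' hz' => ?_
    rw [norm_mul]
    exact mul_le_mul_of_nonneg_left (norm_solSymb_le ha hlam hα hδ₀ hδ₁ γ hx.le (le_of_lt hz')
      ξ) (norm_nonneg _)
  · refine Eventually.of_forall fun ξ z' _ => ?_
    rw [mul_comm _ (H ξ), mul_assoc]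
    refine HasDerivAt.const_mul _ ?_
    refine (HasDerivAt.cexp (f' := (-rateZ a lam (symb δ ξ))) ?_).congr_deriv (mul_comm _ _)
    simpa using ((Complex.ofRealCLM.hasDerivAt (x := z')).const_mul
      (rateZ a lam (symb δ ξ))).const_sub ((γ - rateX a lam α γ (symb δ ξ)) * x)

theorem hasDerivAt_integral_of_dominated_at {X : Type*} [MeasurableSpace X] {μ : Measure X}
    {F : ℝ → X → ℂ} {F' : X → ℂ} {bound : X → ℝ} {x₀ : ℝ}
    (hF_meas : ∀ x, AEStronglyMeasurable (F x) μ) (hF_int : Integrable (F x₀) μ)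
    (hF'_meas : AEStronglyMeasurable F' μ)
    (h_lip : ∀ᵐ a ∂μ, ∀ x, ‖F x a - F x₀ a‖ ≤ bound a * ‖x - x₀‖) (hb : Integrable bound μ)
    (h_diff : ∀ᵐ a ∂μ, HasDerivAt (F · a) (F' a) x₀) :
    HasDerivAt (fun x => ∫ a, F x a ∂μ) (∫ a, F' a ∂μ) x₀ := by
  set L : ℂ →L[ℝ] ℝ →L[ℝ] ℂ := ContinuousLinearMap.smulRightL ℝ ℝ ℂ 1
  have hd : ∀ᵐ a ∂μ, HasFDerivAt (F · a) (L (F' a)) x₀ := h_diff.mono fun x hx => hx.hasFDerivAt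
  have hm : AEStronglyMeasurable (fun a => L (F' a)) μ :=
    L.continuous.comp_aestronglyMeasurable hF'_meas
  obtain ⟨hi, key⟩ := hasFDerivAt_integral_of_dominated_loc_of_lip' univ_mem
    (fun x _ => hF_meas x) hF_int hm (h_lip.mono fun a ha x _ => ha x) hb hd
  have h1 := key.hasDerivAt
  rw [ContinuousLinearMap.integral_apply hi] at h1
  simpa [L] using h1

theorem PolyGrowth.integrable_norm_mul_exp_symb {δ : ℝ} (hδ₀ : 0 < δ) (hδ₁ : δ < 1) {H : ℝ → ℂ}
    (hH : PolyGrowth H) {τ : ℝ} (hτ : 0 < τ) :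
    Integrable fun ξ => ‖H ξ‖ * exp (-τ * (symb δ ξ).re) := by
  obtain ⟨hm, B, n, hB⟩ := hH
  exact integrable_mul_exp_symb hδ₀ hδ₁ hm.norm.aestronglyMeasurable (by simpa using hB) hτ

theorem norm_preSol_le {a lam δ : ℝ} (ha : 0 < a) (hlam : 0 < lam) (hδ₀ : 0 < δ) (hδ₁ : δ < 1)
    {H : ℝ → ℂ} (hH : PolyGrowth H) {τ y : ℝ} (hτ : 0 < τ) (hy : 0 ≤ y) :
    ‖preSol a lam δ H τ y‖ ≤ ∫ ξ, ‖H ξ‖ * exp (-τ * (symb δ ξ).re) := by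
  refine norm_integral_le_of_norm_le (hH.integrable_norm_mul_exp_symb hδ₀ hδ₁ hτ)
    (Eventually.of_forall fun ξ => ?_)
  rw [norm_mul]
  gcongr
  exact norm_exp_neg_mul_symb_sub ha hlam hδ₀ hδ₁ τ hy ξ

theorem hasDerivAt_preSol {a lam δ : ℝ} (ha : 0 < a) (hlam : 0 < lam) (hδ₀ : 0 < δ) (hδ₁ : δ < 1)
    {H : ℝ → ℂ} (hH : PolyGrowth H) {τ y : ℝ} (hτ : 0 < τ) (hy : 0 < y) :
    HasDerivAt (preSol a lam δ H τ)
      (preSol a lam δ (fun ξ => -rateZ a lam (symb δ ξ) * H ξ) τ y) y := by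
  have hH' := (polyGrowth_neg_rateZ ha lam hδ₁).mul hH
  have hm : ∀ y : ℝ, Measurable fun ξ =>
      Complex.exp (-τ * symb δ ξ - rateZ a lam (symb δ ξ) * y) := fun y => by fun_prop
  refine (hasDerivAt_integral_of_dominated_loc_of_deriv_le
    (F := fun (y : ℝ) ξ => H ξ * Complex.exp (-τ * symb δ ξ - rateZ a lam (symb δ ξ) * y))
    (F' := fun (y : ℝ) ξ => (-rateZ a lam (symb δ ξ) * H ξ) *
      Complex.exp (-τ * symb δ ξ - rateZ a lam (symb δ ξ) * y))
    (bound := fun ξ => ‖-rateZ a lam (symb δ ξ) * H ξ‖ * exp (-τ * (symb δ ξ).re))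
    (Ioi_mem_nhds hy) ?_ ?_ ?_ ?_ (hH'.integrable_norm_mul_exp_symb hδ₀ hδ₁ hτ) ?_).2
  · exact Eventually.of_forall fun y => (hH.1.mul (hm y)).aestronglyMeasurable
  · refine (hH.integrable_norm_mul_exp_symb hδ₀ hδ₁ hτ).mono'
      (hH.1.mul (hm y)).aestronglyMeasurable (Eventually.of_forall fun ξ => ?_)
    rw [norm_mul]
    gcongr
    exact norm_exp_neg_mul_symb_sub ha hlam hδ₀ hδ₁ τ hy.le ξ
  · exact (hH'.1.mul (hm y)).aestronglyMeasurable
  · refine Eventually.of_forall fun ξ y' hy' => ?_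
    rw [norm_mul]
    exact mul_le_mul_of_nonneg_left (norm_exp_neg_mul_symb_sub ha hlam hδ₀ hδ₁ τ (le_of_lt hy') ξ)
      (norm_nonneg _)
  · refine Eventually.of_forall fun ξ y' _ => ?_
    rw [mul_comm _ (H ξ), mul_assoc]
    refine HasDerivAt.const_mul _ ?_
    refine (HasDerivAt.cexp (f' := -rateZ a lam (symb δ ξ)) ?_).congr_deriv (mul_comm _ _)
    simpa using ((Complex.ofRealCLM.hasDerivAt (x := y')).const_mul
      (rateZ a lam (symb δ ξ))).const_sub (-τ * symb δ ξ)

theorem norm_preSol_sub_le {a lam δ : ℝ} (ha : 0 < a) (hlam : 0 < lam) (hδ₀ : 0 < δ) (hδ₁ : δ < 1)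
    {H : ℝ → ℂ} (hH : PolyGrowth H) {τ y₁ y₂ : ℝ} (hτ : 0 < τ) (hy₁ : 0 < y₁) (hy₂ : 0 < y₂) :
    ‖preSol a lam δ H τ y₂ - preSol a lam δ H τ y₁‖
      ≤ (∫ ξ, ‖-rateZ a lam (symb δ ξ) * H ξ‖ * exp (-τ * (symb δ ξ).re)) * ‖y₂ - y₁‖ :=
  (convex_Ioi (0 : ℝ)).norm_image_sub_le_of_norm_hasDerivWithin_le
    (fun _ hy => (hasDerivAt_preSol ha hlam hδ₀ hδ₁ hH hτ hy).hasDerivWithinAt)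
    (fun _ hy => norm_preSol_le ha hlam hδ₀ hδ₁ ((polyGrowth_neg_rateZ ha lam hδ₁).mul hH) hτ
      (le_of_lt hy)) hy₁ hy₂

theorem integrableOn_weightX_div (γ : ℝ) {x : ℝ} (hx : 0 < x) :
    IntegrableOn (fun τ => weightX γ x τ / τ) (Ioi 0) := by
  refine ((integrableOn_levy (y := x / √2) (by positivity)).const_mul
    (exp (γ * x) * (8 * √2 / x ^ 2))).mono' (by fun_prop : Measurable _).aestronglyMeasurable ?_
  filter_upwards [ae_restrict_mem measurableSet_Ioi] with τ hτ
  have hτ : 0 < τ := hτ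
  rw [Real.norm_of_nonneg (div_nonneg (weightX_nonneg γ hx.le hτ.le) hτ.le), weightX]
  have h1 : exp (-(γ ^ 2 * τ)) ≤ 1 := exp_le_one_iff.2 (by have := sq_nonneg γ; nlinarith)
  have h2 := levy_div_le hx hτ
  have h3 : 0 ≤ levy x τ / τ := div_nonneg (levy_nonneg hx.le hτ.le) hτ.le
  calc _ = exp (γ * x) * (exp (-(γ ^ 2 * τ)) * (levy x τ / τ)) := by ring
    _ ≤ exp (γ * x) * (1 * (8 * √2 / x ^ 2 * levy (x / √2) τ)) := by gcongr
    _ = _ := by ring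

/-- Differentiation at the boundary `z = 0`, where the integrand may change its analytic form. -/
theorem hasDerivAt_integral_weightX_zero {a lam α δ : ℝ} (ha : 0 < a) (hlam : 0 < lam)
    (hα : 0 < α) (hδ₀ : 0 < δ) (hδ₁ : δ < 1) {H : ℝ → ℂ} (hH : PolyGrowth H) (γ : ℝ) {x : ℝ}
    (hx : 0 < x) {G : ℝ → ℝ → ℂ} (hG : ∀ τ y, 0 < τ → 0 < y → G τ y = preSol a lam δ H τ y)
    {M : ℝ} (hM : ∀ τ y, 0 < τ → ‖G τ y‖ ≤ M)
    (hGm : ∀ z, AEStronglyMeasurable (fun τ => G τ (z + α * τ)) (volume.restrict (Ioi 0))) :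
    HasDerivAt (fun z => ∫ τ in Ioi (0 : ℝ), (weightX γ x τ : ℂ) * G τ (z + α * τ))
      (∫ ξ, (-rateZ a lam (symb δ ξ) * H ξ) * solSymb a lam α γ δ x 0 ξ) 0 := by
  have hH' := (polyGrowth_neg_rateZ ha lam hδ₁).mul hH
  have hM0 : 0 ≤ M := (norm_nonneg _).trans (hM 1 1 one_pos)
  have hwm : Measurable fun τ => (weightX γ x τ : ℂ) := by fun_prop
  obtain ⟨B, n, hB⟩ := hH'.2
  rw [← integral_weightX_mul_preSol ha hlam hα hδ₀ hδ₁ hH'.1.aestronglyMeasurable hB γ hx le_rfl]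
  have hmem := ae_restrict_mem (μ := volume) (measurableSet_Ioi (a := (0 : ℝ)))
  refine hasDerivAt_integral_of_dominated_at
    (bound := fun τ => (∫ ξ, weightX γ x τ * (‖-rateZ a lam (symb δ ξ) * H ξ‖ *
      exp (-τ * (symb δ ξ).re))) + weightX γ x τ / τ * (2 * M / α))
    (fun z => hwm.aestronglyMeasurable.mul (hGm z)) ?_ ?_ ?_ ?_ ?_
  · refine ((integrableOn_weightX γ hx).mul_const M).mono'
      (hwm.aestronglyMeasurable.mul (hGm 0)) ?_
    filter_upwards [hmem] with τ hτ
    have hw := weightX_nonneg γ hx.le (le_of_lt hτ)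
    rw [norm_mul, Complex.norm_real, Real.norm_of_nonneg hw]
    gcongr
    exact hM _ _ hτ
  · refine (Measurable.mul hwm ?_).aestronglyMeasurable
    unfold preSol
    refine StronglyMeasurable.measurable (StronglyMeasurable.integral_prod_right'
      (f := fun p : ℝ × ℝ => (-rateZ a lam (symb δ p.2) * H p.2) *
        Complex.exp (-p.1 * symb δ p.2 - rateZ a lam (symb δ p.2) * ((0 + α * p.1 : ℝ) : ℂ))) ?_)
    have := hH.1
    exact (by fun_prop : Measurable _).stronglyMeasurable
  · filter_upwards [hmem] with τ hτ z
    have hτ : 0 < τ := hτ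
    have hw := weightX_nonneg γ hx.le hτ.le
    rw [← mul_sub, norm_mul, Complex.norm_real, Real.norm_of_nonneg hw, integral_const_mul]
    set Lτ := ∫ ξ, ‖-rateZ a lam (symb δ ξ) * H ξ‖ * exp (-τ * (symb δ ξ).re) with hLτ
    have hL0 : 0 ≤ Lτ := integral_nonneg fun ξ => by positivity
    have h0 : 0 < 0 + α * τ := by positivity
    have key : ‖G τ (z + α * τ) - G τ (0 + α * τ)‖ ≤ (Lτ + 2 * M / (α * τ)) * ‖z - 0‖ := by
      rcases lt_or_ge 0 (z + α * τ) with hy | hy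
      · rw [hG _ _ hτ hy, hG _ _ hτ h0]
        refine (norm_preSol_sub_le ha hlam hδ₀ hδ₁ hH hτ h0 hy).trans ?_
        rw [show z + α * τ - (0 + α * τ) = z - 0 by ring]
        gcongr
        exact le_add_of_nonneg_right (by positivity)
      · have h1 : ‖G τ (z + α * τ) - G τ (0 + α * τ)‖ ≤ 2 * M := by
          refine (norm_sub_le _ _).trans ?_
          linarith [hM τ (z + α * τ) hτ, hM τ (0 + α * τ) hτ]
        have h2 : α * τ ≤ ‖z - 0‖ := by
          rw [sub_zero, Real.norm_eq_abs]
          linarith [neg_abs_le z]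
        have h3 : 2 * M ≤ 2 * M / (α * τ) * ‖z - 0‖ := by
          rw [div_mul_eq_mul_div, le_div_iff₀ (by positivity)]
          gcongr
        nlinarith [mul_nonneg hL0 (norm_nonneg (z - 0))]
    calc _ ≤ weightX γ x τ * ((Lτ + 2 * M / (α * τ)) * ‖z - 0‖) := by gcongr
      _ = _ := by field_simp
  · refine Integrable.add ?_ ((integrableOn_weightX_div γ hx).mul_const _)
    exact (integrable_prod_weightX_mul_exp hδ₀ hδ₁ hH'.1.norm.aestronglyMeasurable (n := n)
      (B := B) (by simpa using hB) γ hx).integral_prod_left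
  · filter_upwards [hmem] with τ hτ
    have hτ : 0 < τ := hτ
    have h0 : 0 < 0 + α * τ := by positivity
    refine HasDerivAt.const_mul _ ?_
    have h1 := (hasDerivAt_preSol ha hlam hδ₀ hδ₁ hH hτ h0).comp_add_const 0 (α * τ)
    refine h1.congr_of_eventuallyEq ?_
    have : ∀ᶠ z : ℝ in nhds 0, 0 < z + α * τ :=
      (continuous_id.add continuous_const).continuousAt.eventually (lt_mem_nhds h0)
    filter_upwards [this] with z hz using hG _ _ hτ hz

theorem aestronglyMeasurable_integral_weightZ_mul_subord (a lam α z t : ℝ) {δ : ℝ} (hδ₀ : 0 < δ)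
    (hδ₁ : δ < 1) {h : ℝ → ℝ} (hm : Measurable h) :
    AEStronglyMeasurable (fun τ => ∫ w in Ioi (0 : ℝ), weightZ a lam (z + α * τ) w *
      subord δ h (τ + w) t) (volume.restrict (Ioi 0)) := by
  have h1 : Measurable fun p : ℝ × ℝ => weightZ a lam (z + α * p.1) p.2 *
      (if 0 < p.1 + p.2 then subord δ h (p.1 + p.2) t else 0) := by
    refine ((measurable_weightZ a lam).comp (g := fun p : ℝ × ℝ => weightZ a lam p.1 p.2)
      (f := fun p : ℝ × ℝ => (z + α * p.1, p.2)) (by fun_prop)).mul ?_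
    exact (measurable_subord hδ₀ hδ₁ hm).measurable.comp
      (by fun_prop : Measurable fun p : ℝ × ℝ => (p.1 + p.2, t))
  have h2 := (h1.stronglyMeasurable.integral_prod_right'
    (ν := volume.restrict (Ioi (0 : ℝ)))).aestronglyMeasurable (μ := volume.restrict (Ioi (0 : ℝ)))
  refine h2.congr ?_
  filter_upwards [ae_restrict_mem measurableSet_Ioi] with τ hτ
  refine setIntegral_congr_fun measurableSet_Ioi fun w hw => ?_
  rw [mem_Ioi] at hτ hw
  rw [if_pos (add_pos hτ hw)]

theorem lumped_eq_integral_solSymb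
    {a lam α δ : ℝ} (ha : 0 < a) (hlam : 0 < lam) (hα : 0 < α) (hδ₀ : 0 < δ) (hδ₁ : δ < 1)
    {γ : ℝ} {h : ℝ → ℝ} (hc : Continuous h) {B : ℝ} (hB : ∀ r, |h r| ≤ B) (hneg : ∀ r ≤ 0, h r = 0)
    {x z t : ℝ} (hx : 0 < x) (hz : 0 ≤ z) (ht : 0 ≤ t) :
    (lumped a lam α γ δ h x z t : ℂ) = ∫ ξ, dataSymb h t ξ * solSymb a lam α γ δ x z ξ := by
  simpa using lumped_eq_integral_dataSymb ha hlam hα hδ₀ hδ₁ γ hc hB hneg ht le_rfl hx hz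

theorem caputo_lumped
    {a lam α δ : ℝ} (ha : 0 < a) (hlam : 0 < lam) (hα : 0 < α) (hδ₀ : 0 < δ) (hδ₁ : δ < 1)
    {γ : ℝ} {h : ℝ → ℝ} (hc : Continuous h) {B : ℝ} (hB : ∀ r, |h r| ≤ B) (hneg : ∀ r ≤ 0, h r = 0)
    {x z t : ℝ} (hx : 0 < x) (hz : 0 ≤ z) (ht : 0 < t) :
    (caputo δ (lumped a lam α γ δ h x z) t : ℂ) =
      ∫ ξ, (symb δ ξ * dataSymb h t ξ) * solSymb a lam α γ δ x z ξ := by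
  have hH := polyGrowth_dataSymb hc hB ht.le
  rw [caputo_eq_integral hδ₁ (Φ := fun ξ => dataSymb h t ξ * solSymb a lam α γ δ x z ξ) _ _ ht
    (fun s hs => lumped_eq_integral_dataSymb ha hlam hα hδ₀ hδ₁ γ hc hB hneg ht.le hs hx hz)
    (fun s hs => lumped_eq_zero a lam α γ δ hneg x z hs)]
  · simp only [mul_assoc]
  · exact (hH.1.mul (measurable_solSymb a lam α γ δ x z)).aestronglyMeasurable
  · have := ((polyGrowth_vline.mul hH).integrable_mul_solSymb ha hlam hα hδ₀ hδ₁ γ hx hz).norm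
    simpa only [mul_assoc, norm_mul] using this

theorem deriv_lumped_snd
    {a lam α δ : ℝ} (ha : 0 < a) (hlam : 0 < lam) (hα : 0 < α) (hδ₀ : 0 < δ) (hδ₁ : δ < 1)
    {γ : ℝ} {h : ℝ → ℝ} (hc : Continuous h) {B : ℝ} (hB : ∀ r, |h r| ≤ B) (hneg : ∀ r ≤ 0, h r = 0)
    {x z t : ℝ} (hx : 0 < x) (hz : 0 < z) (ht : 0 ≤ t) :
    ((deriv (fun z => lumped a lam α γ δ h x z t) z : ℝ) : ℂ) =
      ∫ ξ, (-rateZ a lam (symb δ ξ) * dataSymb h t ξ) * solSymb a lam α γ δ x z ξ := by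
  refine ofReal_deriv_eq ?_ (hasDerivAt_integral_solSymb_snd ha hlam hα hδ₀ hδ₁
    (polyGrowth_dataSymb hc hB ht) hx hz)
  filter_upwards [Ioi_mem_nhds hz] with y hy
  exact lumped_eq_integral_solSymb ha hlam hα hδ₀ hδ₁ hc hB hneg hx (le_of_lt hy) ht

theorem deriv_deriv_lumped_snd
    {a lam α δ : ℝ} (ha : 0 < a) (hlam : 0 < lam) (hα : 0 < α) (hδ₀ : 0 < δ) (hδ₁ : δ < 1)
    {γ : ℝ} {h : ℝ → ℝ} (hc : Continuous h) {B : ℝ} (hB : ∀ r, |h r| ≤ B) (hneg : ∀ r ≤ 0, h r = 0)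
    {x z t : ℝ} (hx : 0 < x) (hz : 0 < z) (ht : 0 ≤ t) :
    ((deriv (deriv fun z => lumped a lam α γ δ h x z t) z : ℝ) : ℂ) =
      ∫ ξ, (-rateZ a lam (symb δ ξ) * (-rateZ a lam (symb δ ξ) * dataSymb h t ξ)) *
        solSymb a lam α γ δ x z ξ := by
  refine ofReal_deriv_eq ?_ (hasDerivAt_integral_solSymb_snd ha hlam hα hδ₀ hδ₁
    ((polyGrowth_neg_rateZ ha lam hδ₁).mul (polyGrowth_dataSymb hc hB ht)) hx hz)
  filter_upwards [Ioi_mem_nhds hz] with y hy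
  exact deriv_lumped_snd ha hlam hα hδ₀ hδ₁ hc hB hneg hx hy ht

theorem deriv_lumped_fst
    {a lam α δ : ℝ} (ha : 0 < a) (hlam : 0 < lam) (hα : 0 < α) (hδ₀ : 0 < δ) (hδ₁ : δ < 1)
    {γ : ℝ} {h : ℝ → ℝ} (hc : Continuous h) {B : ℝ} (hB : ∀ r, |h r| ≤ B) (hneg : ∀ r ≤ 0, h r = 0)
    {x z t : ℝ} (hx : 0 < x) (hz : 0 ≤ z) (ht : 0 ≤ t) :
    ((deriv (fun x => lumped a lam α γ δ h x z t) x : ℝ) : ℂ) =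
      ∫ ξ, ((γ - rateX a lam α γ (symb δ ξ)) * dataSymb h t ξ) * solSymb a lam α γ δ x z ξ := by
  refine ofReal_deriv_eq ?_ (hasDerivAt_integral_solSymb_fst ha hlam hα hδ₀ hδ₁
    (polyGrowth_dataSymb hc hB ht) hx hz)
  filter_upwards [Ioi_mem_nhds hx] with y hy
  exact lumped_eq_integral_solSymb ha hlam hα hδ₀ hδ₁ hc hB hneg hy hz ht

theorem deriv_deriv_lumped_fst
    {a lam α δ : ℝ} (ha : 0 < a) (hlam : 0 < lam) (hα : 0 < α) (hδ₀ : 0 < δ) (hδ₁ : δ < 1)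
    {γ : ℝ} {h : ℝ → ℝ} (hc : Continuous h) {B : ℝ} (hB : ∀ r, |h r| ≤ B) (hneg : ∀ r ≤ 0, h r = 0)
    {x z t : ℝ} (hx : 0 < x) (hz : 0 ≤ z) (ht : 0 ≤ t) :
    ((deriv (deriv fun x => lumped a lam α γ δ h x z t) x : ℝ) : ℂ) =
      ∫ ξ, ((γ - rateX a lam α γ (symb δ ξ)) * ((γ - rateX a lam α γ (symb δ ξ)) *
        dataSymb h t ξ)) * solSymb a lam α γ δ x z ξ := by
  refine ofReal_deriv_eq ?_ (hasDerivAt_integral_solSymb_fst ha hlam hα hδ₀ hδ₁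
    ((polyGrowth_sub_rateX ha lam α γ hδ₁).mul (polyGrowth_dataSymb hc hB ht)) hx hz)
  filter_upwards [Ioi_mem_nhds hx] with y hy
  exact deriv_lumped_fst ha hlam hα hδ₀ hδ₁ hc hB hneg hy hz ht

theorem deriv_lumped_snd_zero
    {a lam α δ : ℝ} (ha : 0 < a) (hlam : 0 < lam) (hα : 0 < α) (hδ₀ : 0 < δ) (hδ₁ : δ < 1)
    {γ : ℝ} {h : ℝ → ℝ} (hc : Continuous h) {B : ℝ} (hB : ∀ r, |h r| ≤ B) (hneg : ∀ r ≤ 0, h r = 0)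
    {x t : ℝ} (hx : 0 < x) (ht : 0 ≤ t) :
    ((deriv (fun z => lumped a lam α γ δ h x z t) 0 : ℝ) : ℂ) =
      ∫ ξ, (-rateZ a lam (symb δ ξ) * dataSymb h t ξ) * solSymb a lam α γ δ x 0 ξ := by
  have hH := polyGrowth_dataSymb hc hB ht
  obtain ⟨D, n, hD⟩ := hH.2
  refine ofReal_deriv_eq ?_ (hasDerivAt_integral_weightX_zero ha hlam hα hδ₀ hδ₁ hH γ hx
    (G := fun τ y => ((∫ w in Ioi (0 : ℝ), weightZ a lam y w * subord δ h (τ + w) t : ℝ) : ℂ))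
    (M := B * stableMass δ) ?_ ?_ ?_)
  · refine Eventually.of_forall fun y => ?_
    rw [lumped, ← integral_complex_ofReal]
    simp only [Complex.ofReal_mul]
  · intro τ y hτ hy
    rw [← integral_weightZ_mul_integral ha hδ₀ hδ₁ hH.1.aestronglyMeasurable hD hτ hy,
      ← integral_complex_ofReal]
    refine setIntegral_congr_fun measurableSet_Ioi fun w hw => ?_
    rw [mem_Ioi] at hw
    rw [Complex.ofReal_mul,
      subord_eq_integral_dataSymb hδ₀ hδ₁ (add_pos hτ hw) hc hneg ht le_rfl]
    simp
  · intro τ y hτ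
    rw [Complex.norm_real]
    exact abs_integral_weightZ_mul_subord_le ha hlam hδ₀ hδ₁ hτ hc.measurable hB t y
  · intro z
    exact Complex.continuous_ofReal.comp_aestronglyMeasurable
      (aestronglyMeasurable_integral_weightZ_mul_subord a lam α z t hδ₀ hδ₁ hc.measurable)

/-- The lumped solution satisfies the fractional heat equation in the open quadrant. -/
theorem caputo_lumped_eq
    {a lam α δ : ℝ} (ha : 0 < a) (hlam : 0 < lam) (hα : 0 < α) (hδ₀ : 0 < δ) (hδ₁ : δ < 1)
    {γ : ℝ} {h : ℝ → ℝ} (hc : Continuous h) {B : ℝ} (hB : ∀ r, |h r| ≤ B) (hneg : ∀ r ≤ 0, h r = 0)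
    {x z t : ℝ} (hx : 0 < x) (hz : 0 < z) (ht : 0 < t) :
    caputo δ (lumped a lam α γ δ h x z) t =
      a ^ 2 * deriv (deriv fun z => lumped a lam α γ δ h x z t) z -
        lam * deriv (fun z => lumped a lam α γ δ h x z t) z := by
  apply Complex.ofReal_injective
  have hH := polyGrowth_dataSymb hc hB ht.le
  have hk := polyGrowth_neg_rateZ (δ := δ) ha lam hδ₁
  push_cast
  rw [caputo_lumped ha hlam hα hδ₀ hδ₁ hc hB hneg hx hz.le ht,
    deriv_deriv_lumped_snd ha hlam hα hδ₀ hδ₁ hc hB hneg hx hz ht.le,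
    deriv_lumped_snd ha hlam hα hδ₀ hδ₁ hc hB hneg hx hz ht.le, ← integral_const_mul,
    ← integral_const_mul, ← integral_sub]
  · refine integral_congr_ae (Eventually.of_forall fun ξ => ?_)
    dsimp only
    linear_combination (-(dataSymb h t ξ * solSymb a lam α γ δ x z ξ)) *
      rateZ_equation ha lam (symb δ ξ)
  · exact ((hk.mul (hk.mul hH)).integrable_mul_solSymb ha hlam hα hδ₀ hδ₁ γ hx hz.le).const_mul _
  · exact ((hk.mul hH).integrable_mul_solSymb ha hlam hα hδ₀ hδ₁ γ hx hz.le).const_mul _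

/-- The lumped solution satisfies the dynamic boundary condition on `z = 0`. -/
theorem caputo_lumped_zero_eq
    {a lam α δ : ℝ} (ha : 0 < a) (hlam : 0 < lam) (hα : 0 < α) (hδ₀ : 0 < δ) (hδ₁ : δ < 1)
    {γ : ℝ} {h : ℝ → ℝ} (hc : Continuous h) {B : ℝ} (hB : ∀ r, |h r| ≤ B) (hneg : ∀ r ≤ 0, h r = 0)
    {x t : ℝ} (hx : 0 < x) (ht : 0 < t) :
    caputo δ (lumped a lam α γ δ h x 0) t =
      deriv (deriv fun x => lumped a lam α γ δ h x 0 t) x -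
        2 * γ * deriv (fun x => lumped a lam α γ δ h x 0 t) x +
        α * deriv (fun z => lumped a lam α γ δ h x z t) 0 := by
  apply Complex.ofReal_injective
  have hH := polyGrowth_dataSymb hc hB ht.le
  have hk := polyGrowth_neg_rateZ (δ := δ) ha lam hδ₁
  have hm := polyGrowth_sub_rateX (δ := δ) ha lam α γ hδ₁
  push_cast
  have i₁ := (hm.mul (hm.mul hH)).integrable_mul_solSymb ha hlam hα hδ₀ hδ₁ γ hx le_rfl
  have i₂ := ((hm.mul hH).integrable_mul_solSymb ha hlam hα hδ₀ hδ₁ γ hx le_rfl).const_mul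
    (2 * γ : ℂ)
  have i₃ := ((hk.mul hH).integrable_mul_solSymb ha hlam hα hδ₀ hδ₁ γ hx le_rfl).const_mul (α : ℂ)
  rw [caputo_lumped ha hlam hα hδ₀ hδ₁ hc hB hneg hx le_rfl ht,
    deriv_deriv_lumped_fst ha hlam hα hδ₀ hδ₁ hc hB hneg hx le_rfl ht.le,
    deriv_lumped_fst ha hlam hα hδ₀ hδ₁ hc hB hneg hx le_rfl ht.le,
    deriv_lumped_snd_zero ha hlam hα hδ₀ hδ₁ hc hB hneg hx ht.le, ← integral_const_mul,
    ← integral_const_mul, ← integral_sub i₁ i₂, ← integral_add _ i₃]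
  · refine integral_congr_ae (Eventually.of_forall fun ξ => ?_)
    dsimp only
    linear_combination (-(dataSymb h t ξ * solSymb a lam α γ δ x 0 ξ)) *
      rateX_equation a lam α γ (symb δ ξ)
  · exact i₁.sub i₂

/-- The lumped solution vanishes as time tends to zero. -/
theorem tendsto_lumped_nhds_zero
    {a lam α δ : ℝ} (ha : 0 < a) (hlam : 0 < lam) (hα : 0 < α) (hδ₀ : 0 < δ) (hδ₁ : δ < 1)
    {γ : ℝ} {h : ℝ → ℝ} (hc : Continuous h) {B : ℝ} (hB : ∀ r, |h r| ≤ B) (hneg : ∀ r ≤ 0, h r = 0)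
    {x z : ℝ} (hx : 0 < x) (hz : 0 ≤ z) :
    Tendsto (lumped a lam α γ δ h x z) (nhds 0) (nhds 0) := by
  have hH := polyGrowth_dataSymb hc hB zero_le_one
  have h1 := (hasDerivAt_integral_exp_vline (Φ := fun ξ => dataSymb h 1 ξ *
    solSymb a lam α γ δ x z ξ) (hH.1.mul (measurable_solSymb a lam α γ δ x z)).aestronglyMeasurable
    (by simpa only [mul_assoc, norm_mul] using ((polyGrowth_vline.mul hH).integrable_mul_solSymb
      ha hlam hα hδ₀ hδ₁ γ hx hz).norm) zero_lt_one).continuousAt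
  have h2 : ∀ s ≤ (1 : ℝ), _ := fun s hs =>
    lumped_eq_integral_dataSymb (s := s) ha hlam hα hδ₀ hδ₁ γ hc hB hneg zero_le_one hs hx hz
  have h3 : Tendsto (fun s => (lumped a lam α γ δ h x z s : ℂ)) (nhds 0) (nhds 0) := by
    have h4 := h1.tendsto
    rw [← h2 0 zero_le_one, lumped_eq_zero a lam α γ δ hneg x z le_rfl, Complex.ofReal_zero] at h4
    refine h4.congr' ?_
    filter_upwards [Iio_mem_nhds zero_lt_one] with s hs using (h2 s (le_of_lt hs)).symm
  exact_mod_cast (Complex.continuous_re.tendsto _).comp h3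

theorem subord_eq_integral_scaling {δ τ : ℝ} (hδ₀ : 0 < δ) (hτ : 0 < τ) (h : ℝ → ℝ) (t : ℝ) :
    subord δ h τ t = ∫ v, h (t - τ ^ (1 / δ) * v) * stableKernel δ 1 v := by
  have hc : 0 < τ ^ (-(1 / δ)) := by positivity
  have h1 : ∀ v, τ ^ (1 / δ) * (τ ^ (-(1 / δ)) * v) = v := fun v => by
    rw [← mul_assoc, ← rpow_add hτ]; simp
  have h2 := Measure.integral_comp_mul_left
    (fun v => h (t - τ ^ (1 / δ) * v) * stableKernel δ 1 v) (τ ^ (-(1 / δ)))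
  simp only [h1, abs_of_pos (inv_pos.2 hc), smul_eq_mul] at h2
  rw [subord, ← integral_sub_left_eq_self _ _ t]
  simp only [sub_sub_cancel, stableKernel_scaling hδ₀ hτ, mul_left_comm (h _)]
  rw [integral_const_mul, h2, mul_inv_cancel_left₀ hc.ne']

theorem tendsto_subord {δ : ℝ} (hδ₀ : 0 < δ) (hδ₁ : δ < 1) {h : ℝ → ℝ} (hc : Continuous h) {B : ℝ}
    (hB : ∀ r, |h r| ≤ B) (t : ℝ) :
    Tendsto (fun τ => subord δ h τ t) (nhdsWithin 0 (Ioi 0)) (nhds (h t)) := by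
  have h1 : Tendsto (fun τ : ℝ => ∫ v, h (t - τ ^ (1 / δ) * v) * stableKernel δ 1 v)
      (nhdsWithin 0 (Ioi 0)) (nhds (∫ v, h t * stableKernel δ 1 v)) := by
    refine tendsto_integral_filter_of_dominated_convergence (fun v => B * |stableKernel δ 1 v|)
      (Eventually.of_forall fun τ => ?_) (Eventually.of_forall fun τ => ?_)
      ((integrable_stableKernel hδ₀ hδ₁ one_pos).abs.const_mul B) (Eventually.of_forall fun v => ?_)
    · exact ((by fun_prop : Continuous fun v => h (t - τ ^ (1 / δ) * v)).mul
        (continuous_stableKernel hδ₀ hδ₁ one_pos)).aestronglyMeasurable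
    · refine Eventually.of_forall fun v => ?_
      rw [norm_mul]
      exact mul_le_mul_of_nonneg_right (hB _) (norm_nonneg _)
    · refine Tendsto.mul_const _ (tendsto_nhdsWithin_of_tendsto_nhds ?_)
      have h2 : Continuous fun τ : ℝ => h (t - τ ^ (1 / δ) * v) :=
        hc.comp (continuous_const.sub ((continuous_rpow_const (by positivity)).mul continuous_const))
      simpa [zero_rpow (inv_ne_zero hδ₀.ne')] using h2.tendsto 0
  rw [integral_const_mul, integral_stableKernel hδ₀ hδ₁ one_pos, mul_one] at h1
  refine h1.congr' ?_
  filter_upwards [self_mem_nhdsWithin] with τ hτ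
  exact (subord_eq_integral_scaling hδ₀ hτ h t).symm

theorem exists_abs_subord_sub_le {δ : ℝ} (hδ₀ : 0 < δ) (hδ₁ : δ < 1) {h : ℝ → ℝ}
    (hc : Continuous h) {B : ℝ} (hB : ∀ r, |h r| ≤ B) (t : ℝ) {ε : ℝ} (hε : 0 < ε) :
    ∃ C, ∀ τ, 0 < τ → |subord δ h τ t - h t| ≤ ε + C * (1 - exp (-τ)) := by
  have h1 := Metric.tendsto_nhdsWithin_nhds.1 (tendsto_subord hδ₀ hδ₁ hc hB t) ε hε
  obtain ⟨η, hη, h2⟩ := h1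
  have hB0 : 0 ≤ B := (abs_nonneg _).trans (hB 0)
  have hm := stableMass_nonneg δ
  have hden : 0 < 1 - exp (-η) := by
    rw [sub_pos, exp_lt_one_iff]; linarith
  refine ⟨(B * stableMass δ + B) / (1 - exp (-η)), fun τ hτ => ?_⟩
  have hτ' : 0 ≤ 1 - exp (-τ) := by
    rw [sub_nonneg, exp_le_one_iff]; linarith
  rcases lt_or_ge τ η with hlt | hge
  · have := h2 (x := τ) hτ (by rwa [dist_zero_right, norm_eq_abs, abs_of_pos hτ])
    rw [dist_eq] at this
    have : 0 ≤ (B * stableMass δ + B) / (1 - exp (-η)) * (1 - exp (-τ)) := by positivity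
    linarith
  · have h3 : |subord δ h τ t - h t| ≤ B * stableMass δ + B :=
      (abs_sub _ _).trans (add_le_add (abs_subord_le hδ₀ hδ₁ hτ hc.measurable hB t) (hB t))
    have h4 : 1 - exp (-η) ≤ 1 - exp (-τ) := by
      have := exp_le_exp.2 (neg_le_neg hge); linarith
    have h5 : B * stableMass δ + B ≤
        (B * stableMass δ + B) / (1 - exp (-η)) * (1 - exp (-τ)) := by
      rw [div_mul_eq_mul_div, le_div_iff₀ hden]
      exact mul_le_mul_of_nonneg_left h4 (by positivity)
    linarith

theorem abs_integral_mul_sub_le {w f : ℝ → ℝ} {c M p q R : ℝ} (hw : IntegrableOn w (Ioi 0))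
    (hw₁ : ∫ s in Ioi 0, w s = 1) (hw₀ : ∀ s, 0 < s → 0 ≤ w s)
    (hf : AEStronglyMeasurable f (volume.restrict (Ioi 0))) (hM : ∀ s, 0 < s → |f s| ≤ M)
    (hR : 0 ≤ R) (h : ∀ s, 0 < s → |f s - c| ≤ p - q * exp (-s * R)) :
    |(∫ s in Ioi 0, w s * f s) - c| ≤ p - q * ∫ s in Ioi 0, w s * exp (-s * R) := by
  have hmem := ae_restrict_mem (μ := volume) (measurableSet_Ioi (a := (0 : ℝ)))
  have i₁ : IntegrableOn (fun s => w s * f s) (Ioi 0) :=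
    Integrable.mul_bdd (c := M) hw hf (hmem.mono fun s hs => hM s hs)
  have i₂ : IntegrableOn (fun s => w s * exp (-s * R)) (Ioi 0) := by
    refine Integrable.mul_bdd (c := 1) hw
      (by fun_prop : Continuous fun s => exp (-s * R)).aestronglyMeasurable
      (hmem.mono fun s hs => ?_)
    rw [mem_Ioi] at hs
    rw [norm_eq_abs, abs_exp, exp_le_one_iff]
    nlinarith
  have e₁ : (∫ s in Ioi 0, w s * f s) - c = ∫ s in Ioi 0, w s * (f s - c) := by
    simp only [mul_sub]
    rw [integral_sub i₁ (hw.mul_const c), integral_mul_const, hw₁, one_mul]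
  have e₂ : p - q * ∫ s in Ioi 0, w s * exp (-s * R) =
      ∫ s in Ioi 0, w s * (p - q * exp (-s * R)) := by
    simp only [mul_sub, mul_left_comm _ q]
    rw [integral_sub (hw.mul_const p) (i₂.const_mul q), integral_mul_const, hw₁, one_mul,
      integral_const_mul]
  rw [e₁, e₂, ← norm_eq_abs]
  refine norm_integral_le_of_norm_le ?_ (hmem.mono fun s hs => ?_)
  · simp only [mul_sub, mul_left_comm _ q]
    exact (hw.mul_const p).sub (i₂.const_mul q)
  · rw [norm_mul, norm_eq_abs, norm_eq_abs, abs_of_nonneg (hw₀ s hs)]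
    exact mul_le_mul_of_nonneg_left (h s hs) (hw₀ s hs)

theorem abs_lumped_sub_le
    {a lam α δ : ℝ} (ha : 0 < a) (hlam : 0 < lam) (hα : 0 < α) (hδ₀ : 0 < δ) (hδ₁ : δ < 1)
    {γ : ℝ} {h : ℝ → ℝ} (hc : Continuous h) {B : ℝ} (hB : ∀ r, |h r| ≤ B)
    (hγ : 0 < γ) {t ε C k : ℝ}
    (hk : k = √(lam ^ 2 / (4 * a ^ 2) + 1) / a - lam / (2 * a ^ 2)) (hk₀ : 0 ≤ k)
    (hS : ∀ τ, 0 < τ → |subord δ h τ t - h t| ≤ ε + C * (1 - exp (-τ))) {x z : ℝ} (hx : 0 < x)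
    (hz : 0 < z) :
    |lumped a lam α γ δ h x z t - h t| ≤
      ε + C - C * exp (-k * z) * exp ((γ - √(γ ^ 2 + (1 + α * k))) * x) := by
  have hM := fun τ (hτ : 0 < τ) y =>
    abs_integral_weightZ_mul_subord_le ha hlam hδ₀ hδ₁ hτ hc.measurable hB t y
  have hR : 0 ≤ 1 + α * k := by positivity
  rw [← integral_weightX_mul_exp hx hR]
  refine abs_integral_mul_sub_le (integrableOn_weightX γ hx) (integral_weightX hγ hx)
    (fun τ hτ => weightX_nonneg γ hx.le hτ.le)
    (aestronglyMeasurable_integral_weightZ_mul_subord a lam α z t hδ₀ hδ₁ hc.measurable)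
    (fun τ hτ => hM τ hτ _) hR fun τ hτ => ?_
  have hy : 0 < z + α * τ := by positivity
  have e : C * exp (-k * z) * exp (-τ * (1 + α * k)) = C * exp (-τ) *
      ∫ w in Ioi (0 : ℝ), weightZ a lam (z + α * τ) w * exp (-w * 1) := by
    rw [integral_weightZ_mul_exp ha hy zero_le_one, ← hk, mul_assoc, mul_assoc C, ← exp_add,
      ← exp_add]
    ring_nf
  rw [e]
  refine abs_integral_mul_sub_le (integrableOn_weightZ lam ha hy) (integral_weightZ ha hlam hy)
    (fun w hw => weightZ_nonneg a lam ha hy.le hw.le) (M := B * stableMass δ) ?_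
    (fun w hw => abs_subord_le hδ₀ hδ₁ (add_pos hτ hw) hc.measurable hB t) zero_le_one
    fun w hw => ?_
  · have h1 := ((measurable_subord hδ₀ hδ₁ hc.measurable).measurable.comp
      (by fun_prop : Measurable fun w : ℝ => (τ + w, t))).aestronglyMeasurable
      (μ := volume.restrict (Ioi 0))
    refine h1.congr ((ae_restrict_mem measurableSet_Ioi).mono fun w hw => ?_)
    simp [add_pos hτ (mem_Ioi.1 hw)]
  · refine (hS _ (add_pos hτ hw)).trans_eq ?_
    rw [mul_assoc, ← exp_add]
    ring_nf

/-- The lumped solution attains the boundary data at the corner of the quadrant. -/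
theorem tendsto_lumped_nhdsWithin
    {a lam α δ : ℝ} (ha : 0 < a) (hlam : 0 < lam) (hα : 0 < α) (hδ₀ : 0 < δ) (hδ₁ : δ < 1)
    {γ : ℝ} {h : ℝ → ℝ} (hc : Continuous h) {B : ℝ} (hB : ∀ r, |h r| ≤ B)
    (hγ : 0 < γ) (t : ℝ) :
    Tendsto (fun w : ℝ × ℝ => lumped a lam α γ δ h w.1 w.2 t)
      (nhdsWithin (0, 0) (Ioi (0 : ℝ) ×ˢ Ioi (0 : ℝ))) (nhds (h t)) := by
  obtain ⟨k, hk⟩ : ∃ k, k = √(lam ^ 2 / (4 * a ^ 2) + 1) / a - lam / (2 * a ^ 2) := ⟨_, rfl⟩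
  have hk₀ : 0 ≤ k := by
    rw [hk, ← sqrt_div_eq ha hlam, sub_nonneg]
    gcongr
    linarith
  rw [Metric.tendsto_nhds]
  intro ε hε
  obtain ⟨C, hS⟩ := exists_abs_subord_sub_le hδ₀ hδ₁ hc hB t (half_pos hε)
  have h1 : Continuous fun w : ℝ × ℝ => ε / 2 + C - C * exp (-k * w.2) *
      exp ((γ - √(γ ^ 2 + (1 + α * k))) * w.1) := by fun_prop
  have h2 : ∀ᶠ w : ℝ × ℝ in nhdsWithin (0, 0) (Ioi (0 : ℝ) ×ˢ Ioi (0 : ℝ)),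
      ε / 2 + C - C * exp (-k * w.2) * exp ((γ - √(γ ^ 2 + (1 + α * k))) * w.1) < ε := by
    refine eventually_nhdsWithin_of_eventually_nhds
      ((h1.tendsto (0, 0)).eventually_lt_const ?_)
    simp [hε]
  filter_upwards [h2, self_mem_nhdsWithin] with w hw hmem
  rw [dist_eq]
  exact (abs_lumped_sub_le ha hlam hα hδ₀ hδ₁ hc hB hγ hk hk₀ hS hmem.1 hmem.2).trans_lt hw

/-- The lumped solution vanishes at spatial infinity. -/
theorem tendsto_lumped_comap_atTop
    {a lam α δ : ℝ} (ha : 0 < a) (hlam : 0 < lam) (hα : 0 < α) (hδ₀ : 0 < δ) (hδ₁ : δ < 1)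
    {γ : ℝ} {h : ℝ → ℝ} (hc : Continuous h) {B : ℝ} (hB : ∀ r, |h r| ≤ B)
    (hneg : ∀ r ≤ 0, h r = 0) {t : ℝ} (ht : 0 ≤ t) :
    Tendsto (fun w : ℝ × ℝ => lumped a lam α γ δ h w.1 w.2 t)
      ((comap (fun w : ℝ × ℝ => w.1 ^ 2 + w.2 ^ 2) atTop) ⊓
        𝓟 (Ioi (0 : ℝ) ×ˢ Ioi (0 : ℝ))) (nhds 0) := by
  have hH := polyGrowth_dataSymb hc hB ht
  set l := (comap (fun w : ℝ × ℝ => w.1 ^ 2 + w.2 ^ 2) atTop) ⊓ 𝓟 (Ioi (0 : ℝ) ×ˢ Ioi (0 : ℝ))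
  have hl : Tendsto (fun w : ℝ × ℝ => w.1 ^ 2 + w.2 ^ 2) l atTop :=
    tendsto_comap.mono_left inf_le_left
  have hpos : ∀ᶠ w : ℝ × ℝ in l, 0 < w.1 ∧ 0 < w.2 :=
    (eventually_principal.2 fun w hw => hw).filter_mono inf_le_right
  have hnorm : ∀ (w : ℝ × ℝ) ξ, ‖solSymb a lam α γ δ w.1 w.2 ξ‖ =
      exp ((γ - (rateX a lam α γ (symb δ ξ)).re) * w.1 - (rateZ a lam (symb δ ξ)).re * w.2) := by
    intro w ξ
    rw [solSymb, Complex.norm_exp, Complex.sub_re, Complex.re_mul_ofReal, Complex.re_mul_ofReal,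
      Complex.sub_re, Complex.ofReal_re]
  have hq := fun ξ => symb_re_pos hδ₀ hδ₁ ξ
  have hX := fun ξ => lt_rateX_re (γ := γ) ha hlam hα (hq ξ)
  have hZ := fun ξ => rateZ_re_pos ha hlam (hq ξ)
  have key : Tendsto (fun w : ℝ × ℝ => ∫ ξ, dataSymb h t ξ * solSymb a lam α γ δ w.1 w.2 ξ) l
      (nhds (∫ _ : ℝ, (0 : ℂ))) := by
    refine tendsto_integral_filter_of_dominated_convergence
      (fun ξ => ‖dataSymb h t ξ‖ * exp ((γ - √(γ ^ 2 + (symb δ ξ).re)) * 1) +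
        ‖dataSymb h t ξ‖ * exp ((lam / (2 * a) - √((lam / (2 * a)) ^ 2 + (symb δ ξ).re)) * a⁻¹))
      (Eventually.of_forall fun w =>
        (hH.1.mul (measurable_solSymb a lam α γ δ w.1 w.2)).aestronglyMeasurable) ?_
      ((hH.integrable_norm_mul_exp hδ₀ hδ₁ γ one_pos).add
        (hH.integrable_norm_mul_exp hδ₀ hδ₁ _ (inv_pos.2 ha))) (Eventually.of_forall fun ξ => ?_)
    · filter_upwards [hpos, hl.eventually_ge_atTop 2] with w hw h2
      refine Eventually.of_forall fun ξ => ?_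
      rw [norm_mul, ← mul_add, hnorm]
      refine mul_le_mul_of_nonneg_left ?_ (norm_nonneg _)
      have hX' := sqrt_le_rateX_re γ ha hlam hα (hq ξ).le
      have hZ' := sqrt_add_div_sub_le_rateZ_re (lam := lam) ha (hq ξ).le
      have h3 := hX ξ
      have h4 := hZ ξ
      rcases le_or_gt 1 w.1 with h1 | h1
      · refine le_add_of_le_of_nonneg (exp_le_exp.2 ?_) (exp_pos _).le
        nlinarith [mul_pos h4 hw.2]
      · have h5 : 1 ≤ w.2 := by nlinarith [hw.1, hw.2]
        refine le_add_of_nonneg_of_le (exp_pos _).le (exp_le_exp.2 ?_)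
        have h6 : (lam / (2 * a) - √((lam / (2 * a)) ^ 2 + (symb δ ξ).re)) * a⁻¹ =
            -(√(lam ^ 2 / (4 * a ^ 2) + (symb δ ξ).re) / a - lam / (2 * a ^ 2)) := by
          rw [div_pow, mul_pow]
          norm_num
          field_simp
        rw [h6]
        nlinarith [mul_pos (sub_pos.2 h3) hw.1]
    · obtain ⟨c, hc₀, hcX, hcZ⟩ : ∃ c > 0, c ≤ (rateX a lam α γ (symb δ ξ)).re - γ ∧
          c ≤ (rateZ a lam (symb δ ξ)).re :=
        ⟨_, lt_min (sub_pos.2 (hX ξ)) (hZ ξ), min_le_left _ _, min_le_right _ _⟩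
      have h1 : Tendsto (fun w : ℝ × ℝ => ‖dataSymb h t ξ‖ * exp (-(c * √(w.1 ^ 2 + w.2 ^ 2)))) l
          (nhds (‖dataSymb h t ξ‖ * 0)) :=
        ((tendsto_exp_neg_atTop_nhds_zero.comp
          ((tendsto_sqrt_atTop.comp hl).const_mul_atTop hc₀))).const_mul _
      rw [mul_zero] at h1
      refine squeeze_zero_norm' ?_ h1
      filter_upwards [hpos] with w hw
      rw [norm_mul, hnorm]
      refine mul_le_mul_of_nonneg_left (exp_le_exp.2 ?_) (norm_nonneg _)
      have h2 : √(w.1 ^ 2 + w.2 ^ 2) ≤ w.1 + w.2 := by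
        refine sqrt_le_iff.2 ⟨by linarith [hw.1, hw.2], by nlinarith [mul_pos hw.1 hw.2]⟩
      nlinarith [mul_le_mul_of_nonneg_left h2 hc₀.le, mul_le_mul_of_nonneg_right hcX hw.1.le,
        mul_le_mul_of_nonneg_right hcZ hw.2.le]
  rw [integral_zero] at key
  have h5 : Tendsto (fun w : ℝ × ℝ => (lumped a lam α γ δ h w.1 w.2 t : ℂ)) l (nhds 0) := by
    refine key.congr' ?_
    filter_upwards [hpos] with w hw
    exact (lumped_eq_integral_solSymb ha hlam hα hδ₀ hδ₁ hc hB hneg hw.1 hw.2.le ht).symm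
  exact_mod_cast (Complex.continuous_re.tendsto _).comp h5

theorem iteratedDeriv_two_const_mul (A : ℝ) (f : ℝ → ℝ) (x : ℝ) :
    iteratedDeriv 2 (fun y => A * f y) x = A * deriv (deriv f) x := by
  rw [iteratedDeriv_succ, iteratedDeriv_one, ← deriv_const_mul_field]
  congr 1
  funext y
  exact deriv_const_mul_field A

theorem caputo_congr_mul {u v : ℝ → ℝ} {A t : ℝ} (δ : ℝ) (ht : 0 ≤ t)
    (huv : ∀ s, 0 ≤ s → u s = A * v s) : caputo δ u t = A * caputo δ v t := by
  have h1 : ∫ s in (0 : ℝ)..t, deriv u s * (t - s) ^ (-δ) =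
      ∫ s in (0 : ℝ)..t, A * (deriv v s * (t - s) ^ (-δ)) := by
    rw [intervalIntegral.integral_of_le ht, intervalIntegral.integral_of_le ht]
    refine setIntegral_congr_fun measurableSet_Ioc fun s hs => ?_
    have h2 : u =ᶠ[nhds s] fun s => A * v s := by
      filter_upwards [Ioi_mem_nhds hs.1] with r hr using huv r (le_of_lt hr)
    rw [h2.deriv_eq, deriv_const_mul_field, mul_assoc]
  rw [caputo, caputo, h1, intervalIntegral.integral_const_mul, mul_left_comm]

/-- Theorem 1: the fractional incomplete lumped formulation in the linear case.
The function `u(x,z,t) = (A e^{γx}/(2√π)) ∫_0^∞ x τ^{−3/2} e^{−x²/(4τ)−γ²τ}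
e^{λ(z+ατ)/(2a²)} g₁(t,τ,z) dτ`, with `g₁ = f₁ ⋆ h ⋆ f₂` a double Laplace
convolution, solves the boundary value problem (1.5)–(1.7). -/
theorem fractional_incomplete_lumped_linear
    (a lam α γ A β : ℝ) (ha : 0 < a) (hlam : 0 < lam) (hα : 0 < α) (hγ : 0 < γ)
    (hA : 0 < A) (hβ₁ : 0 < β) (hβ₂ : β < 1 / 2)
    (h : ℝ → ℝ) (hcont : ContinuousOn h (Ici 0))
    (hbdd : ∃ Cb : ℝ, ∀ t : ℝ, 0 ≤ t → |h t| ≤ Cb) (h0 : h 0 = 0)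
    (f₁ : ℝ → ℝ → ℝ)
    (hf₁ : ∀ τ s : ℝ, f₁ τ s =
      (2 * β * τ / s ^ (2 * β + 1)) * Mwr (τ / s ^ (2 * β)) (2 * β))
    (f₂ : ℝ → ℝ → ℝ → ℝ)
    (hf₂ : ∀ τ z s : ℝ, f₂ τ z s =
      (β * (z + α * τ) / (a * Real.sqrt π * s ^ (2 * β + 1))) *
        ∫ w in Ioi (0 : ℝ), w ^ (-(1 / 2 : ℝ)) *
          Real.exp (-(z + α * τ) ^ 2 / (4 * a ^ 2 * w) - lam ^ 2 * w / (4 * a ^ 2)) *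
          Mwr (w / s ^ (2 * β)) (2 * β))
    (g₁ : ℝ → ℝ → ℝ → ℝ)
    (hg₁ : ∀ t τ z : ℝ, g₁ t τ z = lconv (lconv (f₁ τ) h) (f₂ τ z) t)
    (u : ℝ → ℝ → ℝ → ℝ)
    (hu : ∀ x z t : ℝ, u x z t =
      (A * Real.exp (γ * x) / (2 * Real.sqrt π)) *
        ∫ τ in Ioi (0 : ℝ), x * τ ^ (-(3 / 2 : ℝ)) *
          Real.exp (-x ^ 2 / (4 * τ) - γ ^ 2 * τ) *
          Real.exp (lam * (z + α * τ) / (2 * a ^ 2)) * g₁ t τ z) :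
    -- (i) the fractional heat equation for `x, z, t > 0`
    (∀ x z t : ℝ, 0 < x → 0 < z → 0 < t →
      caputo (2 * β) (fun t' => u x z t') t =
        a ^ 2 * iteratedDeriv 2 (fun z' => u x z' t) z -
          lam * deriv (fun z' => u x z' t) z) ∧
    -- (ii) the boundary condition at `z = 0`
    (∀ x t : ℝ, 0 < x → 0 < t →
      caputo (2 * β) (fun t' => u x 0 t') t =
        iteratedDeriv 2 (fun x' => u x' 0 t) x -
          2 * γ * deriv (fun x' => u x' 0 t) x +
          α * deriv (fun z' => u x z' t) 0) ∧
    -- (iii) `u → A h(t)` as `(x,z) → (0,0)`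
    (∀ t : ℝ, 0 < t →
      Tendsto (fun w : ℝ × ℝ => u w.1 w.2 t)
        (nhdsWithin (0, 0) (Ioi (0 : ℝ) ×ˢ Ioi (0 : ℝ))) (nhds (A * h t))) ∧
    -- (iv) `u → 0` as `x² + z² → ∞`
    (∀ t : ℝ, 0 < t →
      Tendsto (fun w : ℝ × ℝ => u w.1 w.2 t)
        ((comap (fun w : ℝ × ℝ => w.1 ^ 2 + w.2 ^ 2) atTop) ⊓
          𝓟 (Ioi (0 : ℝ) ×ˢ Ioi (0 : ℝ))) (nhds 0)) ∧
    -- (v) `u → 0` as `t → 0⁺`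
    (∀ x z : ℝ, 0 < x → 0 < z →
      Tendsto (fun t => u x z t) (nhdsWithin 0 (Ioi 0)) (nhds 0)) := by
  obtain ⟨B, hB⟩ := hbdd
  have hδ₀ : 0 < 2 * β := by positivity
  have hδ₁ : 2 * β < 1 := by linarith
  set hb : ℝ → ℝ := fun r => h (max r 0) with hhb
  have hc : Continuous hb :=
    hcont.comp_continuous (continuous_id.max continuous_const) fun r => le_max_right r 0
  have hbB : ∀ r, |hb r| ≤ B := fun r => hB _ (le_max_right r 0)
  have hneg : ∀ r ≤ 0, hb r = 0 := fun r hr => by rw [hhb]; simp [max_eq_right hr, h0]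
  have hpos : ∀ r, 0 < r → h r = hb r := fun r hr => by rw [hhb]; simp [max_eq_left hr.le]
  have hul : ∀ x z t : ℝ, 0 ≤ t → u x z t = A * lumped a lam α γ (2 * β) hb x z t := by
    intro x z t ht
    simp only [hu, hg₁]
    exact mul_integral_eq_lumped A ha hβ₁ hβ₂ hc.measurable hbB hneg hpos hf₁ hf₂ ht x z
  refine ⟨fun x z t hx hz ht => ?_, fun x t hx ht => ?_, fun t ht => ?_, fun t ht => ?_,
    fun x z hx hz => ?_⟩
  · rw [caputo_congr_mul _ ht.le fun s hs => hul x z s hs,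
      caputo_lumped_eq ha hlam hα hδ₀ hδ₁ hc hbB hneg hx hz ht]
    simp only [hul _ _ t ht.le, iteratedDeriv_two_const_mul, deriv_const_mul_field]
    ring
  · rw [caputo_congr_mul _ ht.le fun s hs => hul x 0 s hs,
      caputo_lumped_zero_eq ha hlam hα hδ₀ hδ₁ hc hbB hneg hx ht]
    simp only [hul _ _ t ht.le, iteratedDeriv_two_const_mul, deriv_const_mul_field]
    ring
  · simp only [hul _ _ t ht.le, hpos t ht]
    exact (tendsto_lumped_nhdsWithin ha hlam hα hδ₀ hδ₁ hc hbB hγ t).const_mul A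
  · simp only [hul _ _ t ht.le]
    simpa using
      (tendsto_lumped_comap_atTop ha hlam hα hδ₀ hδ₁ hc hbB (γ := γ) hneg ht.le).const_mul A
  · have h1 := ((tendsto_lumped_nhds_zero ha hlam hα hδ₀ hδ₁ hc hbB (γ := γ) hneg hx
      hz.le).const_mul A).mono_left (nhdsWithin_le_nhds (s := Ioi 0))
    rw [mul_zero] at h1
    refine h1.congr' ?_
    filter_upwards [self_mem_nhdsWithin] with s hs using (hul x z s (le_of_lt hs)).symm
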